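/- arXiv:1812.10269 — 2 statements merged into one kernel-verified Lean document; each statement's English description precedes it below -/
import Mathlib

section
/- Fix positive integers b, d, and k with D = 2^{k/d} ≥ 2^b, and fix any choice of the subspaces 𝕍_1,…,𝕍_k defining 𝕐_k. For each Boolean function G : {0,1}^b → {0,1} and each y ∈ 𝕐_k, define the range R_{y,G} = {x ∈ 𝕏 : Z_{x,G} ∩ S_y ≠ ∅}, and let R = {R_{y,G} : y ∈ 𝕐_k, G : {0,1}^b → {0,1}}. Then there is a constant C = C(b,d) such that the range space (𝕏, R) has VC dimension at most D^C. -/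
open MvPolynomial

/-- A finite set `A` is shattered by the range family `R`. -/
def Shatters {X : Type*} (R : Set (Set X)) (A : Finset X) : Prop :=
  ∀ B ⊆ A, ∃ r ∈ R, r ∩ ↑A = ↑B

/-- The range space `(X, R)` has VC dimension at most `v`. -/
def VCDimLE {X : Type*} (R : Set (Set X)) (v : ℝ) : Prop :=
  ∀ A : Finset X, Shatters R A → (A.card : ℝ) ≤ v


namespace Polynomial
open Filter Topology

lemma tendsto_eval_aux {Z : Type*} {l : Filter Z} {p : Z → ℂ[X]} {p0 : ℂ[X]} {Δ : ℕ}
    (hd : ∀ z, (p z).natDegree ≤ Δ) (hd0 : p0.natDegree ≤ Δ)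
    (hc : ∀ i, Tendsto (fun z => (p z).coeff i) l (𝓝 (p0.coeff i)))
    {x : Z → ℂ} {x0 : ℂ} (hx : Tendsto x l (𝓝 x0)) :
    Tendsto (fun z => (p z).eval (x z)) l (𝓝 (p0.eval x0)) := by
  have e : ∀ z, (p z).eval (x z) = ∑ i ∈ Finset.range (Δ+1), (p z).coeff i * x z ^ i :=
    fun z => eval_eq_sum_range' (Nat.lt_succ_of_le (hd z)) _
  rw [eval_eq_sum_range' (Nat.lt_succ_of_le hd0)]
  simp_rw [e]
  exact tendsto_finsetSum _ fun i _ => (hc i).mul (hx.pow i)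

lemma roots_limit {Z : Type*} (U : Ultrafilter Z) (p : Z → ℂ[X]) (z0 : Z) (δ : ℕ)
    (hd : ∀ z, (p z).natDegree = δ)
    (hc : ∀ i, Tendsto (fun z => (p z).coeff i) U (𝓝 ((p z0).coeff i)))
    (α : Z → Fin δ → ℂ) (hα : ∀ z, (p z).roots = Finset.univ.val.map (α z)) :
    ∃ β : Fin δ → ℂ, (∀ s, Tendsto (fun z => α z s) U (𝓝 (β s))) ∧
      (p z0).roots = Finset.univ.val.map β := by
  rcases Nat.eq_zero_or_pos δ with h0 | hpos
  · subst h0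
    exact ⟨α z0, fun s => s.elim0, hα z0⟩
  have hne : ∀ z, p z ≠ 0 := fun z h => by have := hd z; simp [h] at this; omega
  have hroot : ∀ z s, (p z).IsRoot (α z s) := fun z s => by
    have : α z s ∈ (p z).roots := by rw [hα]; simp
    exact (mem_roots'.1 this).2
  -- bound
  have hbound : ∃ K : ℝ, ∀ᶠ z in (U : Filter Z), ∀ s, ‖α z s‖ ≤ K := by
    have hlead : (p z0).coeff δ ≠ 0 := by
      rw [← hd z0]; exact leadingCoeff_ne_zero.2 (hne z0)
    let b : Z → ℝ := fun z => (∑ i ∈ Finset.range δ, ‖(p z).coeff i‖) / ‖(p z).coeff δ‖ + 1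
    have hb : Tendsto b U (𝓝 (b z0)) := by
      refine Tendsto.add_const _ (Tendsto.div ?_ (hc δ).norm (by simpa using hlead))
      exact tendsto_finsetSum _ fun i _ => (hc i).norm
    refine ⟨b z0 + 1, ?_⟩
    filter_upwards [hb.eventually (gt_mem_nhds (show b z0 < b z0 + 1 by linarith))] with z hz s
    have h1 := (hroot z s).norm_lt_cauchyBound (hne z)
    have h2 : ((cauchyBound (p z) : NNReal) : ℝ) ≤ b z := by
      simp only [cauchyBound, b, hd z, leadingCoeff]
      push_cast
      gcongr
      have : (Finset.range δ).sup (fun i => ‖(p z).coeff i‖₊) ≤ ∑ i ∈ Finset.range δ, ‖(p z).coeff i‖₊ :=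
        Finset.sup_le fun i hi => Finset.single_le_sum (f := fun i => ‖(p z).coeff i‖₊) (fun _ _ => zero_le) hi
      have := NNReal.coe_le_coe.2 this
      simpa using this
    have h1' : ‖α z s‖ < ((cauchyBound (p z) : NNReal) : ℝ) := h1
    linarith
  obtain ⟨K, hK⟩ := hbound
  have hlim : ∀ s, ∃ β : ℂ, Tendsto (fun z => α z s) U (𝓝 β) := by
    intro s
    have hcomp := isCompact_closedBall (0 : ℂ) K
    obtain ⟨β, -, hβ⟩ := hcomp.ultrafilter_le_nhds (U.map (fun z => α z s)) (by
      rw [le_principal_iff]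
      have : ∀ᶠ z in (U : Filter Z), α z s ∈ Metric.closedBall (0:ℂ) K := by
        filter_upwards [hK] with z hz
        simpa using hz s
      exact this)
    exact ⟨β, hβ⟩
  choose β hβ using hlim
  refine ⟨β, hβ, ?_⟩
  have hfac : ∀ z, p z = C ((p z).coeff δ) * ∏ s, (X - C (α z s)) := by
    intro z
    have := (IsAlgClosed.splits (p z)).eq_prod_roots
    rw [hα z, leadingCoeff, hd z] at this
    rw [Multiset.map_map] at this
    exact this
  have hfac0 : p z0 = C ((p z0).coeff δ) * ∏ s, (X - C (β s)) := by
    apply Polynomial.funext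
    intro t
    have l1 := tendsto_eval_aux (l := (U : Filter Z)) (p0 := p z0) (fun z => (hd z).le) (hd z0).le hc
      (tendsto_const_nhds (x := t))
    have l2 : Tendsto (fun z => (p z).eval t) U (𝓝 ((C ((p z0).coeff δ) * ∏ s, (X - C (β s))).eval t)) := by
      have : (fun z => (p z).eval t) = fun z => (p z).coeff δ * ∏ s, (t - α z s) := by
        ext z; conv_lhs => rw [hfac z]
        simp [eval_prod]
      rw [this]
      simp only [eval_mul, eval_C, eval_prod, eval_sub, eval_X]
      exact (hc δ).mul (tendsto_finsetProd _ fun s _ => tendsto_const_nhds.sub (hβ s))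
    exact tendsto_nhds_unique l1 l2
  have hlead : (p z0).coeff δ ≠ 0 := by
    rw [← hd z0]; exact leadingCoeff_ne_zero.2 (hne z0)
  rw [hfac0, roots_C_mul _ hlead]
  have : ∏ s, (X - C (β s)) = (Multiset.map (fun a => X - C a) (Finset.univ.val.map β)).prod := by
    rw [Multiset.map_map]; rfl
  rw [this, roots_multiset_prod_X_sub_C]
end Polynomial

namespace Polynomial
open Filter Topology ComplexConjugate

noncomputable def toC (p : ℝ[X]) : ℂ[X] := p.map Complex.ofRealHom

lemma toC_eval_real (p : ℝ[X]) (x : ℝ) : (toC p).eval (x : ℂ) = ((p.eval x : ℝ) : ℂ) := by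
  rw [toC, eval_map]
  exact (eval₂_at_apply Complex.ofRealHom x)

lemma toC_eval_conj (p : ℝ[X]) (x : ℂ) : (toC p).eval (conj x) = conj ((toC p).eval x) := by
  simp only [toC, eval_map, eval₂_eq_sum_range, map_sum, map_mul, map_pow]
  simp

lemma toC_natDegree (p : ℝ[X]) : (toC p).natDegree = p.natDegree := by
  simp [toC]

lemma toC_ne_zero {p : ℝ[X]} (h : p ≠ 0) : toC p ≠ 0 := by
  simpa [toC] using h

open Classical in
noncomputable def rts {J : Type*} [Fintype J] (p : J → ℝ[X]) : Finset ℝ :=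
  Finset.univ.biUnion fun j => (p j).roots.toFinset

lemma mem_rts {J : Type*} [Fintype J] (p : J → ℝ[X]) (x : ℝ) :
    x ∈ rts p ↔ ∃ j, p j ≠ 0 ∧ (p j).eval x = 0 := by
  simp [rts, IsRoot]

lemma det_step {J : Type*} [Fintype J] (p p0 : J → ℝ[X]) (Δ : ℕ) (δ : J → ℕ)
    (hd : ∀ j, (p j).natDegree = δ j) (hd0 : ∀ j, (p0 j).natDegree = δ j)
    (hΔ : ∀ j, δ j ≤ Δ) (ε : ℝ)
    (α β : ∀ j, Fin (δ j) → ℂ)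
    (hα : ∀ j, (toC (p j)).roots = Finset.univ.val.map (α j))
    (hβ : ∀ j, (toC (p0 j)).roots = Finset.univ.val.map (β j))
    (G1 : ∀ j s, ‖α j s - β j s‖ < ε)
    (G2 : ∀ j s j' l, l ≤ Δ → ((derivative^[l] (toC (p j'))).eval (α j s) = 0 ↔
      (derivative^[l] (toC (p0 j'))).eval (β j s) = 0))
    (G3 : ∀ j s j' s', β j s ≠ β j' s' → α j s ≠ α j' s')
    (G3' : ∀ j s j' s', β j s ≠ conj (β j' s') → α j s ≠ conj (α j' s')) :
    ∃ φ : ℝ → ℝ, rts p = (rts p0).image φ ∧ ∀ ρ ∈ rts p0, |φ ρ - ρ| < ε ∧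
      ∀ j, (p j).eval (φ ρ) = 0 ↔ (p0 j).eval ρ = 0 := by
  classical
  have ne : ∀ j (_ : Fin (δ j)), p j ≠ 0 := fun j s h => by
    have h1 := hd j; have h2 := s.2; rw [h, natDegree_zero] at h1; omega
  have ne0 : ∀ j (_ : Fin (δ j)), p0 j ≠ 0 := fun j s h => by
    have h1 := hd0 j; have h2 := s.2; rw [h, natDegree_zero] at h1; omega
  have ra : ∀ j (s : Fin (δ j)), (toC (p j)).eval (α j s) = 0 := fun j s => by
    have : α j s ∈ (toC (p j)).roots := by rw [hα]; simp
    exact (mem_roots'.1 this).2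
  have rb : ∀ j (s : Fin (δ j)), (toC (p0 j)).eval (β j s) = 0 := fun j s => by
    have : β j s ∈ (toC (p0 j)).roots := by rw [hβ]; simp
    exact (mem_roots'.1 this).2
  have exa : ∀ j x, p j ≠ 0 → (toC (p j)).eval x = 0 → ∃ s, α j s = x := fun j x h0 hx => by
    have : x ∈ (toC (p j)).roots := mem_roots'.2 ⟨toC_ne_zero h0, hx⟩
    rw [hα] at this; simpa using this
  have exb : ∀ j x, p0 j ≠ 0 → (toC (p0 j)).eval x = 0 → ∃ s, β j s = x := fun j x h0 hx => by
    have : x ∈ (toC (p0 j)).roots := mem_roots'.2 ⟨toC_ne_zero h0, hx⟩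
    rw [hβ] at this; simpa using this
  -- same polynomial: equal limits implies equal roots
  have same : ∀ j s s', β j s = β j s' → α j s = α j s' := by
    intro j s s' h
    set A := Finset.univ.filter fun r => α j r = α j s with hA
    set B := Finset.univ.filter fun r => β j r = β j s with hB
    have hAB : A ⊆ B := by
      intro r hr
      simp only [hA, hB, Finset.mem_filter, Finset.mem_univ, true_and] at hr ⊢
      by_contra hne
      exact G3 _ _ _ _ hne hr
    have cA : A.card = (toC (p j)).rootMultiplicity (α j s) := by
      rw [← count_roots, hα, Multiset.count_map]
      simp only [hA, eq_comm]; rfl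
    have cB : B.card = (toC (p0 j)).rootMultiplicity (β j s) := by
      rw [← count_roots, hβ, Multiset.count_map]
      simp only [hB, eq_comm]; rfl
    have hle : B.card ≤ A.card := by
      have hpos : 0 < B.card := Finset.card_pos.2 ⟨s, by simp [hB]⟩
      have hBΔ : B.card ≤ Δ := (Finset.card_le_univ _).trans (by simpa using hΔ j)
      have : B.card - 1 < A.card := by
        rw [cA, lt_rootMultiplicity_iff_isRoot_iterate_derivative (toC_ne_zero (ne j s))]
        intro m hm
        rw [IsRoot, G2 _ _ _ _ (by omega)]
        have h2 : B.card - 1 < (toC (p0 j)).rootMultiplicity (β j s) := by omega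
        rw [lt_rootMultiplicity_iff_isRoot_iterate_derivative (toC_ne_zero (ne0 j s))] at h2
        exact h2 m hm
      omega
    have := Finset.eq_of_subset_of_card_le hAB hle
    have hs' : s' ∈ A := by rw [this]; simp [hB, h]
    simpa [hA, eq_comm] using hs'
  have across : ∀ j s j' s', β j s = β j' s' → α j s = α j' s' := by
    intro j s j' s' h
    have h1 : (toC (p j')).eval (α j s) = 0 := by
      rw [← Function.iterate_zero_apply derivative (toC (p j')), G2 j s j' 0 (Nat.zero_le _)]
      simp only [Function.iterate_zero_apply]
      rw [h]; exact rb j' s'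
    obtain ⟨s'', hs''⟩ := exa j' _ (ne j' s') h1
    have h2 : β j' s'' = β j s := by
      by_contra hne
      exact G3 _ _ _ _ hne hs''
    rw [← hs'']
    exact same _ _ _ (h2.trans h)
  have real : ∀ j s, conj (β j s) = β j s → conj (α j s) = α j s := by
    intro j s h
    have h1 : (toC (p j)).eval (conj (α j s)) = 0 := by
      rw [toC_eval_conj, ra]; simp
    obtain ⟨s', hs'⟩ := exa j _ (ne j s) h1
    have h2 : β j s' = conj (β j s) := by
      by_contra hne
      exact G3' _ _ _ _ hne hs'
    rw [← hs']
    exact same _ _ _ (h2.trans h)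
  have real' : ∀ j s, conj (α j s) = α j s → conj (β j s) = β j s := by
    intro j s h
    by_contra hne
    exact G3' j s j s (fun h' => hne h'.symm) h.symm
  have pick : ∀ ρ : ℝ, ∃ y : ℝ, ρ ∈ rts p0 → ∃ j s, β j s = (ρ : ℂ) ∧ α j s = (y : ℂ) := by
    intro ρ
    by_cases hρ : ρ ∈ rts p0
    · obtain ⟨j, h0, hj⟩ := (mem_rts _ _).1 hρ
      obtain ⟨s, hs⟩ := exb j ρ h0 (by rw [toC_eval_real, hj]; simp)
      have := real j s (by rw [hs]; simp)
      obtain ⟨y, hy⟩ := Complex.conj_eq_iff_real.1 this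
      exact ⟨y, fun _ => ⟨j, s, hs, hy⟩⟩
    · exact ⟨0, fun h => absurd h hρ⟩
  choose φ hφ using pick
  refine ⟨φ, ?_, ?_⟩
  · ext x
    rw [Finset.mem_image]
    constructor
    · intro hx
      obtain ⟨j, h0, hj⟩ := (mem_rts _ _).1 hx
      obtain ⟨s, hs⟩ := exa j x h0 (by rw [toC_eval_real, hj]; simp)
      have := real' j s (by rw [hs]; simp)
      obtain ⟨y, hy⟩ := Complex.conj_eq_iff_real.1 this
      have hy0 : y ∈ rts p0 := (mem_rts _ _).2 ⟨j, ne0 j s, by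
        have := rb j s
        rw [hy, toC_eval_real] at this
        exact_mod_cast this⟩
      refine ⟨y, hy0, ?_⟩
      obtain ⟨j', s', h1, h2⟩ := hφ y hy0
      have := across j s j' s' (by rw [hy, h1])
      rw [hs, h2] at this
      exact_mod_cast this.symm
    · rintro ⟨ρ, hρ, rfl⟩
      obtain ⟨j, s, h1, h2⟩ := hφ ρ hρ
      refine (mem_rts _ _).2 ⟨j, ne j s, ?_⟩
      have := ra j s
      rw [h2, toC_eval_real] at this
      exact_mod_cast this
  · intro ρ hρ
    obtain ⟨j, s, h1, h2⟩ := hφ ρ hρ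
    constructor
    · have := G1 j s
      rw [h1, h2, ← Complex.ofReal_sub, Complex.norm_real] at this
      exact this
    · intro j'
      have := G2 j s j' 0 (Nat.zero_le _)
      simp only [Function.iterate_zero_apply] at this
      rw [h1, h2, toC_eval_real, toC_eval_real] at this
      exact_mod_cast this

open Classical in
noncomputable def cnt (p q : ℝ[X]) : ℕ :=
  (toC p).roots.countP fun a => (toC q).eval a = 0

lemma toC_iter (p : ℝ[X]) (l : ℕ) : toC (derivative^[l] p) = derivative^[l] (toC p) := by
  simp [toC, iterate_derivative_map]

lemma roots_local {Z : Type*} [TopologicalSpace Z] {J : Type*} [Fintype J] (P : J → Z → ℝ[X])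
    (Δ : ℕ) (hΔ : ∀ j z, (P j z).natDegree ≤ Δ)
    (hdeg : ∀ j z z', (P j z).natDegree = (P j z').natDegree)
    (hcont : ∀ j i, Continuous fun z => (P j z).coeff i)
    (hcnt : ∀ j j' l, l ≤ Δ → ∀ z z', cnt (P j z) (derivative^[l] (P j' z)) =
      cnt (P j z') (derivative^[l] (P j' z')))
    (z0 : Z) (ε : ℝ) (hε : 0 < ε) :
    ∀ᶠ z in 𝓝 z0, ∃ φ : ℝ → ℝ, rts (fun j => P j z) = (rts (fun j => P j z0)).image φ ∧
      ∀ ρ ∈ rts (fun j => P j z0), |φ ρ - ρ| < ε ∧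
      ∀ j, (P j z).eval (φ ρ) = 0 ↔ (P j z0).eval ρ = 0 := by
  classical
  rw [Filter.Eventually, mem_iff_ultrafilter]
  intro U hU
  let δ : J → ℕ := fun j => (P j z0).natDegree
  have hl : ∀ j z, ∃ α : Fin (δ j) → ℂ, (toC (P j z)).roots = Finset.univ.val.map α := by
    intro j z
    have hcard : (toC (P j z)).roots.card = δ j := by
      rw [← (IsAlgClosed.splits (toC (P j z))).natDegree_eq_card_roots, toC_natDegree]
      exact hdeg _ _ _
    generalize (toC (P j z)).roots = m at hcard
    induction m using Quot.inductionOn with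
    | _ l =>
      have hl : l.length = δ j := hcard
      rw [← hl]
      refine ⟨l.get, ?_⟩
      rw [Fin.univ_val_map, List.ofFn_get]; rfl
  choose α hα using hl
  have hcc : ∀ j i, Tendsto (fun z => (toC (P j z)).coeff i) U (𝓝 ((toC (P j z0)).coeff i)) := by
    intro j i
    simp only [toC, coeff_map]
    exact ((Complex.continuous_ofReal.comp (hcont j i)).tendsto z0).mono_left hU
  have hlim := fun j => roots_limit U (fun z => toC (P j z)) z0 (δ j)
    (fun z => by rw [toC_natDegree]; exact hdeg _ _ _) (hcc j) (α j) (hα j)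
  choose β hβt hβ using hlim
  have G1 : ∀ᶠ z in (U : Filter Z), ∀ j s, ‖α j z s - β j s‖ < ε := by
    simp only [eventually_all]
    intro j s
    have := (hβt j s).eventually (Metric.ball_mem_nhds _ hε)
    filter_upwards [this] with z hz
    simpa [dist_eq_norm] using hz
  have G3 : ∀ᶠ z in (U : Filter Z), ∀ j s j' s', β j s ≠ β j' s' → α j z s ≠ α j' z s' := by
    simp only [eventually_all]
    intro j s j' s' h
    exact (((hβt j s).sub (hβt j' s')).eventually_ne (sub_ne_zero.2 h)).mono
      fun z hz => sub_ne_zero.1 hz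
  have G3' : ∀ᶠ z in (U : Filter Z), ∀ j s j' s', β j s ≠ conj (β j' s') →
      α j z s ≠ conj (α j' z s') := by
    simp only [eventually_all]
    intro j s j' s' h
    exact (((hβt j s).sub ((Complex.continuous_conj.tendsto _).comp (hβt j' s'))).eventually_ne
      (sub_ne_zero.2 h)).mono fun z hz => sub_ne_zero.1 hz
  have G2 : ∀ᶠ z in (U : Filter Z), ∀ j j' (l : Fin (Δ+1)) s,
      ((derivative^[l] (toC (P j' z))).eval (α j z s) = 0 ↔
      (derivative^[l] (toC (P j' z0))).eval (β j s) = 0) := by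
    rw [eventually_all]; intro j
    rw [eventually_all]; intro j'
    rw [eventually_all]; intro l
    have ev : ∀ᶠ z in (U : Filter Z), ∀ s,
      (derivative^[l] (toC (P j' z0))).eval (β j s) ≠ 0 →
      (derivative^[l] (toC (P j' z))).eval (α j z s) ≠ 0 := by
      simp only [eventually_all]
      intro s hs
      have dd : ∀ z, (derivative^[l] (toC (P j' z))).natDegree ≤ Δ := fun z =>
        (natDegree_iterate_derivative _ _).trans (by
          rw [toC_natDegree]; exact (Nat.sub_le _ _).trans (hΔ _ _))
      refine (tendsto_eval_aux (l := (U : Filter Z)) (p0 := derivative^[l] (toC (P j' z0))) dd (dd z0)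
        ?_ (hβt j s)).eventually_ne hs
      intro i
      simp only [coeff_iterate_derivative]
      exact (hcc j' _).const_smul _
    filter_upwards [ev] with z hz
    set S := Finset.univ.filter fun s => (derivative^[l] (toC (P j' z))).eval (α j z s) = 0 with hS
    set T := Finset.univ.filter fun s => (derivative^[l] (toC (P j' z0))).eval (β j s) = 0 with hT
    have hST : S ⊆ T := by
      intro s hs
      simp only [hS, hT, Finset.mem_filter, Finset.mem_univ, true_and] at hs ⊢
      by_contra h
      exact hz s h hs
    have hc := hcnt j j' l (Nat.lt_succ_iff.1 l.2) z z0
    simp only [cnt, toC_iter] at hc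
    rw [hα j z, hβ j, Multiset.countP_map, Multiset.countP_map] at hc
    have hc' : S.card = T.card := hc
    have := Finset.eq_of_subset_of_card_le hST hc'.ge
    intro s
    have h2 : s ∈ S ↔ s ∈ T := by rw [this]
    simpa [hS, hT] using h2
  have : ∀ᶠ z in (U : Filter Z), ∃ φ : ℝ → ℝ, rts (fun j => P j z) = (rts (fun j => P j z0)).image φ ∧
      ∀ ρ ∈ rts (fun j => P j z0), |φ ρ - ρ| < ε ∧
      ∀ j, (P j z).eval (φ ρ) = 0 ↔ (P j z0).eval ρ = 0 := by
    filter_upwards [G1, G2, G3, G3'] with z h1 h2 h3 h3'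
    exact det_step (fun j => P j z) (fun j => P j z0) Δ δ (fun j => hdeg _ _ _) (fun j => rfl)
      (fun j => hΔ _ _) ε (fun j => α j z) β (fun j => hα j z) hβ h1
      (fun j s j' l hl => h2 j j' ⟨l, Nat.lt_succ_of_le hl⟩ s) h3 h3'
  exact this
end Polynomial

namespace Polynomial
open Filter Topology

lemma exists_gap (s : Finset ℝ) (η : ℝ) (hη : 0 < η) :
    ∃ ε > 0, ε ≤ η ∧ ∀ x ∈ s, ∀ y ∈ s, x < y → x + 2 * ε ≤ y := by
  have h : ∀ᶠ ε in 𝓝[>] (0:ℝ), ε ≤ η ∧ ∀ x ∈ s, ∀ y ∈ s, x < y → x + 2 * ε ≤ y := by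
    refine Filter.Eventually.and ?_ ?_
    · exact Filter.Eventually.filter_mono nhdsWithin_le_nhds (Iic_mem_nhds hη)
    · rw [Filter.eventually_all_finset]; intro x _
      rw [Filter.eventually_all_finset]; intro y _
      by_cases hxy : x < y
      · have : ∀ᶠ ε in 𝓝 (0:ℝ), ε < (y - x)/2 := gt_mem_nhds (by linarith)
        filter_upwards [Filter.Eventually.filter_mono nhdsWithin_le_nhds this] with ε hε _
        linarith
      · exact Filter.Eventually.of_forall fun _ h => absurd h hxy
  obtain ⟨ε, h1, h2⟩ := (h.and self_mem_nhdsWithin).exists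
  exact ⟨ε, h2, h1⟩

lemma delineate {Z : Type*} [TopologicalSpace Z] [PreconnectedSpace Z] [Nonempty Z]
    {J : Type*} [Fintype J] (P : J → Z → ℝ[X])
    (Δ : ℕ) (hΔ : ∀ j z, (P j z).natDegree ≤ Δ)
    (hdeg : ∀ j z z', (P j z).natDegree = (P j z').natDegree)
    (hcont : ∀ j i, Continuous fun z => (P j z).coeff i)
    (hcnt : ∀ j j' l, l ≤ Δ → ∀ z z', cnt (P j z) (derivative^[l] (P j' z)) =
      cnt (P j z') (derivative^[l] (P j' z'))) :
    ∃ (R : ℕ) (ρ : Fin R → Z → ℝ), R ≤ Fintype.card J * Δ ∧ (∀ r, Continuous (ρ r)) ∧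
      (∀ z, StrictMono fun r => ρ r z) ∧
      (∀ z x, x ∈ rts (fun j => P j z) ↔ ∃ r, ρ r z = x) ∧
      (∀ r j z z', (P j z).eval (ρ r z) = 0 ↔ (P j z').eval (ρ r z') = 0) := by
  classical
  let W : Z → Finset ℝ := fun z => rts (fun j => P j z)
  have loc : ∀ z0 η, 0 < η → ∀ᶠ z in 𝓝 z0, ∃ φ : ℝ → ℝ, W z = (W z0).image φ ∧
      StrictMonoOn φ (W z0) ∧ ∀ ρ ∈ W z0, |φ ρ - ρ| < η ∧
      ∀ j, (P j z).eval (φ ρ) = 0 ↔ (P j z0).eval ρ = 0 := by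
    intro z0 η hη
    obtain ⟨ε, he, heη, hgap⟩ := exists_gap (W z0) η hη
    filter_upwards [roots_local P Δ hΔ hdeg hcont hcnt z0 ε he] with z hz
    obtain ⟨φ, h1, h2⟩ := hz
    refine ⟨φ, h1, ?_, fun ρ hρ => ⟨(h2 ρ hρ).1.trans_le heη, (h2 ρ hρ).2⟩⟩
    intro x hx y hy hxy
    have a := (abs_lt.1 (h2 x hx).1).2
    have b := (abs_lt.1 (h2 y hy).1).1
    have := hgap x hx y hy hxy
    linarith
  have lc : IsLocallyConstant fun z => (W z).card := by
    rw [IsLocallyConstant.iff_eventually_eq]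
    intro z0
    filter_upwards [loc z0 1 one_pos] with z hz
    obtain ⟨φ, h1, h2, -⟩ := hz
    rw [h1, Finset.card_image_of_injOn h2.injOn]
  obtain ⟨zz⟩ := ‹Nonempty Z›
  let R := (W zz).card
  have hR : ∀ z, (W z).card = R := fun z => lc.apply_eq_of_preconnectedSpace z zz
  let ρ : Fin R → Z → ℝ := fun r z => (W z).orderEmbOfFin (hR z) r
  have loc2 : ∀ z0 η, 0 < η → ∀ᶠ z in 𝓝 z0, ∀ r, |ρ r z - ρ r z0| < η ∧
      ∀ j, (P j z).eval (ρ r z) = 0 ↔ (P j z0).eval (ρ r z0) = 0 := by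
    intro z0 η hη
    filter_upwards [loc z0 η hη] with z hz r
    obtain ⟨φ, h1, h2, h3⟩ := hz
    have mem : ∀ r, ρ r z0 ∈ W z0 := fun r => Finset.orderEmbOfFin_mem _ _ _
    have : (fun r => φ (ρ r z0)) = (W z).orderEmbOfFin (hR z) := by
      apply Finset.orderEmbOfFin_unique
      · intro r; rw [h1]; exact Finset.mem_image_of_mem _ (mem r)
      · intro r r' h
        exact h2 (mem r) (mem r') ((Finset.orderEmbOfFin _ _).strictMono h)
    have hr : φ (ρ r z0) = ρ r z := congrFun this r
    rw [← hr]
    exact h3 _ (mem r)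
  refine ⟨R, ρ, ?_, ?_, ?_, ?_, ?_⟩
  · change (W zz).card ≤ _
    refine Finset.card_biUnion_le_card_mul _ _ _ fun j _ => ?_
    exact (Multiset.toFinset_card_le _).trans ((card_roots' _).trans (hΔ _ _))
  · intro r
    rw [continuous_iff_continuousAt]
    intro z0
    rw [ContinuousAt, Metric.tendsto_nhds]
    intro η hη
    filter_upwards [loc2 z0 η hη] with z hz
    exact (hz r).1
  · intro z; exact (Finset.orderEmbOfFin _ _).strictMono
  · intro z x
    have := Finset.range_orderEmbOfFin (W z) (hR z)
    rw [Set.ext_iff] at this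
    exact (this x).symm
  · intro r j z z'
    have : IsLocallyConstant fun z => ((P j z).eval (ρ r z) = 0 : Prop) := by
      rw [IsLocallyConstant.iff_eventually_eq]
      intro z0
      filter_upwards [loc2 z0 1 one_pos] with z hz
      exact propext ((hz r).2 j)
    exact iff_of_eq (this.apply_eq_of_preconnectedSpace z z')

lemma exists_sample {Z : Type*} [TopologicalSpace Z] (R : ℕ) (ρ : Fin R → Z → ℝ)
    (hc : ∀ r, Continuous (ρ r)) (hm : ∀ z, StrictMono fun r => ρ r z) (i : Fin (R+1)) :
    ∃ m : Z → ℝ, Continuous m ∧ ∀ z (r : Fin R), ((r : ℕ) < i → ρ r z < m z) ∧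
      ((i : ℕ) ≤ r → m z < ρ r z) := by
  obtain ⟨i, hi⟩ := i
  have mono : ∀ z (r r' : Fin R), r.1 ≤ r'.1 → ρ r z ≤ ρ r' z := fun z r r' h => (hm z).monotone h
  by_cases h : i < R
  · by_cases h' : 0 < i
    · refine ⟨fun z => (ρ ⟨i-1, by omega⟩ z + ρ ⟨i, h⟩ z)/2, by fun_prop, fun z r => ?_⟩
      have a : ρ ⟨i-1, by omega⟩ z < ρ ⟨i, h⟩ z := hm z (by simp; omega)
      constructor
      · intro hr
        have := mono z r ⟨i-1, by omega⟩ (by simp at hr ⊢; omega)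
        simp only; linarith
      · intro hr
        have := mono z ⟨i, h⟩ r hr
        simp only; linarith
    · refine ⟨fun z => ρ ⟨i, h⟩ z - 1, by fun_prop, fun z r => ⟨fun hr => ?_, fun hr => ?_⟩⟩
      · simp at hr; omega
      · have := mono z ⟨i, h⟩ r hr
        simp only; linarith
  · by_cases h' : 0 < i
    · refine ⟨fun z => ρ ⟨i-1, by omega⟩ z + 1, by fun_prop, fun z r => ⟨fun hr => ?_, fun hr => ?_⟩⟩
      · have := mono z r ⟨i-1, by omega⟩ (by simp at hr ⊢; omega)
        simp only; linarith
      · have := r.2; simp at hr; omega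
    · refine ⟨fun z => 0, by fun_prop, fun z r => ?_⟩
      have := r.2; omega

lemma preconn_of_section {Z : Type*} [TopologicalSpace Z] [PreconnectedSpace Z]
    (S : Set (Z × ℝ)) (m : Z → ℝ) (hm : Continuous m) (hS : ∀ z, (z, m z) ∈ S)
    (ho : ∀ z, Set.OrdConnected {t | (z, t) ∈ S}) : IsPreconnected S := by
  rcases S.eq_empty_or_nonempty with rfl | ⟨⟨z0, t0⟩, -⟩
  · exact isPreconnected_empty
  refine isPreconnected_of_forall (z0, m z0) ?_
  rintro ⟨z, t⟩ hzt
  refine ⟨Set.range (fun z => (z, m z)) ∪ (fun t => (z, t)) '' {t | (z, t) ∈ S}, ?_, ?_, ?_, ?_⟩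
  · rintro _ (⟨z, rfl⟩ | ⟨t, ht, rfl⟩)
    · exact hS z
    · exact ht
  · exact Or.inl ⟨z0, rfl⟩
  · exact Or.inr ⟨t, hzt, rfl⟩
  · refine IsPreconnected.union (z, m z) ⟨z, rfl⟩ ⟨m z, hS z, rfl⟩ ?_ ?_
    · exact isPreconnected_range (by fun_prop)
    · refine IsPreconnected.image ?_ _ (by fun_prop)
      exact (ho z).isPreconnected

lemma sign_const {Y : Type*} [TopologicalSpace Y] (S : Set Y) (hS : IsPreconnected S) (f : Y → ℝ)
    (hf : Continuous f) (h : (∀ x ∈ S, f x = 0) ∨ (∀ x ∈ S, f x ≠ 0)) :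
    ∀ x ∈ S, ∀ y ∈ S, SignType.sign (f x) = SignType.sign (f y) := by
  rcases h with h | h
  · intro x hx y hy; rw [h x hx, h y hy]
  · have key : ∀ x ∈ S, ∀ y ∈ S, f x < 0 → 0 < f y → False := by
      intro x hx y hy h1 h2
      obtain ⟨w, hw, hw0⟩ := hS.intermediate_value hx hy hf.continuousOn ⟨h1.le, h2.le⟩
      exact h w hw hw0
    intro x hx y hy
    rcases lt_or_gt_of_ne (h x hx) with h1 | h1 <;> rcases lt_or_gt_of_ne (h y hy) with h2 | h2
    · rw [sign_neg h1, sign_neg h2]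
    · exact (key x hx y hy h1 h2).elim
    · exact (key y hy x hx h2 h1).elim
    · rw [sign_pos h1, sign_pos h2]

lemma cells {Z : Type*} [TopologicalSpace Z] [PreconnectedSpace Z] [Nonempty Z]
    {J : Type*} [Fintype J] (P : J → Z → ℝ[X])
    (Δ : ℕ) (hΔ : ∀ j z, (P j z).natDegree ≤ Δ)
    (hdeg : ∀ j z z', (P j z).natDegree = (P j z').natDegree)
    (hzero : ∀ j z z', P j z = 0 → P j z' = 0)
    (hcont : ∀ j i, Continuous fun z => (P j z).coeff i)
    (hcnt : ∀ j j' l, l ≤ Δ → ∀ z z', cnt (P j z) (derivative^[l] (P j' z)) =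
      cnt (P j z') (derivative^[l] (P j' z'))) :
    ∃ (R : ℕ) (S : Fin R → Set (Z × ℝ)), R ≤ 2 * (Fintype.card J * Δ) + 1 ∧
      (∀ r, IsPreconnected (S r)) ∧ (∀ r z, ∃ t, (z, t) ∈ S r) ∧ (∀ x, ∃ r, x ∈ S r) ∧
      (∀ r j, ∀ x ∈ S r, ∀ y ∈ S r, SignType.sign ((P j x.1).eval x.2) =
        SignType.sign ((P j y.1).eval y.2)) := by
  obtain ⟨R, ρ, hR, hρc, hρm, hρ, hρz⟩ := delineate P Δ hΔ hdeg hcont hcnt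
  choose m hmc hm using exists_sample R ρ hρc hρm
  let M : Fin R ⊕ Fin (R+1) → Z → ℝ := Sum.elim ρ m
  have hMc : ∀ i, Continuous (M i) := by rintro (i | i); exacts [hρc i, hmc i]
  let S : Fin R ⊕ Fin (R+1) → Set (Z × ℝ) := fun i =>
    {x | ∀ r, SignType.sign (x.2 - ρ r x.1) = SignType.sign (M i x.1 - ρ r x.1)}
  have hpre : ∀ i, IsPreconnected (S i) := by
    intro i
    refine preconn_of_section (S i) (M i) (hMc i) (fun z r => rfl) fun z => ⟨?_⟩
    intro x hx y hy t ht r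
    have h1 := hx r
    have h2 := hy r
    simp only at h1 h2 ⊢
    rw [← h1] at h2 ⊢
    have l1 : SignType.sign (x - ρ r z) ≤ SignType.sign (t - ρ r z) :=
      SignType.sign.monotone (by linarith [ht.1])
    have l2 : SignType.sign (t - ρ r z) ≤ SignType.sign (y - ρ r z) :=
      SignType.sign.monotone (by linarith [ht.2])
    exact le_antisymm (l2.trans h2.le) l1
  have hcov : ∀ x, ∃ i, x ∈ S i := by
    rintro ⟨z, t⟩
    by_cases h : ∃ r, ρ r z = t
    · obtain ⟨r, hr⟩ := h
      refine ⟨Sum.inl r, fun r' => ?_⟩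
      simp [M, hr]
    · push Not at h
      let c := (Finset.univ.filter fun r => ρ r z < t).card
      have hc : c ≤ R := (Finset.card_le_univ _).trans (by simp)
      have hiff : ∀ r : Fin R, ρ r z < t ↔ (r : ℕ) < c := by
        intro r
        constructor
        · intro hr
          have : Finset.Iic r ⊆ Finset.univ.filter fun r => ρ r z < t := by
            intro s hs
            simp only [Finset.mem_Iic, Finset.mem_filter, Finset.mem_univ, true_and] at hs ⊢
            exact lt_of_le_of_lt ((hρm z).monotone hs) hr
          have := Finset.card_le_card this
          rw [Fin.card_Iic] at this
          exact this
        · intro hr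
          by_contra hn
          have : (Finset.univ.filter fun r => ρ r z < t) ⊆ Finset.Iio r := by
            intro s hs
            simp only [Finset.mem_Iio, Finset.mem_filter, Finset.mem_univ, true_and] at hs ⊢
            by_contra hsr
            exact hn (lt_of_le_of_lt ((hρm z).monotone (not_lt.1 hsr)) hs)
          have := Finset.card_le_card this
          rw [Fin.card_Iio] at this
          exact absurd hr (not_lt.2 this)
      refine ⟨Sum.inr ⟨c, by omega⟩, fun r => ?_⟩
      have hmm := hm ⟨c, by omega⟩ z r
      simp only [M, Sum.elim_inr]
      by_cases hr : (r : ℕ) < c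
      · rw [sign_pos (sub_pos.2 ((hiff r).2 hr)), sign_pos (sub_pos.2 (hmm.1 hr))]
      · have h3 : t < ρ r z := lt_of_le_of_ne (not_lt.1 fun h' => hr ((hiff r).1 h')) (h r).symm
        rw [sign_neg (sub_neg.2 h3), sign_neg (sub_neg.2 (hmm.2 (not_lt.1 hr)))]
  have hevc : ∀ j, Continuous fun x : Z × ℝ => (P j x.1).eval x.2 := by
    intro j
    have e : ∀ x : Z × ℝ, (P j x.1).eval x.2 =
        ∑ i ∈ Finset.range (Δ+1), (P j x.1).coeff i * x.2 ^ i :=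
      fun x => eval_eq_sum_range' (Nat.lt_succ_of_le (hΔ _ _)) _
    simp_rw [e]
    exact continuous_finsetSum _ fun i _ =>
      ((hcont j i).comp continuous_fst).mul (continuous_snd.pow i)
  have hsign : ∀ i j, ∀ x ∈ S i, ∀ y ∈ S i, SignType.sign ((P j x.1).eval x.2) =
        SignType.sign ((P j y.1).eval y.2) := by
    intro i j
    refine sign_const (S i) (hpre i) (fun x => (P j x.1).eval x.2) (hevc j) ?_
    by_cases hz : ∃ z, P j z = 0
    · obtain ⟨z, hz⟩ := hz
      left; intro x _; simp [hzero j z x.1 hz]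
    push Not at hz
    rcases i with r | i
    · have heq : ∀ x ∈ S (Sum.inl r), x.2 = ρ r x.1 := by
        intro x hx
        have := hx r
        simpa [M, sub_eq_zero] using this
      obtain ⟨z0⟩ := ‹Nonempty Z›
      by_cases h0 : (P j z0).eval (ρ r z0) = 0
      · left; intro x hx; rw [heq x hx]; exact (hρz r j x.1 z0).2 h0
      · right; intro x hx; rw [heq x hx]; exact fun h => h0 ((hρz r j x.1 z0).1 h)
    · right
      intro x hx h0
      have : x.2 ∈ rts (fun j => P j x.1) := (mem_rts _ _).2 ⟨j, hz _, h0⟩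
      obtain ⟨r, hr⟩ := (hρ _ _).1 this
      have h1 := hx r
      rw [hr, sub_self, sign_zero] at h1
      have h2 := sign_eq_zero_iff.1 h1.symm
      have h3 := hm i x.1 r
      simp only [M, Sum.elim_inr] at h2
      rcases lt_or_ge (r : ℕ) (i : ℕ) with h | h
      · have := h3.1 h; linarith
      · have := h3.2 h; linarith
  refine ⟨R + (R+1), fun i => S (finSumFinEquiv.symm i), by omega, fun i => hpre _, ?_, ?_, ?_⟩
  · intro i z; exact ⟨M _ z, fun r => rfl⟩
  · intro x
    obtain ⟨i, hi⟩ := hcov x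
    exact ⟨finSumFinEquiv i, by simpa using hi⟩
  · intro i j; exact hsign _ _
end Polynomial

namespace Polynomial
open Filter Topology

lemma rootMult_prod (m : Multiset ℂ) (g : ℂ → ℂ) [DecidablePred fun a => g a = 0] :
    (m.map fun a => C (g a) - X).prod ≠ 0 ∧
    (m.map fun a => C (g a) - X).prod.rootMultiplicity 0 = m.countP fun a => g a = 0 := by
  induction m using Multiset.induction_on with
  | empty => simp
  | cons a m ih =>
    have h0 : C (g a) - X ≠ 0 := by
      intro h
      have := congrArg (fun p => coeff p 1) h
      simp at this
    have hm : (C (g a) - X).rootMultiplicity 0 = if g a = 0 then 1 else 0 := by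
      split_ifs with h
      · have e : C (g a) - X = C (-1 : ℂ) * (X - C 0) := by rw [h]; simp
        rw [e, rootMultiplicity_mul (by rw [← e]; exact h0), rootMultiplicity_C,
          rootMultiplicity_X_sub_C_self]
      · exact rootMultiplicity_eq_zero (by simp [IsRoot, h])
    rw [Multiset.map_cons, Multiset.prod_cons]
    have hne := mul_ne_zero h0 ih.1
    refine ⟨hne, ?_⟩
    rw [rootMultiplicity_mul hne, ih.2, hm, Multiset.countP_cons, add_comm]

lemma cnt_eq (p q Q : ℝ[X]) (Δ : ℕ) (hp : p ≠ 0) (hq : q.natDegree ≤ Δ)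
    (hQ : ∀ s, Q.eval s = resultant p (q - C s) p.natDegree Δ) :
    cnt p q = Q.natTrailingDegree := by
  classical
  have key : toC Q = C ((toC p).leadingCoeff ^ Δ) *
      ((toC p).roots.map fun a => C ((toC q).eval a) - X).prod := by
    apply eq_of_infinite_eval_eq
    refine Set.Infinite.mono ?_ (Set.infinite_range_of_injective Complex.ofReal_injective)
    rintro _ ⟨s, rfl⟩
    have h1 : ((resultant p (q - C s) p.natDegree Δ : ℝ) : ℂ) =
      resultant (toC p) (toC (q - C s)) (toC p).natDegree Δ := by
      rw [toC, toC, resultant_map_map]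
      simp
    have h2 : (toC (q - C s)).natDegree ≤ Δ := by
      rw [toC_natDegree]; exact (natDegree_sub_le _ _).trans (by simp [hq])
    rw [Set.mem_ofPred_eq, toC_eval_real, hQ, h1, resultant_eq_prod_eval _ _ _ h2 (IsAlgClosed.splits _)]
    rw [eval_mul, eval_C, eval_multiset_prod, Multiset.map_map]
    congr 3
    ext a
    simp [toC]
  have hl : (toC p).leadingCoeff ^ Δ ≠ 0 := pow_ne_zero _ (leadingCoeff_ne_zero.2 (toC_ne_zero hp))
  have h3 := rootMult_prod (toC p).roots (fun a => (toC q).eval a)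
  have h4 : (toC Q).rootMultiplicity 0 = cnt p q := by
    rw [key, rootMultiplicity_mul (mul_ne_zero (by simpa using hl) h3.1), h3.2, rootMultiplicity_C,
      zero_add, cnt]
  rw [← h4, rootMultiplicity_eq_natTrailingDegree']
  have : (toC Q).support = Q.support := by
    ext i; simp [toC]
  simp [natTrailingDegree, trailingDegree, this]

lemma natDegree_congr {p q : ℝ[X]} (h : p.support = q.support) : p.natDegree = q.natDegree := by
  simp [natDegree, degree, h]

lemma natTrailingDegree_congr {p q : ℝ[X]} (h : p.support = q.support) :
    p.natTrailingDegree = q.natTrailingDegree := by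
  simp [natTrailingDegree, trailingDegree, h]

def VE : ℕ → Type
  | 0 => Unit
  | n + 1 => VE n × ℝ

instance VE.top : (n : ℕ) → TopologicalSpace (VE n)
  | 0 => inferInstanceAs (TopologicalSpace Unit)
  | n + 1 => letI := VE.top n; inferInstanceAs (TopologicalSpace (VE n × ℝ))

def PolyFn : (n : ℕ) → ℕ → (VE n → ℝ) → Prop
  | 0, _, _ => True
  | n + 1, Δ, f => ∃ p : VE n → ℝ[X], (∀ z, (p z).natDegree ≤ Δ) ∧
      (∀ i, PolyFn n Δ fun z => (p z).coeff i) ∧ ∀ (z : VE n) (t : ℝ), f (z, t) = (p z).eval t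

lemma PolyFn.mono {n : ℕ} {Δ Δ' : ℕ} (h : Δ ≤ Δ') {f : VE n → ℝ} (hf : PolyFn n Δ f) :
    PolyFn n Δ' f := by
  induction n with
  | zero => trivial
  | succ n ih =>
    obtain ⟨p, h1, h2, h3⟩ := hf
    exact ⟨p, fun z => (h1 z).trans h, fun i => ih (h2 i), h3⟩

lemma PolyFn.const {n : ℕ} (Δ : ℕ) (c : ℝ) : PolyFn n Δ fun _ => c := by
  induction n generalizing c with
  | zero => trivial
  | succ n ih =>
    refine ⟨fun _ => C c, fun z => by simp, fun i => ?_, fun z t => by simp⟩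
    simp only [coeff_C]
    exact ih _

lemma PolyFn.add {n Δ : ℕ} {f g : VE n → ℝ} (hf : PolyFn n Δ f) (hg : PolyFn n Δ g) :
    PolyFn n Δ fun z => f z + g z := by
  induction n with
  | zero => trivial
  | succ n ih =>
    obtain ⟨p, h1, h2, h3⟩ := hf
    obtain ⟨q, k1, k2, k3⟩ := hg
    refine ⟨fun z => p z + q z, fun z => natDegree_add_le_of_degree_le (h1 z) (k1 z), fun i => ?_,
      fun z t => (congrArg₂ (· + ·) (h3 z t) (k3 z t)).trans eval_add.symm⟩
    simp only [coeff_add]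
    exact ih (h2 i) (k2 i)

lemma PolyFn.sum {n Δ : ℕ} {ι : Type*} (s : Finset ι) {f : ι → VE n → ℝ}
    (hf : ∀ i ∈ s, PolyFn n Δ (f i)) : PolyFn n Δ fun z => ∑ i ∈ s, f i z := by
  classical
  induction s using Finset.induction_on with
  | empty => simpa using PolyFn.const Δ 0
  | insert a s ha ih =>
    simp only [Finset.sum_insert ha]
    exact (hf a (by simp)).add (ih fun i hi => hf i (by simp [hi]))

lemma PolyFn.mul {n Δ Δ' : ℕ} {f g : VE n → ℝ} (hf : PolyFn n Δ f) (hg : PolyFn n Δ' g) :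
    PolyFn n (Δ + Δ') fun z => f z * g z := by
  induction n with
  | zero => trivial
  | succ n ih =>
    obtain ⟨p, h1, h2, h3⟩ := hf
    obtain ⟨q, k1, k2, k3⟩ := hg
    refine ⟨fun z => p z * q z, fun z => natDegree_mul_le_of_le (h1 z) (k1 z), fun i => ?_,
      fun z t => (congrArg₂ (· * ·) (h3 z t) (k3 z t)).trans eval_mul.symm⟩
    simp only [coeff_mul]
    exact PolyFn.sum _ fun x _ => ih (h2 _) (k2 _)

lemma PolyFn.smul {n Δ : ℕ} {f : VE n → ℝ} (c : ℝ) (hf : PolyFn n Δ f) :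
    PolyFn n Δ fun z => c * f z := by
  simpa using (PolyFn.const 0 c).mul hf

lemma PolyFn.prod {n : ℕ} {ι : Type*} (s : Finset ι) {f : ι → VE n → ℝ} (Δ : ι → ℕ)
    (hf : ∀ i ∈ s, PolyFn n (Δ i) (f i)) : PolyFn n (∑ i ∈ s, Δ i) fun z => ∏ i ∈ s, f i z := by
  classical
  induction s using Finset.induction_on with
  | empty => simpa using PolyFn.const 0 1
  | insert a s ha ih =>
    simp only [Finset.prod_insert ha, Finset.sum_insert ha]
    exact (hf a (by simp)).mul (ih fun i hi => hf i (by simp [hi]))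

lemma PolyFn.pow {n Δ : ℕ} {f : VE n → ℝ} (hf : PolyFn n Δ f) (m : ℕ) :
    PolyFn n (m * Δ) fun z => f z ^ m := by
  have := PolyFn.prod (Finset.range m) (f := fun _ => f) (fun _ => Δ) (fun _ _ => hf)
  simpa using this

lemma PolyFn.lift {n Δ : ℕ} {f : VE n → ℝ} (hf : PolyFn n Δ f) :
    PolyFn (n+1) Δ fun z : VE n × ℝ => f z.1 := by
  refine ⟨fun z => C (f z), fun z => by simp, fun i => ?_, fun z t => by simp⟩
  simp only [coeff_C]
  split_ifs
  · exact hf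
  · exact PolyFn.const _ _

lemma PolyFn.last (n : ℕ) : PolyFn (n+1) 1 fun z : VE n × ℝ => z.2 := by
  refine ⟨fun z => X, fun z => by simp, fun i => ?_, fun z t => by simp⟩
  exact PolyFn.const _ _

lemma PolyFn.continuous {n Δ : ℕ} {f : VE n → ℝ} (hf : PolyFn n Δ f) : Continuous f := by
  induction n with
  | zero =>
    have : DiscreteTopology (VE 0) := inferInstanceAs (DiscreteTopology Unit)
    exact continuous_of_discreteTopology
  | succ n ih =>
    obtain ⟨p, h1, h2, h3⟩ := hf
    have e : f = fun x : VE n × ℝ => ∑ i ∈ Finset.range (Δ+1), (p x.1).coeff i * x.2 ^ i := by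
      ext x
      rw [← eval_eq_sum_range' (Nat.lt_succ_of_le (h1 _))]
      exact h3 x.1 x.2
    rw [e]
    exact continuous_finsetSum _ fun i _ =>
      ((ih (h2 i)).comp continuous_fst).mul (continuous_snd.pow i)

lemma PolyFn.det {n Δ m : ℕ} (M : VE n → Matrix (Fin m) (Fin m) ℝ)
    (hM : ∀ i j, PolyFn n Δ fun z => M z i j) : PolyFn n (m * Δ) fun z => (M z).det := by
  simp only [Matrix.det_apply']
  refine PolyFn.sum _ fun σ _ => PolyFn.smul _ ?_
  have := PolyFn.prod (Finset.univ : Finset (Fin m)) (f := fun i z => M z (σ i) i) (fun _ => Δ)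
    (fun i _ => hM _ _)
  simpa using this

lemma PolyFn.coeff_aux {n Δ : ℕ} (q : VE n → ℝ[X])
    (hq : ∀ i, PolyFn n Δ fun z => (q z).coeff i) (l k : ℕ) :
    PolyFn (n+1) (Δ + 1) fun x : VE n × ℝ => (derivative^[l] (q x.1) - C x.2).coeff k := by
  have e : (fun x : VE n × ℝ => (derivative^[l] (q x.1) - C x.2).coeff k) = fun x : VE n × ℝ =>
      (((k+l).descFactorial l : ℕ) : ℝ) * (q x.1).coeff (k+l) + (if k = 0 then (-1) else 0) * x.2 := by
    ext x
    rw [coeff_sub, coeff_iterate_derivative, coeff_C, nsmul_eq_mul]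
    split_ifs <;> ring
  have h := PolyFn.add (PolyFn.mono (Nat.le_succ _) (PolyFn.smul (((k+l).descFactorial l : ℕ) : ℝ)
    (hq (k+l)).lift)) (PolyFn.mono (by omega : 1 ≤ Δ + 1)
      (PolyFn.smul (if k = 0 then (-1) else 0) (PolyFn.last n)))
  exact e ▸ h

lemma PolyFn.res {n Δ δ l : ℕ} (hδ : δ ≤ Δ) (p q : VE n → ℝ[X])
    (hp : ∀ i, PolyFn n Δ fun z => (p z).coeff i) (hq : ∀ i, PolyFn n Δ fun z => (q z).coeff i) :
    PolyFn (n+1) (2 * Δ * (Δ + 1)) fun x : VE n × ℝ =>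
      resultant (p x.1) (derivative^[l] (q x.1) - C x.2) δ Δ := by
  refine PolyFn.mono (Δ := (δ + Δ) * (Δ + 1)) (by gcongr; omega) ?_
  refine PolyFn.det (n := n+1) (fun x : VE n × ℝ => sylvester (p x.1) (derivative^[l] (q x.1) - C x.2) δ Δ) ?_
  intro i j
  have z0 : PolyFn (n+1) (Δ+1) fun _ => 0 := PolyFn.const _ _
  induction j using Fin.addCases with
  | left j =>
    simp only [sylvester, Matrix.of_apply, Fin.addCases_left]
    split_ifs
    · exact PolyFn.coeff_aux q hq _ _
    · exact z0
  | right j =>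
    simp only [sylvester, Matrix.of_apply, Fin.addCases_right]
    split_ifs
    · exact PolyFn.mono (Nat.le_succ _) (hp _).lift
    · exact z0

def Inv {Y J : Type*} (F : J → Y → ℝ) (S : Set Y) : Prop :=
  ∀ j, ∀ x ∈ S, ∀ y ∈ S, SignType.sign (F j x) = SignType.sign (F j y)

lemma elim_step {n Δ : ℕ} {J : Type} [Fintype J] (F : J → VE (n+1) → ℝ)
    (hF : ∀ j, PolyFn (n+1) Δ (F j)) :
    ∃ (J' : Type) (_ : Fintype J') (F' : J' → VE n → ℝ),
      Fintype.card J' = Fintype.card J * (Δ + 1) + Fintype.card J * ((Δ + 1) *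
        (Fintype.card J * ((Δ + 1) * (2 * Δ * (Δ + 1) + 1)))) ∧
      (∀ j, PolyFn n (2 * Δ * (Δ + 1) + Δ) (F' j)) ∧
      ∀ S : Set (VE n), IsPreconnected S → S.Nonempty → Inv F' S →
        ∃ (R : ℕ) (T : Fin R → Set (VE (n+1))), R ≤ 2 * (Fintype.card J * Δ) + 1 ∧
          (∀ r, IsPreconnected (T r)) ∧ (∀ r, ∀ x ∈ T r, x.1 ∈ S) ∧
          (∀ r, ∀ z ∈ S, ∃ t : ℝ, ((z, t) : VE n × ℝ) ∈ T r) ∧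
          (∀ x : VE (n+1), x.1 ∈ S → ∃ r, x ∈ T r) ∧ ∀ r, Inv F (T r) := by
  choose P hP1 hP2 hP3 using hF
  have hres := fun j (δ : Fin (Δ+1)) j' (l : Fin (Δ+1)) =>
    PolyFn.res (l := l) (Nat.lt_succ_iff.1 δ.2) (P j) (P j') (hP2 j) (hP2 j')
  choose Q hQ1 hQ2 hQ3 using hres
  let F' : (J × Fin (Δ+1)) ⊕ (J × Fin (Δ+1) × J × Fin (Δ+1) × Fin (2 * Δ * (Δ + 1) + 1)) → VE n → ℝ :=
    Sum.elim (fun x z => (P x.1 z).coeff x.2)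
      (fun x z => (Q x.1 x.2.1 x.2.2.1 x.2.2.2.1 z).coeff x.2.2.2.2)
  refine ⟨_, inferInstance, F', by simp, ?_, ?_⟩
  · rintro (x | x)
    · exact PolyFn.mono (by omega) (hP2 _ _)
    · exact PolyFn.mono (by omega) (hQ2 _ _ _ _ _)
  intro S hS hne hI
  have supp_of : ∀ (p q : ℝ[X]) (D : ℕ), p.natDegree ≤ D → q.natDegree ≤ D →
      (∀ i : Fin (D+1), SignType.sign (p.coeff i) = SignType.sign (q.coeff i)) →
      p.support = q.support := by
    intro p q D hp hq h
    ext i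
    rw [mem_support_iff, mem_support_iff, not_iff_not]
    by_cases hi : i < D + 1
    · have := h ⟨i, hi⟩
      simp only at this
      rw [← sign_eq_zero_iff, this, sign_eq_zero_iff]
    · rw [coeff_eq_zero_of_natDegree_lt (by omega), coeff_eq_zero_of_natDegree_lt (by omega)]
  have suppP : ∀ j (z z' : S), (P j z).support = (P j z').support := fun j z z' =>
    supp_of _ _ Δ (hP1 _ _) (hP1 _ _) fun i => hI (Sum.inl (j, i)) z z.2 z' z'.2
  have suppQ : ∀ j δ j' l (z z' : S), (Q j δ j' l z).support = (Q j δ j' l z').support :=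
    fun j δ j' l z z' => supp_of _ _ _ (hQ1 _ _ _ _ _) (hQ1 _ _ _ _ _)
      fun i => hI (Sum.inr (j, δ, j', l, i)) z z.2 z' z'.2
  have : PreconnectedSpace S := Subtype.preconnectedSpace hS
  have : Nonempty S := hne.to_subtype
  have hzero : ∀ j (z z' : S), P j z = 0 → P j z' = 0 := fun j z z' h => by
    have := suppP j z z'
    rw [h, support_zero] at this
    exact support_eq_empty.1 this.symm
  obtain ⟨R, T, h1, h2, h3, h4, h5⟩ := cells (Z := S) (fun j z => P j z) Δ (fun j z => hP1 _ _)
    (fun j z z' => natDegree_congr (suppP j z z')) hzero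
    (fun j i => (hP2 j i).continuous.comp continuous_subtype_val) (by
      intro j j' l hl z z'
      by_cases h0 : P j z = 0
      · have h0' := hzero j z z' h0
        simp only [h0, h0']
        simp [cnt, toC]
      · have h0' : P j z' ≠ 0 := fun h => h0 (hzero j z' z h)
        have dd : ∀ w, (derivative^[l] (P j' w)).natDegree ≤ Δ := fun w =>
          (natDegree_iterate_derivative _ _).trans ((Nat.sub_le _ _).trans (hP1 _ _))
        have hd := natDegree_congr (suppP j z z')
        let δ : Fin (Δ+1) := ⟨(P j z).natDegree, Nat.lt_succ_of_le (hP1 _ _)⟩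
        let l' : Fin (Δ+1) := ⟨l, Nat.lt_succ_of_le hl⟩
        rw [cnt_eq (P j z) _ (Q j δ j' l' z) Δ h0 (dd _) (fun s => by rw [← hQ3]),
          cnt_eq (P j z') _ (Q j δ j' l' z') Δ h0' (dd _) (fun s => by rw [← hQ3, ← hd])]
        exact natTrailingDegree_congr (suppQ _ _ _ _ _ _))
  let ψ : S × ℝ → VE (n+1) := fun x => ((x.1 : VE n), x.2)
  have hψ : Continuous ψ := by
    have : Continuous fun x : S × ℝ => ((x.1 : VE n), x.2) := by fun_prop
    exact this
  refine ⟨R, fun r => ψ '' T r, h1, fun r => (h2 r).image _ hψ.continuousOn, ?_, ?_, ?_, ?_⟩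
  · rintro r _ ⟨x, hx, rfl⟩
    exact x.1.2
  · intro r z hz
    obtain ⟨t, ht⟩ := h3 r ⟨z, hz⟩
    exact ⟨t, _, ht, rfl⟩
  · rintro ⟨z, t⟩ hz
    obtain ⟨r, hr⟩ := h4 (⟨z, hz⟩, t)
    exact ⟨r, _, hr, rfl⟩
  · rintro r j _ ⟨x, hx, rfl⟩ _ ⟨y, hy, rfl⟩
    have := h5 r j x hx y hy
    simp only [ψ, hP3]
    exact this
end Polynomial

namespace Polynomial
open Filter Topology

lemma elim_step2 {n L : ℕ} (hL : 2 ≤ L) {J : Type} [Fintype J] (F : J → VE (n+1) → ℝ)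
    (hJ : Fintype.card J ≤ L) (hF : ∀ j, PolyFn (n+1) L (F j)) :
    ∃ (J' : Type) (_ : Fintype J') (F' : J' → VE n → ℝ),
      Fintype.card J' ≤ L ^ 12 ∧ (∀ j, PolyFn n (L ^ 12) (F' j)) ∧
      ∀ S : Set (VE n), IsPreconnected S → S.Nonempty → Inv F' S →
        ∃ (R : ℕ) (T : Fin R → Set (VE (n+1))), R ≤ L ^ 12 ∧
          (∀ r, IsPreconnected (T r)) ∧ (∀ r, ∀ x ∈ T r, x.1 ∈ S) ∧
          (∀ r, ∀ z ∈ S, ∃ t : ℝ, ((z, t) : VE n × ℝ) ∈ T r) ∧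
          (∀ x : VE (n+1), x.1 ∈ S → ∃ r, x ∈ T r) ∧ ∀ r, Inv F (T r) := by
  obtain ⟨J', _, F', h1, h2, h3⟩ := elim_step F hF
  have a1 : L + 1 ≤ L ^ 2 := by nlinarith
  have pw : ∀ i, 1 ≤ L ^ i := fun i => Nat.one_le_pow _ _ (by omega)
  have dbl : ∀ i, ∀ k, k = i + 1 → 2 * L ^ i ≤ L ^ k := fun i k h => by
    subst h; rw [pow_succ, mul_comm]; gcongr
  have a2 : 2 * L * (L + 1) ≤ L ^ 4 := by
    calc 2 * L * (L+1) ≤ L * L * L ^ 2 := by gcongr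
      _ = L ^ 4 := by ring
  have a3 : 2 * L * (L + 1) + 1 ≤ L ^ 5 := by have := dbl 4 5 rfl; have := pw 4; omega
  have a12 : ∀ i ≤ 12, L ^ i ≤ L ^ 12 := fun i hi => Nat.pow_le_pow_right (by omega) hi
  refine ⟨J', inferInstance, F', ?_, fun j => PolyFn.mono ?_ (h2 j), fun S s1 s2 s3 => ?_⟩
  · rw [h1]
    calc _ ≤ L * (L ^ 2) + L * (L ^ 2 * (L * (L ^ 2 * L ^ 5))) := by gcongr
      _ = L ^ 3 + L ^ 11 := by ring
      _ ≤ L ^ 11 + L ^ 11 := by gcongr <;> omega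
      _ = 2 * L ^ 11 := by ring
      _ ≤ _ := dbl 11 12 rfl
  · have : L ≤ L ^ 4 := by simpa using Nat.pow_le_pow_right (n := L) (by omega) (show 1 ≤ 4 by omega)
    have := dbl 4 5 rfl
    have := a12 5 (by omega)
    omega
  · obtain ⟨R, T, hR, h⟩ := h3 S s1 s2 s3
    refine ⟨R, T, hR.trans ?_, h⟩
    have : Fintype.card J * L ≤ L ^ 2 := by rw [pow_two]; gcongr
    have := dbl 2 3 rfl
    have := pw 3
    have := dbl 3 4 rfl
    have := a12 4 (by omega)
    omega

def aexp : ℕ → ℕ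
  | 0 => 0
  | n + 1 => 12 * aexp n + 12

lemma propA (n : ℕ) : ∀ {L : ℕ} (_ : 2 ≤ L) {J : Type} [Fintype J] (F : J → VE n → ℝ)
    (_ : Fintype.card J ≤ L) (_ : ∀ j, PolyFn n L (F j)),
    ∃ (I : Type) (_ : Fintype I) (T : I → Set (VE n)), Fintype.card I ≤ L ^ aexp n ∧
      (∀ x, ∃ i, x ∈ T i) ∧ ∀ i, IsPreconnected (T i) ∧ (T i).Nonempty ∧ Inv F (T i) := by
  induction n with
  | zero =>
    intro L hL J _ F hJ hF
    refine ⟨Unit, inferInstance, fun _ => Set.univ, by simp [aexp], by simp, fun i => ⟨?_, ⟨(), trivial⟩, ?_⟩⟩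
    · have : Subsingleton (VE 0) := inferInstanceAs (Subsingleton Unit)
      exact Set.subsingleton_univ.isPreconnected
    · rintro j ⟨⟩ _ ⟨⟩ _
      rfl
  | succ n ih =>
    intro L hL J _ F hJ hF
    obtain ⟨J', _, F', h1, h2, h3⟩ := elim_step2 hL F hJ hF
    have hL' : 2 ≤ L ^ 12 := hL.trans (by simpa using Nat.pow_le_pow_right (n := L) (by omega) (show 1 ≤ 12 by omega))
    obtain ⟨I, _, T, k1, k2, k3⟩ := ih hL' F' h1 h2
    choose R W w1 w2 w3 w4 w5 w6 using fun i => h3 (T i) (k3 i).1 (k3 i).2.1 (k3 i).2.2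
    refine ⟨(i : I) × Fin (R i), inferInstance, fun x => W x.1 x.2, ?_, ?_, ?_⟩
    · rw [Fintype.card_sigma]
      calc ∑ i, Fintype.card (Fin (R i)) ≤ ∑ i : I, L ^ 12 := by
            apply Finset.sum_le_sum; intro i _; simpa using w1 i
        _ = Fintype.card I * L ^ 12 := by simp
        _ ≤ (L ^ 12) ^ aexp n * L ^ 12 := by gcongr
        _ = _ := by rw [aexp]; ring
    · intro x
      obtain ⟨i, hi⟩ := k2 x.1
      obtain ⟨r, hr⟩ := w5 i x hi
      exact ⟨⟨i, r⟩, hr⟩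
    · rintro ⟨i, r⟩
      refine ⟨w2 i r, ?_, w6 i r⟩
      obtain ⟨z, hz⟩ := (k3 i).2.1
      obtain ⟨t, ht⟩ := w4 i r z hz
      exact ⟨_, ht⟩

def proj (e : ℕ) : (d : ℕ) → VE (e + d) → VE e
  | 0 => id
  | d + 1 => fun x => proj e d x.1

lemma propB (e d : ℕ) : ∀ {L : ℕ} (_ : 2 ≤ L) {J : Type} [Fintype J] (F : J → VE (e+d) → ℝ)
    (_ : Fintype.card J ≤ L) (_ : ∀ j, PolyFn (e+d) L (F j)),
    ∃ (J' : Type) (_ : Fintype J') (F' : J' → VE e → ℝ),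
      Fintype.card J' ≤ L ^ 12 ^ d ∧ (∀ j, PolyFn e (L ^ 12 ^ d) (F' j)) ∧
      ∀ S : Set (VE e), IsPreconnected S → S.Nonempty → Inv F' S →
        ∀ w, proj e d w ∈ S → ∃ T : Set (VE (e+d)), w ∈ T ∧ IsPreconnected T ∧ Inv F T ∧
          ∀ z ∈ S, ∃ w' ∈ T, proj e d w' = z := by
  induction d with
  | zero =>
    intro L hL J _ F hJ hF
    exact ⟨J, inferInstance, F, by simpa using hJ, by simpa using hF, fun S s1 s2 s3 w hw =>
      ⟨S, hw, s1, s3, fun z hz => ⟨z, hz, rfl⟩⟩⟩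
  | succ d ih =>
    intro L hL J _ F hJ hF
    obtain ⟨J', _, F', h1, h2, h3⟩ := elim_step2 (n := e + d) hL F hJ hF
    have hL' : 2 ≤ L ^ 12 := hL.trans (by simpa using Nat.pow_le_pow_right (n := L) (by omega) (show 1 ≤ 12 by omega))
    obtain ⟨J2, _, F2, k1, k2, k3⟩ := ih hL' F' h1 h2
    have e1 : (L ^ 12) ^ 12 ^ d = L ^ 12 ^ (d+1) := by rw [← pow_mul, pow_succ, mul_comm]
    rw [e1] at k1
    simp only [e1] at k2
    refine ⟨J2, inferInstance, F2, k1, k2, fun S s1 s2 s3 w hw => ?_⟩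
    obtain ⟨T, t1, t2, t3, t4⟩ := k3 S s1 s2 s3 w.1 hw
    obtain ⟨R, W, w1, w2, w3, w4, w5, w6⟩ := h3 T t2 ⟨_, t1⟩ t3
    obtain ⟨r, hr⟩ := w5 w t1
    refine ⟨W r, hr, w2 r, w6 r, fun z hz => ?_⟩
    obtain ⟨w', q1, q2⟩ := t4 z hz
    obtain ⟨t, ht⟩ := w4 r w' q1
    exact ⟨_, ht, q2⟩

lemma propC (e d : ℕ) {L : ℕ} (hL : 2 ≤ L) {J : Type} [Fintype J] (F : J → VE (e+d) → ℝ)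
    (hJ : Fintype.card J ≤ L) (hF : ∀ j, PolyFn (e+d) L (F j)) :
    ∃ (I : Type) (_ : Fintype I) (c : VE e → I), Fintype.card I ≤ L ^ (12 ^ d * aexp e) ∧
      ∀ z z', c z = c z' → ∀ w, proj e d w = z → ∃ w', proj e d w' = z' ∧
        ∀ j, SignType.sign (F j w) = SignType.sign (F j w') := by
  obtain ⟨J', _, F', h1, h2, h3⟩ := propB e d hL F hJ hF
  have hL' : 2 ≤ L ^ 12 ^ d := hL.trans (Nat.le_self_pow (by positivity) _)
  obtain ⟨I, _, T, k1, k2, k3⟩ := propA e hL' F' h1 h2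
  choose c hc using k2
  refine ⟨I, inferInstance, c, by rwa [pow_mul], ?_⟩
  rintro _ z' hz w rfl
  obtain ⟨W, w1, w2, w3, w4⟩ := h3 _ (k3 _).1 (k3 _).2.1 (k3 _).2.2 w (hc _)
  obtain ⟨w', q1, q2⟩ := w4 z' (by rw [hz]; exact hc _)
  exact ⟨w', q2, fun j => w3 j _ w1 _ q1⟩

def coord : (n : ℕ) → VE n → ℕ → ℝ
  | 0 => fun _ _ => 0
  | n + 1 => fun x i => if i = n then x.2 else coord n x.1 i

def pt : (n : ℕ) → (ℕ → ℝ) → VE n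
  | 0 => fun _ => ()
  | n + 1 => fun a => (pt n a, a n)

lemma coord_pt (n : ℕ) (a : ℕ → ℝ) (i : ℕ) (hi : i < n) : coord n (pt n a) i = a i := by
  induction n with
  | zero => omega
  | succ n ih =>
    show (if i = n then a n else coord n (pt n a) i) = a i
    split_ifs with h
    · rw [h]
    · exact ih (by omega)

lemma pt_congr (n : ℕ) (a a' : ℕ → ℝ) (h : ∀ i < n, a i = a' i) : pt n a = pt n a' := by
  induction n with
  | zero => rfl
  | succ n ih => exact Prod.ext (ih fun i hi => h i (by omega)) (h n (by omega))

lemma proj_pt (e d : ℕ) (a : ℕ → ℝ) : proj e d (pt (e+d) a) = pt e a := by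
  induction d with
  | zero => rfl
  | succ d ih => exact ih

lemma coord_proj (e d : ℕ) (w : VE (e+d)) (i : ℕ) (hi : i < e) :
    coord (e+d) w i = coord e (proj e d w) i := by
  induction d with
  | zero => rfl
  | succ d ih =>
    show (if i = e + d then w.2 else coord (e+d) w.1 i) = _
    rw [if_neg (by omega)]
    exact ih _

lemma polyFn_coord (n i : ℕ) : PolyFn n 1 fun x => coord n x i := by
  induction n with
  | zero => trivial
  | succ n ih =>
    by_cases h : i = n
    · have e : (fun x : VE n × ℝ => coord (n+1) x i) = fun x => x.2 := by
        ext x; exact if_pos h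
      exact e ▸ PolyFn.last n
    · have e : (fun x : VE n × ℝ => coord (n+1) x i) = fun x => coord n x.1 i := by
        ext x; exact if_neg h
      exact e ▸ ih.lift

lemma polyFn_eval {n d T : ℕ} (g : Fin d → ℕ) (p : MvPolynomial (Fin d) ℝ) (hp : p.totalDegree ≤ T) :
    PolyFn n T fun x => MvPolynomial.eval (fun i => coord n x (g i)) p := by
  simp only [MvPolynomial.eval_eq']
  refine PolyFn.sum _ fun s hs => PolyFn.smul _ ?_
  refine PolyFn.mono ?_ (PolyFn.prod Finset.univ (fun i => s i * 1) fun i _ =>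
    (polyFn_coord n (g i)).pow (s i))
  have := MvPolynomial.le_totalDegree hs
  rw [Finsupp.sum_fintype _ _ (by simp)] at this
  simp only [mul_one]
  omega

lemma sign_pos {x y : ℝ} (h : SignType.sign x = SignType.sign y) : 0 < x ↔ 0 < y := by
  rw [← sign_eq_one_iff, h, sign_eq_one_iff]

lemma sign_nonneg {x y : ℝ} (h : SignType.sign x = SignType.sign y) : 0 ≤ x ↔ 0 ≤ y := by
  rw [← sign_nonneg_iff, h, sign_nonneg_iff]

lemma core (b d t k N L : ℕ) (hL : 2 ≤ L) (h1 : t * k + b ≤ L) (h2 : b + 1 ≤ L)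
    (ι : (Fin N → ℝ) →ₗ[ℝ] MvPolynomial (Fin d) ℝ) (hι : ∀ x, (ι x).totalDegree ≤ b)
    (G : Fin t → (Fin b → Prop) → Prop) (P : Fin t → Fin k → MvPolynomial (Fin d) ℝ)
    (hP : ∀ i j, (P i j).totalDegree ≤ L)
    (f : (Fin t → Bool) → (Fin b → Fin N → ℝ))
    (hf : ∀ ω i, (∃ v, G i (fun l => 0 ≤ MvPolynomial.eval v (ι (f ω l))) ∧
      ∀ j, 0 < MvPolynomial.eval v (P i j)) ↔ ω i = true) :
    2 ^ t ≤ L ^ (12 ^ d * aexp (b * N)) := by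
  classical
  let e := b * N
  let F : (Fin t × Fin k) ⊕ Fin b → VE (e+d) → ℝ := Sum.elim
    (fun x w => MvPolynomial.eval (fun i : Fin d => coord (e+d) w (e + i)) (P x.1 x.2))
    (fun l w => ∑ m : Fin N, coord (e+d) w (finProdFinEquiv (l, m)) *
      MvPolynomial.eval (fun i : Fin d => coord (e+d) w (e + i)) (ι (Pi.single m 1)))
  have hF : ∀ j, PolyFn (e+d) L (F j) := by
    rintro (x | l)
    · exact polyFn_eval _ _ (hP _ _)
    · refine PolyFn.sum _ fun m _ => PolyFn.mono (by omega) ((polyFn_coord _ _).mul (polyFn_eval _ _ (hι _)))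
  obtain ⟨I, _, c, c1, c2⟩ := propC e d hL F (by simpa using h1) hF
  let ext : (Fin b → Fin N → ℝ) → (Fin d → ℝ) → ℕ → ℝ := fun x v i =>
    if h : i < e then x (finProdFinEquiv.symm ⟨i, h⟩).1 (finProdFinEquiv.symm ⟨i, h⟩).2
    else if h' : i - e < d then v ⟨i - e, h'⟩ else 0
  let zx : (Fin b → Fin N → ℝ) → VE e := fun x => pt e (ext x 0)
  have ex1 : ∀ x v (l : Fin b) (m : Fin N), ext x v (finProdFinEquiv (l, m)) = x l m := by
    intro x v l m
    simp only [ext]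
    rw [dif_pos (finProdFinEquiv (l, m)).2]
    rw [Fin.eta, Equiv.symm_apply_apply]
  have ex2 : ∀ x v (i : Fin d), ext x v (e + i) = v i := by
    intro x v i
    simp only [ext]
    rw [dif_neg (by omega), dif_pos (by omega)]
    congr 1
    ext
    simp
  have hz : ∀ x v, proj e d (pt (e+d) (ext x v)) = zx x := by
    intro x v
    rw [proj_pt]
    apply pt_congr
    intro i hi
    simp only [ext]
    rw [dif_pos hi, dif_pos hi]
  have hFr : ∀ x w, proj e d w = zx x → ∀ l, F (Sum.inr l) w =
      MvPolynomial.eval (fun i : Fin d => coord (e+d) w (e + i)) (ι (x l)) := by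
    intro x w hw l
    have : x l = ∑ m, x l m • (Pi.single m 1 : Fin N → ℝ) := by
      ext m
      simp [Finset.sum_apply, Pi.single_apply]
    rw [this, map_sum, map_sum]
    simp only [F, Sum.elim_inr]
    refine Finset.sum_congr rfl fun m _ => ?_
    rw [coord_proj _ _ _ _ (finProdFinEquiv (l, m)).2, hw, coord_pt _ _ _ (finProdFinEquiv (l, m)).2, ex1,
      map_smul, MvPolynomial.smul_eval]
  have tr : ∀ ω ω', c (zx (f ω)) = c (zx (f ω')) → ∀ i, ω i = true → ω' i = true := by
    intro ω ω' hc i hi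
    rw [← hf] at hi ⊢
    obtain ⟨v, v1, v2⟩ := hi
    obtain ⟨w', q1, q2⟩ := c2 _ _ hc _ (hz (f ω) v)
    have hv : (fun i : Fin d => coord (e+d) (pt (e+d) (ext (f ω) v)) (e + i)) = v := by
      ext i
      rw [coord_pt _ _ _ (by omega), ex2]
    refine ⟨fun i : Fin d => coord (e+d) w' (e + i), ?_, ?_⟩
    · convert v1 using 1
      ext l
      have := q2 (Sum.inr l)
      rw [hFr (f ω) _ (hz _ _), hFr (f ω') _ q1, hv] at this
      exact (sign_nonneg this).symm
    · intro j
      have := q2 (Sum.inl (i, j))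
      simp only [F, Sum.elim_inl, hv] at this
      exact (sign_pos this).1 (v2 j)
  have inj : Function.Injective fun ω => c (zx (f ω)) := by
    intro ω ω' h
    ext i
    have a1 := tr ω ω' h i
    have a2 := tr ω' ω h.symm i
    cases h1 : ω i <;> cases h2 : ω' i <;> simp_all
  have := Fintype.card_le_of_injective _ inj
  simp at this
  exact this.trans c1

lemma arith (a : ℕ) : ∃ K : ℕ, ∀ t : ℕ, (t + 4) ^ (2 * a) ≤ 2 ^ K * 2 ^ t := by
  have h := tendsto_pow_const_div_const_pow_of_one_lt (2 * a) (show (1:ℝ) < 2 by norm_num)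
  obtain ⟨B, hB⟩ := h.bddAbove_range
  obtain ⟨m, hm⟩ := pow_unbounded_of_one_lt B (show (1:ℝ) < 2 by norm_num)
  refine ⟨m + 4, fun t => ?_⟩
  have := (hB ⟨t + 4, rfl⟩).trans hm.le
  simp only at this
  rw [div_le_iff₀ (by positivity)] at this
  have h2 : ((t + 4) ^ (2 * a) : ℝ) ≤ 2 ^ m * 2 ^ (t + 4) := by exact_mod_cast this
  have h3 : (t + 4) ^ (2 * a) ≤ 2 ^ m * 2 ^ (t + 4) := by exact_mod_cast h2
  calc _ ≤ _ := h3
    _ = _ := by ring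

lemma arith2 (a : ℕ) : ∃ K : ℕ, ∀ t k : ℕ, 1 ≤ k → 2 ^ t ≤ ((t + 4) * 2 ^ k) ^ a →
    2 ^ (t + 1) ≤ 2 ^ (k * K) := by
  obtain ⟨K, hK⟩ := arith a
  refine ⟨K + 1 + 2 * a, fun t k hk h => ?_⟩
  have h1 : 2 ^ t * 2 ^ t ≤ (2 ^ K * 2 ^ (2 * a * k)) * 2 ^ t := by
    calc 2 ^ t * 2 ^ t ≤ ((t + 4) * 2 ^ k) ^ a * ((t + 4) * 2 ^ k) ^ a := Nat.mul_le_mul h h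
      _ = (t + 4) ^ (2 * a) * 2 ^ (2 * a * k) := by
        rw [mul_pow, ← pow_mul, two_mul, add_mul, pow_add, pow_add, mul_comm k a]; ring
      _ ≤ (2 ^ K * 2 ^ t) * 2 ^ (2 * a * k) := Nat.mul_le_mul_right _ (hK t)
      _ = _ := by ring
  have h2 := Nat.le_of_mul_le_mul_right h1 (by positivity)
  calc 2 ^ (t+1) = 2 ^ t * 2 := pow_succ _ _
    _ ≤ (2 ^ K * 2 ^ (2 * a * k)) * 2 := by gcongr
    _ = 2 ^ (K + 2 * a * k + 1) := by rw [pow_succ, pow_add]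
    _ ≤ _ := Nat.pow_le_pow_right (by norm_num) (by nlinarith)

lemma Dj_le (d j m : ℕ) (hd : 1 ≤ d) (h : IsLeast {m : ℕ | 0 < m ∧ 2 ^ j < Nat.choose (m + d) d} m) :
    m ≤ 2 ^ j := by
  apply h.2
  refine ⟨by positivity, ?_⟩
  have : Nat.choose (2 ^ j + 1) 1 ≤ Nat.choose (2 ^ j + d) d := by
    rw [← Nat.choose_symm_add, ← Nat.choose_symm_add]
    exact Nat.choose_le_choose _ (by omega)
  simp at this
  omega
end Polynomial

theorem vcDim_ranges_RyG (b d : ℕ) (hb : 1 ≤ b) (hd : 1 ≤ d) :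
    ∃ C : ℝ, 0 < C ∧
      ∀ (k : ℕ), 1 ≤ k →
      ∀ D : ℝ, D = 2 ^ ((k : ℝ) / (d : ℝ)) → (2 : ℝ) ^ b ≤ D →
      -- identification of coefficient vectors with the polynomials of degree at most `b`
      ∀ ι : (Fin (Nat.choose (b + d) d) → ℝ) →ₗ[ℝ] MvPolynomial (Fin d) ℝ,
        Function.Injective ι →
        Set.range ι = {p : MvPolynomial (Fin d) ℝ | p.totalDegree ≤ b} →
      -- `Dj j` is the least positive integer with `binom(Dj j + d, d) > 2^{j-1}`
      ∀ Dj : Fin k → ℕ,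
        (∀ j : Fin k,
          IsLeast {m : ℕ | 0 < m ∧ 2 ^ (j : ℕ) < Nat.choose (m + d) d} (Dj j)) →
      -- the `2^{j-1}`-dimensional subspaces `𝕍_j` of polynomials of degree at most `Dj j`
      ∀ V : Fin k → Submodule ℝ (MvPolynomial (Fin d) ℝ),
        (∀ j, Module.finrank ℝ (V j) = 2 ^ (j : ℕ)) →
        (∀ j, ∀ p ∈ V j, p.totalDegree ≤ Dj j) →
      VCDimLE
        {r : Set (Fin b → Fin (Nat.choose (b + d) d) → ℝ) |
          ∃ (G : (Fin b → Prop) → Prop) (y : (j : Fin k) → V j),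
            r = {x : Fin b → Fin (Nat.choose (b + d) d) → ℝ |
              ({v : Fin d → ℝ | G fun i => 0 ≤ eval v (ι (x i))} ∩
               {u : Fin d → ℝ | ∀ j : Fin k,
                  0 < eval u ((y j : MvPolynomial (Fin d) ℝ))}).Nonempty}}
        (D ^ C) := by
  classical
  obtain ⟨K, hK⟩ := Polynomial.arith2 (12 ^ d * Polynomial.aexp (b * Nat.choose (b + d) d))
  refine ⟨(d : ℝ) * (K + 1), by positivity, ?_⟩
  intro k hk D hD hbD ι _ hι Dj hDj V _ hV A hA
  have hd0 : (0 : ℝ) < d := by exact_mod_cast hd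
  have hDC : D ^ ((d : ℝ) * (K + 1)) = (((2 ^ (k * (K + 1)) : ℕ)) : ℝ) := by
    rw [hD, ← Real.rpow_mul (by norm_num)]
    have : (k : ℝ) / d * (d * (K + 1)) = ((k * (K + 1) : ℕ) : ℝ) := by
      push_cast; field_simp
    rw [this, Real.rpow_natCast]
    push_cast; rfl
  rw [hDC]
  rcases A.eq_empty_or_nonempty with rfl | hne
  · simp
  have hbk : b ≤ k := by
    have h1 : (2 : ℝ) ^ (b : ℝ) ≤ 2 ^ ((k : ℝ) / d) := by rw [Real.rpow_natCast, ← hD]; exact hbD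
    have h2 := (Real.rpow_le_rpow_left_iff (by norm_num)).1 h1
    have h3 : (k : ℝ) / d ≤ k := div_le_self (by positivity) (by exact_mod_cast hd)
    exact_mod_cast h2.trans h3
  obtain ⟨t, ht⟩ : ∃ t, t = Nat.log 2 A.card := ⟨_, rfl⟩
  have hc0 : A.card ≠ 0 := hne.card_pos.ne'
  have t1 : 2 ^ t ≤ A.card := by rw [ht]; exact Nat.pow_log_le_self 2 hc0
  have t2 : A.card < 2 ^ (t + 1) := by rw [ht]; exact Nat.lt_pow_succ_log_self (by norm_num) _
  obtain ⟨f⟩ : Nonempty ((Fin t → Bool) ↪ A) := by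
    apply Function.Embedding.nonempty_of_card_le
    simpa using t1
  have hr : ∀ i : Fin t, ∃ (G : (Fin b → Prop) → Prop) (y : (j : Fin k) → V j), ∀ ω,
      ((∃ v, G (fun l => 0 ≤ eval v (ι ((f ω : Fin b → Fin (Nat.choose (b + d) d) → ℝ) l))) ∧
      ∀ j, 0 < eval v ((y j : MvPolynomial (Fin d) ℝ))) ↔ ω i = true) := by
    intro i
    let B : Finset (Fin b → Fin (Nat.choose (b + d) d) → ℝ) :=
      (Finset.univ.filter fun ω : Fin t → Bool => ω i = true).image fun ω => (f ω).1
    have hB : B ⊆ A := by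
      intro x hx
      simp only [B, Finset.mem_image] at hx
      obtain ⟨ω, _, rfl⟩ := hx
      exact (f ω).2
    obtain ⟨r, ⟨G, y, rfl⟩, h⟩ := hA B hB
    refine ⟨G, y, fun ω => ?_⟩
    have h1 : (f ω).1 ∈ B ↔ ω i = true := by
      simp only [B, Finset.mem_image, Finset.mem_filter, Finset.mem_univ, true_and]
      constructor
      · rintro ⟨ω', h1, h2⟩
        rw [← f.injective (Subtype.ext h2)]; exact h1
      · intro h; exact ⟨ω, h, rfl⟩
    rw [← h1, ← Finset.mem_coe, ← h]
    constructor
    · rintro ⟨v, h1, h2⟩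
      exact ⟨⟨v, h1, h2⟩, (f ω).2⟩
    · rintro ⟨⟨v, h1, h2⟩, _⟩
      exact ⟨v, h1, h2⟩
  choose G y hy using hr
  have hk2 : k < 2 ^ k := Nat.lt_two_pow_self
  have hmain := Polynomial.core b d t k (Nat.choose (b + d) d) ((t + 4) * 2 ^ k) (by nlinarith)
    (by nlinarith) (by nlinarith) ι
    (fun x => by
      have : ι x ∈ Set.range ι := ⟨x, rfl⟩
      rw [hι] at this; exact this)
    G (fun i j => y i j) (fun i j => by
      refine (hV j _ (y i j).2).trans ((Polynomial.Dj_le d j _ hd (hDj j)).trans ?_)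
      have : 2 ^ (j : ℕ) ≤ 2 ^ k := Nat.pow_le_pow_right (by norm_num) j.2.le
      nlinarith)
    (fun ω => (f ω).1) (fun ω i => hy i ω)
  have hfin := hK t k hk hmain
  have : A.card ≤ 2 ^ (k * (K + 1)) :=
    t2.le.trans (hfin.trans (Nat.pow_le_pow_right (by norm_num) (by nlinarith)))
  exact_mod_cast this
end

section
/- For every choice of positive integers b and d, there is a constant C = C(b,d) with the following property. Let C₀ be a positive integer, let S be a finite collection of semi-algebraic sets in ℝ^d, each of dimension at most r and complexity at most b, let k be a positive integer, and let D = 2^{k/d} with D ≥ 2^b. Fix any choice of the subspaces 𝕍_1,…,𝕍_k defining 𝕐_k. If B is a uniformly random subset of S of cardinality at least C·D^C, then with probability at least 1/2 the following holds: for every tuple (P_1,…,P_k) ∈ 𝕐_k that is a (k, D^{d−r}/C₀)-partitioning tuple for B, the realization of each of the 2^k realizable strict sign conditions of (P_1,…,P_k) intersects at most C·C₀·|S|·D^{r−d} elements of S. -/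
open MvPolynomial

/-- A set `S ⊆ ℝ^d` is semi-algebraic of complexity at most `b`. -/
def IsSemiAlgebraicOfComplexity (d b : ℕ) (S : Set (Fin d → ℝ)) : Prop :=
  ∃ (P : Fin b → MvPolynomial (Fin d) ℝ) (τ : Fin b → Bool) (φ : (Fin b → Prop) → Prop),
    (∀ i, (P i).totalDegree ≤ b) ∧
    S = {x | φ fun i => if τ i then eval x (P i) < 0 else eval x (P i) = 0}

/-- The realization, for `y = (P_1,…,P_k) ∈ 𝕐_k`, of the strict sign condition
`ν ∈ {−1,1}^k` (encoded by `Bool`, with `true ↦ +1`). -/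
def Realization {d k : ℕ} {V : Fin k → Submodule ℝ (MvPolynomial (Fin d) ℝ)}
    (y : (j : Fin k) → V j) (ν : Fin k → Bool) : Set (Fin d → ℝ) :=
  {u | ∀ j : Fin k, if ν j then 0 < eval u ((y j : MvPolynomial (Fin d) ℝ))
       else eval u ((y j : MvPolynomial (Fin d) ℝ)) < 0}

/-- `y = (P_1,…,P_k)` is a `(k,α)`-partitioning tuple for the finite family `B`: all `2^k`
strict sign conditions are realizable and the realization of each of them intersects at most
`|B|/α` sets from `B`. -/
def IsPartitioningTuple {d k : ℕ} {V : Fin k → Submodule ℝ (MvPolynomial (Fin d) ℝ)}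
    (y : (j : Fin k) → V j) (B : Finset (Set (Fin d → ℝ))) (α : ℝ) : Prop :=
  ∀ ν : Fin k → Bool, (Realization y ν).Nonempty ∧
    (Set.ncard {T | T ∈ B ∧ (T ∩ Realization y ν).Nonempty} : ℝ) ≤ (B.card : ℝ) / α

namespace EpsSamp

lemma aeval_totalDegree_le {σ τ : Type*} {m n : ℕ}
    (F : MvPolynomial σ ℝ) (hF : F.totalDegree ≤ m)
    (f : σ → MvPolynomial τ ℝ) (hf : ∀ i, (f i).totalDegree ≤ n) :
    (MvPolynomial.aeval f F).totalDegree ≤ m * n := by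
  rw [MvPolynomial.aeval_def, MvPolynomial.eval₂]
  apply MvPolynomial.totalDegree_finsetSum_le
  intro d hd
  refine (MvPolynomial.totalDegree_mul _ _).trans ?_
  have h1 : ((algebraMap ℝ (MvPolynomial τ ℝ)) (MvPolynomial.coeff d F)).totalDegree = 0 := by
    rw [MvPolynomial.algebraMap_eq, MvPolynomial.totalDegree_C]
  have h2 : (d.prod fun i k => f i ^ k).totalDegree ≤ m * n := by
    apply (MvPolynomial.totalDegree_finsetProd _ _).trans
    have : ∑ i ∈ d.support, (d i) * n ≤ m * n := by
      rw [← Finset.sum_mul]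
      apply mul_le_mul' (.trans _ hF) le_rfl
      rw [MvPolynomial.totalDegree]
      exact Finset.le_sup_of_le hd le_rfl
    apply (Finset.sum_le_sum _).trans this
    rintro i -
    apply (MvPolynomial.totalDegree_pow _ _).trans
    exact mul_le_mul' le_rfl (hf i)
  refine (Nat.add_le_add (le_of_eq h1) h2).trans (by simp)

lemma totalDegree_pderiv_le {σ : Type*} (i : σ) (p : MvPolynomial σ ℝ) :
    (pderiv i p).totalDegree ≤ p.totalDegree := by
  classical
  rw [MvPolynomial.totalDegree]
  apply Finset.sup_le
  intro m hm
  rw [MvPolynomial.mem_support_iff, coeff_pderiv] at hm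
  have h1 : coeff (m + Finsupp.single i 1) p ≠ 0 := left_ne_zero_of_mul hm
  have h2 := MvPolynomial.le_totalDegree (MvPolynomial.mem_support_iff.2 h1)
  refine le_trans ?_ h2
  rw [Finsupp.sum_add_index' (by simp) (by simp)]
  simp

/-- nonzero polynomials do not vanish on boxes -/
lemma exists_eval_ne_zero {σ : Type*} (p : MvPolynomial σ ℝ) (hp : p ≠ 0)
    (lo hi : σ → ℝ) (h : ∀ i, lo i < hi i) :
    ∃ x : σ → ℝ, (∀ i, lo i < x i ∧ x i < hi i) ∧ eval x p ≠ 0 := by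
  by_contra hc
  push Not at hc
  apply hp
  refine MvPolynomial.funext_set (fun i => Set.Ioo (lo i) (hi i)) (fun i => Set.Ioo_infinite (h i)) ?_
  intro x hx
  rw [hc x (fun i => hx i trivial)]
  simp

lemma hasDerivAt_eval {σ : Type*} [DecidableEq σ] (p : MvPolynomial σ ℝ) (x : σ → ℝ) (c : σ) :
    HasDerivAt (fun t => eval (Function.update x c t) p) (eval x (pderiv c p)) (x c) := by
  induction p using MvPolynomial.induction_on with
  | C a => simpa using hasDerivAt_const (x c) a
  | add p q hp hq => simpa using hp.fun_add hq
  | mul_X p i hp =>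
    have h2 : HasDerivAt (fun t => Function.update x c t i) (if i = c then 1 else 0) (x c) := by
      by_cases h : i = c
      · subst h; simpa using hasDerivAt_id' (x i)
      · simpa [h] using hasDerivAt_const (x c) (x i)
    have h3 := hp.fun_mul h2
    simp only [map_mul, eval_X, Derivation.leibniz, pderiv_X, smul_eq_mul, map_add]
    refine HasDerivAt.congr_deriv h3 ?_
    simp only [Function.update_eq_self]
    by_cases h : i = c
    · subst h; simp; ring
    · simp [h, Pi.single_apply]; ring

def PB (N δ : ℕ) : ℕ := ((N + 1) * δ) ^ (N + 1)

lemma perron {τ : Type*} [Fintype τ] (u : Option τ → MvPolynomial τ ℝ) (δ : ℕ) (hδ : 1 ≤ δ)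
    (hu : ∀ o, (u o).totalDegree ≤ δ) :
    ∃ h : MvPolynomial (Option τ) ℝ, h ≠ 0 ∧ aeval u h = 0 ∧
      h.totalDegree ≤ PB (Fintype.card τ) δ := by
  classical
  set N := Fintype.card τ with hN
  set A := ((N + 1) * δ) ^ N + 1 with hA
  set B := (N + 1) * (A - 1) * δ + 1 with hB
  let mon : (Option τ → Fin A) → (Option τ →₀ ℕ) := fun e => Finsupp.equivFunOnFinite.symm (fun o => (e o : ℕ))
  let mon' : (τ → Fin B) → (τ →₀ ℕ) := fun e => Finsupp.equivFunOnFinite.symm (fun o => (e o : ℕ))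
  have hmoninj : Function.Injective mon := by
    intro e e' h
    have := Finsupp.equivFunOnFinite.symm.injective h
    funext o
    exact Fin.ext (congrFun this o)
  let Φ : ((Option τ → Fin A) → ℝ) →ₗ[ℝ] MvPolynomial (Option τ) ℝ :=
    ∑ e : Option τ → Fin A, (MvPolynomial.monomial (mon e)).comp (LinearMap.proj e)
  have hΦ : ∀ c, Φ c = ∑ e : Option τ → Fin A, MvPolynomial.monomial (mon e) (c e) := by
    intro c; simp [Φ]
  have hΦc : ∀ c e, coeff (mon e) (Φ c) = c e := by
    intro c e
    rw [hΦ, MvPolynomial.coeff_sum, Finset.sum_eq_single e]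
    · simp
    · intro e' _ hne
      rw [MvPolynomial.coeff_monomial, if_neg (fun h => hne (hmoninj h))]
    · simp
  have hΦd : ∀ c, (Φ c).totalDegree ≤ (N + 1) * (A - 1) := by
    intro c
    rw [hΦ]
    apply MvPolynomial.totalDegree_finsetSum_le
    intro e _
    refine (MvPolynomial.totalDegree_monomial_le _ _).trans ?_
    rw [Finsupp.sum_fintype _ _ (by simp)]
    calc ∑ i, (mon e) i ≤ ∑ i : Option τ, (A - 1) := by
          apply Finset.sum_le_sum
          intro i _
          have := (e i).2
          simp only [mon, Finsupp.equivFunOnFinite_symm_apply_apply]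
          omega
      _ = (N + 1) * (A - 1) := by simp [hN]
  let Ψ : ((Option τ → Fin A) → ℝ) →ₗ[ℝ] ((τ → Fin B) → ℝ) :=
    LinearMap.pi (fun e' => (MvPolynomial.lcoeff ℝ (mon' e')).comp ((aeval u).toLinearMap.comp Φ))
  have hker : LinearMap.ker Ψ ≠ ⊥ := by
    apply LinearMap.ker_ne_bot_of_finrank_lt
    simp only [Module.finrank_fintype_fun_eq_card, Fintype.card_pi, Fintype.card_fin, Finset.prod_const, Finset.card_univ, Fintype.card_option, ← hN]
    have hB' : B ≤ ((N + 1) * δ) * A := by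
      have h1 : 1 ≤ (N+1) * δ := Nat.mul_pos (by omega) hδ
      have h2 : A = (A - 1) + 1 := by omega
      rw [hB]
      nlinarith
    calc B ^ N ≤ (((N + 1) * δ) * A) ^ N := Nat.pow_le_pow_left hB' N
      _ = ((N + 1) * δ)^N * A ^ N := by rw [mul_pow]
      _ < A * A ^ N := by
        apply Nat.mul_lt_mul_of_pos_right (by omega)
        apply Nat.pow_pos; omega
      _ = A ^ (N + 1) := by rw [pow_succ]; ring
  obtain ⟨c, hc, hc0⟩ := (Submodule.ne_bot_iff _).1 hker
  refine ⟨Φ c, ?_, ?_, ?_⟩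
  · intro h0
    apply hc0
    funext e
    rw [← hΦc c e, h0]; simp
  · ext m
    rw [MvPolynomial.coeff_zero]
    have hdeg : (aeval u (Φ c)).totalDegree ≤ (N + 1) * (A - 1) * δ := aeval_totalDegree_le _ (hΦd c) _ hu
    by_cases hm : ∀ i, m i < B
    · have := congrFun (LinearMap.mem_ker.1 hc) (fun i => ⟨m i, hm i⟩)
      have e1 : mon' (fun i => ⟨m i, hm i⟩) = m := by ext i; simp [mon']
      simpa [Ψ, e1] using this
    · push Not at hm
      obtain ⟨i, hi⟩ := hm
      apply MvPolynomial.coeff_eq_zero_of_totalDegree_lt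
      have hi0 : i ∈ m.support := by rw [Finsupp.mem_support_iff]; omega
      have : m i ≤ ∑ i ∈ m.support, m i := Finset.single_le_sum (f := fun i => m i) (by simp) hi0
      omega
  · refine (hΦd c).trans ?_
    rw [PB, pow_succ', hA, Nat.add_sub_cancel]
    apply Nat.mul_le_mul_right
    exact Nat.le_mul_of_pos_right _ hδ

lemma pderiv_eq_zero_of_extr {σ : Type*} [DecidableEq σ] (p : MvPolynomial σ ℝ) (x : σ → ℝ)
    (h : IsLocalExtr (fun y => eval y p) x) (c : σ) : eval x (pderiv c p) = 0 := by
  have h1 : IsLocalExtr (fun t => eval (Function.update x c t) p) (x c) := by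
    have hc : ContinuousAt (fun t => Function.update x c t) (x c) := by fun_prop
    have hx : Function.update x c (x c) = x := Function.update_eq_self c x
    have ht : Filter.Tendsto (fun t => Function.update x c t) (nhds (x c)) (nhds x) := by
      have := hc.tendsto; rwa [hx] at this
    rcases h with h | h
    · left
      have := ht.eventually h
      filter_upwards [this] with t ht'
      rw [hx]; exact ht'
    · right
      have := ht.eventually h
      filter_upwards [this] with t ht'
      rw [hx]; exact ht'
  exact h1.hasDerivAt_eq_zero (hasDerivAt_eval p x c)

/-- A bounded open set on whose boundary `F` vanishes contains a solution of `∇F = w`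
for all small `w`. -/
lemma exists_crit {σ : Type*} [Fintype σ] (F : MvPolynomial σ ℝ) (U : Set (σ → ℝ))
    (hU : IsOpen U) (ρ : ℝ) (hρ : 0 < ρ) (hb : ∀ y ∈ U, ∀ c, |y c| ≤ ρ)
    (y0 : σ → ℝ) (hy0 : y0 ∈ U) (hF : eval y0 F ≠ 0)
    (hbd : ∀ y ∈ closure U, y ∉ U → eval y F = 0) :
    ∃ η > 0, ∀ w : σ → ℝ, (∀ c, |w c| < η) → ∃ y ∈ U, ∀ c, eval y (pderiv c F) = w c := by
  classical
  set n : ℝ := (Fintype.card σ : ℝ) with hn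
  have hn0 : 0 ≤ n := by positivity
  set η := |eval y0 F| / (2 * (n + 1) * ρ) with hη
  have hηpos : 0 < η := by have := abs_pos.2 hF; positivity
  refine ⟨η, hηpos, ?_⟩
  intro w hw
  have hcl : ∀ y ∈ closure U, ∀ c, |y c| ≤ ρ := by
    intro y hy c
    have : closure U ⊆ {y : σ → ℝ | |y c| ≤ ρ} :=
      closure_minimal (fun y hy => hb y hy c) (isClosed_le (by fun_prop) continuous_const)
    exact this hy
  have hcomp : IsCompact (closure U) := by
    apply Metric.isCompact_of_isClosed_isBounded isClosed_closure
    apply (Metric.isBounded_closedBall (x := (0 : σ → ℝ)) (r := ρ)).subset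
    intro y hy
    rw [mem_closedBall_zero_iff, pi_norm_le_iff_of_nonneg hρ.le]
    exact hcl y hy
  let P : MvPolynomial σ ℝ := F - ∑ c, C (w c) * X c
  have hPe : ∀ y, eval y P = eval y F - ∑ c, w c * y c := by intro y; simp [P]
  have hPd : ∀ y c, eval y (pderiv c P) = eval y (pderiv c F) - w c := by
    intro y c
    simp only [P, map_sub, map_sum, pderiv_C_mul, pderiv_X, map_mul, eval_C]
    congr 1
    rw [Finset.sum_eq_single c]
    · simp
    · intro e _ he; simp [Pi.single_apply, he.symm]
    · simp
  have hlin : ∀ y ∈ closure U, |∑ c, w c * y c| < |eval y0 F| / 2 := by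
    intro y hy
    calc |∑ c, w c * y c| ≤ ∑ c, |w c * y c| := Finset.abs_sum_le_sum_abs _ _
      _ ≤ ∑ c : σ, η * ρ := by
        apply Finset.sum_le_sum
        intro c _
        rw [abs_mul]
        exact mul_le_mul (hw c).le (hcl y hy c) (abs_nonneg _) hηpos.le
      _ = n * (η * ρ) := by simp [hn]
      _ < (n + 1) * (η * ρ) := by nlinarith [mul_pos hηpos hρ]
      _ = |eval y0 F| / 2 := by rw [hη]; field_simp
  have hy0c : y0 ∈ closure U := subset_closure hy0
  have hcont : Continuous (fun y => eval y P) := MvPolynomial.continuous_eval P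
  have key : ∃ y ∈ U, IsLocalExtr (fun y => eval y P) y := by
    rcases lt_or_gt_of_ne hF with hneg | hpos
    · obtain ⟨y, hy, hmin⟩ := hcomp.exists_isMinOn ⟨y0, hy0c⟩ hcont.continuousOn
      have hyU : y ∈ U := by
        by_contra hyn
        have h1 := hmin hy0c
        simp only [Set.mem_setOf_eq, hPe, hbd y hy hyn] at h1
        have h2 := abs_lt.1 (hlin y hy)
        have h3 := abs_lt.1 (hlin y0 hy0c)
        rw [abs_of_neg hneg] at h2 h3
        linarith [h2.1, h2.2, h3.1, h3.2]
      exact ⟨y, hyU, Or.inl (Filter.eventually_of_mem (hU.mem_nhds hyU) (fun z hz => hmin (subset_closure hz)))⟩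
    · obtain ⟨y, hy, hmin⟩ := hcomp.exists_isMaxOn ⟨y0, hy0c⟩ hcont.continuousOn
      have hyU : y ∈ U := by
        by_contra hyn
        have h1 := hmin hy0c
        simp only [Set.mem_setOf_eq, hPe, hbd y hy hyn] at h1
        have h2 := abs_lt.1 (hlin y hy)
        have h3 := abs_lt.1 (hlin y0 hy0c)
        rw [abs_of_pos hpos] at h2 h3
        linarith [h2.1, h2.2, h3.1, h3.2]
      exact ⟨y, hyU, Or.inr (Filter.eventually_of_mem (hU.mem_nhds hyU) (fun z hz => hmin (subset_closure hz)))⟩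
  obtain ⟨y, hyU, hext⟩ := key
  refine ⟨y, hyU, fun c => ?_⟩
  have := pderiv_eq_zero_of_extr P y hext c
  rw [hPd] at this
  linarith

lemma comp_count {σ A : Type*} [Fintype σ] [Fintype A] (F : MvPolynomial σ ℝ) (δ : ℕ) (hδ : 1 ≤ δ)
    (hFδ : F.totalDegree ≤ δ) (U : A → Set (σ → ℝ)) (hU : ∀ a, IsOpen (U a)) (ρ : ℝ) (hρ : 0 < ρ)
    (hb : ∀ a, ∀ y ∈ U a, ∀ c, |y c| ≤ ρ)
    (hne : ∀ a, ∃ y ∈ U a, eval y F ≠ 0)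
    (hbd : ∀ a, ∀ y ∈ closure (U a), y ∉ U a → eval y F = 0)
    (hdisj : ∀ a a' y, y ∈ U a → y ∈ U a' → a = a') :
    Fintype.card A ≤ PB (Fintype.card σ) δ ^ (Fintype.card σ) := by
  classical
  have h1 : ∀ a, ∃ η > 0, ∀ w : σ → ℝ, (∀ c, |w c| < η) → ∃ y ∈ U a, ∀ c, eval y (pderiv c F) = w c := by
    intro a
    obtain ⟨y0, hy0, hF⟩ := hne a
    exact exists_crit F (U a) (hU a) ρ hρ (hb a) y0 hy0 hF (hbd a)
  choose η hη hsol using h1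
  obtain ⟨η0, hη0, hη0le⟩ : ∃ η0 > 0, ∀ a, η0 ≤ η a := by
    rcases isEmpty_or_nonempty A with hA | hA
    · exact ⟨1, one_pos, fun a => (hA.false a).elim⟩
    · obtain ⟨a, ha⟩ := Finite.exists_min η
      exact ⟨η a, hη a, ha⟩
  have h2 : ∀ c : σ, ∃ h : MvPolynomial (Option σ) ℝ, h ≠ 0 ∧
      aeval (fun o : Option σ => o.elim (X c) (fun e => pderiv e F)) h = 0 ∧
      h.totalDegree ≤ PB (Fintype.card σ) δ := by
    intro c
    apply perron _ δ hδ
    intro o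
    cases o with
    | none => simpa using hδ
    | some e => exact (totalDegree_pderiv_le e F).trans hFδ
  choose Q hQ0 hQ hQd using h2
  obtain ⟨z, hz, hzne⟩ := exists_eval_ne_zero (∏ c, Q c) (Finset.prod_ne_zero_iff.2 fun c _ => hQ0 c)
    (fun _ => -η0) (fun _ => η0) (fun _ => by linarith)
  rw [map_prod, Finset.prod_ne_zero_iff] at hzne
  let w : σ → ℝ := fun c => z (some c)
  have hw : ∀ a, ∀ c, |w c| < η a := fun a c => lt_of_lt_of_le (abs_lt.2 (hz (some c))) (hη0le a)
  choose y hyU hy using fun a => hsol a w (hw a)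
  let q : σ → Polynomial ℝ := fun c =>
    aeval (fun o : Option σ => o.elim Polynomial.X (fun e => Polynomial.C (w e))) (Q c)
  have hqe : ∀ c t, (q c).eval t = eval (fun o : Option σ => o.elim t w) (Q c) := by
    intro c t
    have : (Polynomial.aeval t) (q c) = aeval (fun o : Option σ => o.elim t w) (Q c) := by
      simp only [q]
      rw [← AlgHom.comp_apply]
      congr 1
      apply MvPolynomial.algHom_ext
      intro o
      cases o <;> simp
    simpa [Polynomial.coe_aeval_eq_eval, MvPolynomial.coe_aeval_eq_eval] using this
  have hq0 : ∀ c, q c ≠ 0 := by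
    intro c h0
    apply hzne c (Finset.mem_univ c)
    have := hqe c (z none)
    rw [h0, Polynomial.eval_zero] at this
    rw [this]
    congr 2
    funext o
    cases o <;> rfl
  have hqd : ∀ c, (q c).natDegree ≤ PB (Fintype.card σ) δ := by
    intro c
    have := MvPolynomial.aeval_natDegree_le (n := 1) (Q c) (hQd c)
      (fun o : Option σ => o.elim Polynomial.X (fun e => Polynomial.C (w e))) (by
        intro o; cases o <;> simp)
    simpa using this
  have hroot : ∀ a c, y a c ∈ (q c).roots.toFinset := by
    intro a c
    rw [Multiset.mem_toFinset, Polynomial.mem_roots (hq0 c), Polynomial.IsRoot, hqe]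
    have h3 : eval (y a) (aeval (fun o : Option σ => o.elim (X c) (fun e => pderiv e F)) (Q c)) = 0 := by
      rw [hQ c]; simp
    rw [← h3, ← MvPolynomial.coe_aeval_eq_eval (y a), ← MvPolynomial.coe_aeval_eq_eval]
    simp only [RingHom.coe_coe]
    rw [← AlgHom.comp_apply]
    congr 1
    apply MvPolynomial.algHom_ext
    intro o
    cases o with
    | none => simp
    | some e => simp [MvPolynomial.aeval_eq_eval, hy a e]
  let f : A → ((c : σ) → (q c).roots.toFinset) := fun a c => ⟨y a c, hroot a c⟩
  have hf : Function.Injective f := by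
    intro a a' h
    have : y a = y a' := by
      funext c
      exact congrArg Subtype.val (congrFun h c)
    exact hdisj a a' (y a) (hyU a) (this ▸ hyU a')
  calc Fintype.card A ≤ Fintype.card ((c : σ) → (q c).roots.toFinset) := Fintype.card_le_of_injective f hf
    _ = ∏ c, (q c).roots.toFinset.card := by simp [Fintype.card_pi]
    _ ≤ ∏ c : σ, PB (Fintype.card σ) δ := by
      apply Finset.prod_le_prod' 
      intro c _
      exact (Multiset.toFinset_card_le _).trans ((Polynomial.card_roots' _).trans (hqd c))
    _ = _ := by simp

set_option maxHeartbeats 1600000 in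
lemma single_pattern {σ Λ A : Type*} [Fintype σ] [Fintype Λ] [Fintype A] {d : ℕ}
    (f : Λ → MvPolynomial (σ ⊕ Fin d) ℝ) (δ : ℕ)
    (hdeg : ∑ l, (f l).totalDegree ≤ δ) (R : ℝ) (hR0 : 0 < R)
    (hR : ∀ y x, (∀ l, 0 ≤ eval (Sum.elim y x) (f l)) → ∀ e, |x e| ≤ R)
    (Y : A → σ → ℝ) (pat : A → Prop)
    (hpos : ∀ a, pat a → ∃ x, ∀ l, 0 < eval (Sum.elim (Y a) x) (f l))
    (hneg : ∀ a, ¬ pat a → ∀ x, ¬ ∀ l, 0 ≤ eval (Sum.elim (Y a) x) (f l)) :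
    ∃ (H : MvPolynomial σ ℝ) (Q : (σ → ℝ) → Prop), H ≠ 0 ∧
      H.totalDegree ≤ PB (Fintype.card σ + d) (δ + 1) ∧
      (∀ y, eval y H ≠ 0 → ∀ᶠ y' in nhds y, (Q y' ↔ Q y)) ∧
      (∀ a, ∀ᶠ y' in nhds (Y a), (Q y' ↔ pat a)) := by
  classical
  let G : MvPolynomial (σ ⊕ Fin d) ℝ := ∏ l, f l
  have hGd : G.totalDegree ≤ δ := (totalDegree_finsetProd _ _).trans hdeg
  have hGe : ∀ z, eval z G = ∏ l, eval z (f l) := by intro z; simp [G]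
  let u : Option (σ ⊕ Fin d) → MvPolynomial (σ ⊕ Fin d) ℝ := fun o => o.elim
    (G - ∑ e, X (Sum.inr e) * pderiv (Sum.inr e) G)
    (fun s => Sum.elim (fun c => X (Sum.inl c)) (fun e => pderiv (Sum.inr e) G) s)
  have hud : ∀ o, (u o).totalDegree ≤ δ + 1 := by
    intro o
    rcases o with _ | c | e
    · simp only [u, Option.elim]
      refine (totalDegree_sub _ _).trans (max_le (by omega) ?_)
      apply totalDegree_finsetSum_le
      intro e _
      refine (totalDegree_mul _ _).trans ?_
      have := totalDegree_pderiv_le (Sum.inr e) G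
      rw [totalDegree_X]
      omega
    · simp [u]
    · exact (totalDegree_pderiv_le _ G).trans (by omega)
  obtain ⟨h, hh0, hh, hhd⟩ := perron u (δ + 1) (by omega) hud
  rw [Fintype.card_sum, Fintype.card_fin] at hhd
  choose! xw hxw using hpos
  obtain ⟨η, hη, hηle⟩ : ∃ η > 0, ∀ a, pat a → η ≤ eval (Sum.elim (Y a) (xw a)) G := by
    have hp : ∀ a, pat a → 0 < eval (Sum.elim (Y a) (xw a)) G := by
      intro a ha
      rw [hGe]
      exact Finset.prod_pos (fun l _ => hxw a ha l)
    rcases isEmpty_or_nonempty A with hA | hA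
    · exact ⟨1, one_pos, fun a => (hA.false a).elim⟩
    · obtain ⟨a, ha⟩ := Finite.exists_min
        (fun a => if pat a then eval (Sum.elim (Y a) (xw a)) G else 1)
      refine ⟨_, ?_, fun a' ha' => (ha a').trans (by simp [ha'])⟩
      split_ifs with h
      · exact hp a h
      · exact one_pos
  set κ : ℝ := η / (4 * ((d : ℝ) + 1) * R) with hκ
  have hκpos : 0 < κ := by positivity
  obtain ⟨z, hz, hzne⟩ := exists_eval_ne_zero h hh0
    (fun o => o.elim (η / 3) (fun s => Sum.elim (fun _ => 0) (fun _ => 0) s))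
    (fun o => o.elim (η / 2) (fun s => Sum.elim (fun _ => 1) (fun _ => κ) s))
    (by
      intro o
      rcases o with _ | c | e
      · simp; linarith
      · simp
      · simpa using hκpos)
  let w : Fin d → ℝ := fun e => z (some (Sum.inr e))
  let θ : ℝ := z none
  have hθ : η / 3 < θ ∧ θ < η / 2 := hz none
  have hw : ∀ e, 0 < w e ∧ w e < κ := fun e => hz (some (Sum.inr e))
  have hlin : ∀ x : Fin d → ℝ, (∀ e, |x e| ≤ R) → |∑ e, w e * x e| < η / 4 := by
    intro x hx
    calc |∑ e, w e * x e| ≤ ∑ e, |w e * x e| := Finset.abs_sum_le_sum_abs _ _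
      _ ≤ ∑ e : Fin d, κ * R := by
        apply Finset.sum_le_sum
        intro c _
        rw [abs_mul, abs_of_pos (hw c).1]
        exact mul_le_mul (hw c).2.le (hx c) (abs_nonneg _) hκpos.le
      _ = d * (κ * R) := by simp
      _ < (d + 1) * (κ * R) := by nlinarith [mul_pos hκpos hR0]
      _ = η / 4 := by rw [hκ]; field_simp
  let ψ : (σ → ℝ) → (Fin d → ℝ) → ℝ := fun y x => eval (Sum.elim y x) G - ∑ e, w e * x e
  have hce : ∀ p : MvPolynomial (σ ⊕ Fin d) ℝ,
      Continuous (fun t : (σ → ℝ) × (Fin d → ℝ) => eval (Sum.elim t.1 t.2) p) := by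
    intro p
    refine (MvPolynomial.continuous_eval p).comp (continuous_pi ?_)
    rintro (c | e)
    · simp only [Sum.elim_inl]; fun_prop
    · simp only [Sum.elim_inr]; fun_prop
  have hcψ : Continuous (fun t : (σ → ℝ) × (Fin d → ℝ) => ψ t.1 t.2) := by
    apply (hce G).sub
    fun_prop
  let Q : (σ → ℝ) → Prop := fun y => ∃ x, (∀ l, 0 < eval (Sum.elim y x) (f l)) ∧ θ < ψ y x
  have hQopen : ∀ y, Q y → ∀ᶠ y' in nhds y, Q y' := by
    rintro y ⟨x, hx, hxθ⟩
    have hcx : Continuous (fun y' : σ → ℝ => (y', x)) := by fun_prop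
    have e1 : ∀ᶠ y' in nhds y, ∀ l, 0 < eval (Sum.elim y' x) (f l) := by
      rw [Filter.eventually_all]
      intro l
      exact ((hce (f l)).comp hcx).continuousAt.eventually (lt_mem_nhds (hx l))
    have e2 : ∀ᶠ y' in nhds y, θ < ψ y' x :=
      (hcψ.comp hcx).continuousAt.eventually (lt_mem_nhds hxθ)
    filter_upwards [e1, e2] with y' h1 h2 using ⟨x, h1, h2⟩
  have hQnot : ∀ y, (∀ x, ¬ ((∀ l, 0 ≤ eval (Sum.elim y x) (f l)) ∧ θ ≤ ψ y x)) →
      ∀ᶠ y' in nhds y, ¬ Q y' := by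
    intro y hy
    have hK : IsCompact (Metric.closedBall (0 : Fin d → ℝ) R) := isCompact_closedBall _ _
    have := hK.eventually_forall_of_forall_eventually (x₀ := y)
      (P := fun y x => ¬ ((∀ l, 0 ≤ eval (Sum.elim y x) (f l)) ∧ θ ≤ ψ y x)) (by
        intro x _
        have hcl : IsClosed {t : (σ → ℝ) × (Fin d → ℝ) | (∀ l, 0 ≤ eval (Sum.elim t.1 t.2) (f l)) ∧ θ ≤ ψ t.1 t.2} := by
          apply IsClosed.inter
          · have : {t : (σ → ℝ) × (Fin d → ℝ) | ∀ l, 0 ≤ eval (Sum.elim t.1 t.2) (f l)} =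
              ⋂ l, {t : (σ → ℝ) × (Fin d → ℝ) | 0 ≤ eval (Sum.elim t.1 t.2) (f l)} := by
              ext t; simp
            show IsClosed {t : (σ → ℝ) × (Fin d → ℝ) | ∀ l, 0 ≤ eval (Sum.elim t.1 t.2) (f l)}
            rw [this]
            exact isClosed_iInter fun l => isClosed_le continuous_const (hce (f l))
          · exact isClosed_le continuous_const hcψ
        exact hcl.isOpen_compl.mem_nhds (hy x))
    filter_upwards [this] with y' hy'
    rintro ⟨x, hx, hxθ⟩
    refine hy' x ?_ ⟨fun l => (hx l).le, hxθ.le⟩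
    rw [mem_closedBall_zero_iff, pi_norm_le_iff_of_nonneg hR0.le]
    exact hR y' x (fun l => (hx l).le)
  let v : Option (σ ⊕ Fin d) → MvPolynomial σ ℝ := fun o => o.elim (C θ)
    (fun s => Sum.elim (fun c => X c) (fun e => C (w e)) s)
  let H : MvPolynomial σ ℝ := aeval v h
  have hHe : ∀ y, eval y H = eval (fun o : Option (σ ⊕ Fin d) => o.elim θ (Sum.elim y w)) h := by
    intro y
    have : (aeval y) H = aeval (fun o : Option (σ ⊕ Fin d) => o.elim θ (Sum.elim y w)) h := by
      simp only [H]
      rw [← AlgHom.comp_apply]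
      congr 1
      apply MvPolynomial.algHom_ext
      intro o
      rcases o with _ | c | e <;> simp [v]
    simpa [MvPolynomial.aeval_eq_eval] using this
  have hHcrit : ∀ y x, (∀ e, eval (Sum.elim y x) (pderiv (Sum.inr e) G) = w e) → ψ y x = θ →
      eval y H = 0 := by
    intro y x h1 h2
    have h3 : eval (Sum.elim y x) (aeval u h) = 0 := by rw [hh]; simp
    rw [hHe, ← h3, ← MvPolynomial.aeval_eq_eval, ← MvPolynomial.aeval_eq_eval]
    rw [← AlgHom.comp_apply]
    congr 1
    apply MvPolynomial.algHom_ext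
    intro o
    rcases o with _ | c | e
    · simp only [aeval_X, Option.elim, AlgHom.comp_apply, u, MvPolynomial.aeval_eq_eval, RingHom.coe_coe, map_sub, map_sum, map_mul, eval_X, Sum.elim_inr, h1]
      rw [← h2]
      simp only [ψ, mul_comm]
    · simp [u]
    · simp [u, MvPolynomial.aeval_eq_eval, h1]
  refine ⟨H, Q, ?_, ?_, ?_, ?_⟩
  · intro h0
    apply hzne
    have := hHe (fun c => z (some (Sum.inl c)))
    rw [h0, map_zero] at this
    rw [this]
    congr 2
    funext o
    rcases o with _ | c | e <;> rfl
  · have := aeval_totalDegree_le (n := 1) h hhd v (by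
      intro o
      rcases o with _ | c | e <;> simp [v])
    rw [mul_one] at this
    exact this
  · intro y hy
    by_cases hQ : Q y
    · filter_upwards [hQopen y hQ] with y' h'
      simp [hQ, h']
    · have : ∀ᶠ y' in nhds y, ¬ Q y' := by
        apply hQnot
        rintro x ⟨hx, hxθ⟩
        have hxR := hR y x hx
        have hG : 0 < eval (Sum.elim y x) G := by
          have := abs_lt.1 (hlin x hxR)
          simp only [ψ] at hxθ
          linarith [this.1, hθ.1]
        have hx' : ∀ l, 0 < eval (Sum.elim y x) (f l) := by
          intro l
          refine lt_of_le_of_ne (hx l) ?_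
          intro h0
          rw [hGe, Finset.prod_eq_zero (Finset.mem_univ l) h0.symm] at hG
          exact lt_irrefl _ hG
        have hψ : ψ y x = θ := by
          by_contra hne
          exact hQ ⟨x, hx', lt_of_le_of_ne hxθ (Ne.symm hne)⟩
        apply hy
        refine hHcrit y x ?_ hψ
        have hcy : Continuous (fun x' : Fin d → ℝ => (y, x')) := by fun_prop
        have e1 : ∀ᶠ x' in nhds x, ∀ l, 0 < eval (Sum.elim y x') (f l) := by
          rw [Filter.eventually_all]
          intro l
          exact ((hce (f l)).comp hcy).continuousAt.eventually (lt_mem_nhds (hx' l))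
        have e2 : ∀ᶠ x' in nhds x, ψ y x' ≤ ψ y x := by
          filter_upwards [e1] with x' h'
          rw [hψ]
          by_contra hc
          exact hQ ⟨x', h', not_le.1 hc⟩
        -- polynomial in x only
        let P : MvPolynomial (Fin d) ℝ :=
          aeval (fun s : σ ⊕ Fin d => Sum.elim (fun c => C (y c)) (fun e => X e) s) G - ∑ e, C (w e) * X e
        have haev : ∀ (p : MvPolynomial (σ ⊕ Fin d) ℝ) x', eval x' (aeval (fun s : σ ⊕ Fin d => Sum.elim (fun c => C (y c)) (fun e => X e) s) p : MvPolynomial (Fin d) ℝ) = eval (Sum.elim y x') p := by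
          intro p x'
          rw [← MvPolynomial.aeval_eq_eval, ← MvPolynomial.aeval_eq_eval]
          rw [← AlgHom.comp_apply]
          congr 1
          apply MvPolynomial.algHom_ext
          intro o
          rcases o with c | e <;> simp
        have hPe : ∀ x', eval x' P = ψ y x' := by
          intro x'
          simp only [P, map_sub, haev, ψ]
          simp
        have hext : IsLocalExtr (fun x' => eval x' P) x := by
          right
          filter_upwards [e2] with x' h'
          rw [hPe, hPe]; exact h'
        intro e
        have h5 := pderiv_eq_zero_of_extr P x hext e
        have h6 : pderiv e (aeval (fun s : σ ⊕ Fin d => Sum.elim (fun c => C (y c)) (fun e => X e) s) G : MvPolynomial (Fin d) ℝ) = aeval (fun s : σ ⊕ Fin d => Sum.elim (fun c => C (y c)) (fun e => X e) s) (pderiv (Sum.inr e) G) := by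
          generalize G = p
          induction p using MvPolynomial.induction_on with
          | C a => simp
          | add p q hp hq => simp only [map_add, hp, hq]
          | mul_X p i hp =>
            rw [map_mul, Derivation.leibniz, Derivation.leibniz, map_add, smul_eq_mul, smul_eq_mul, smul_eq_mul, smul_eq_mul, map_mul, map_mul, hp]
            congr 2
            rcases i with c | e'
            · simp
            · by_cases he : e' = e
              · subst he; simp
              · simp [he, pderiv_X_of_ne]
        simp only [P, map_sub, h6, haev, map_sum, pderiv_C_mul, pderiv_X, map_mul, eval_C] at h5
        rw [Finset.sum_eq_single e] at h5
        · simp at h5; linarith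
        · intro e' _ he; simp [he.symm]
        · simp
      filter_upwards [this] with y' h'
      simp [hQ, h']
  · intro a
    by_cases ha : pat a
    · have hQ : Q (Y a) := by
        refine ⟨xw a, hxw a ha, ?_⟩
        have h1 := abs_lt.1 (hlin (xw a) (hR _ _ (fun l => (hxw a ha l).le)))
        have h2 := hηle a ha
        simp only [ψ]
        linarith [h1.2, hθ.2]
      filter_upwards [hQopen _ hQ] with y' h'
      simp [ha, h']
    · have := hQnot (Y a) (fun x hx => hneg a ha x hx.1)
      filter_upwards [this] with y' h'
      simp [ha, h']

lemma pattern_count {σ I Λ A : Type*} [Fintype σ] [Fintype I] [Fintype Λ] [Fintype A] {d : ℕ}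
    (f : I → Λ → MvPolynomial (σ ⊕ Fin d) ℝ) (δ : ℕ)
    (hdeg : ∀ i, ∑ l, (f i l).totalDegree ≤ δ) (R : ℝ) (hR0 : 0 < R)
    (hR : ∀ i y x, (∀ l, 0 ≤ eval (Sum.elim y x) (f i l)) → ∀ e, |x e| ≤ R)
    (Y : A → σ → ℝ) (pat : A → I → Prop) (hinj : Function.Injective pat)
    (hpos : ∀ a i, pat a i → ∃ x, ∀ l, 0 < eval (Sum.elim (Y a) x) (f i l))
    (hneg : ∀ a i, ¬ pat a i → ∀ x, ¬ ∀ l, 0 ≤ eval (Sum.elim (Y a) x) (f i l)) :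
    Fintype.card A ≤ PB (Fintype.card σ)
      (Fintype.card I * PB (Fintype.card σ + d) (δ + 1) + 2) ^ (Fintype.card σ) := by
  classical
  have h1 := fun i => single_pattern (f i) δ (hdeg i) R hR0 (hR i) Y (fun a => pat a i)
    (fun a => hpos a i) (fun a => hneg a i)
  choose H Q hH0 hHd hHQ hQY using h1
  set ρ : ℝ := 1 + ∑ a, ∑ c, (Y a c) ^ 2 with hρ
  have hρ1 : 1 ≤ ρ := by
    have : 0 ≤ ∑ a, ∑ c, (Y a c) ^ 2 := by positivity
    linarith
  have hYρ : ∀ a, ∑ c, (Y a c) ^ 2 < ρ := by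
    intro a
    have : ∑ c, (Y a c) ^ 2 ≤ ∑ a, ∑ c, (Y a c) ^ 2 :=
      Finset.single_le_sum (f := fun a => ∑ c, (Y a c) ^ 2) (fun a _ => by positivity) (Finset.mem_univ a)
    linarith
  let N : MvPolynomial σ ℝ := C ρ - ∑ c, X c ^ 2
  have hNe : ∀ y, eval y N = ρ - ∑ c, y c ^ 2 := by intro y; simp [N]
  have hN0 : N ≠ 0 := by
    intro h0
    have := hNe 0
    rw [h0] at this
    simp at this
    linarith
  let F : MvPolynomial σ ℝ := (∏ i, H i) * N
  have hF0 : F ≠ 0 := mul_ne_zero (Finset.prod_ne_zero_iff.2 fun i _ => hH0 i) hN0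
  have hFe : ∀ y, eval y F ≠ 0 → (∀ i, eval y (H i) ≠ 0) ∧ ∑ c, y c ^ 2 ≠ ρ := by
    intro y hy
    simp only [F, map_mul, map_prod, hNe] at hy
    refine ⟨fun i => ?_, fun h => ?_⟩
    · exact Finset.prod_ne_zero_iff.1 (left_ne_zero_of_mul hy) i (Finset.mem_univ i)
    · exact right_ne_zero_of_mul hy (by rw [h]; ring)
  have hFd : F.totalDegree ≤ Fintype.card I * PB (Fintype.card σ + d) (δ + 1) + 2 := by
    refine (totalDegree_mul _ _).trans (Nat.add_le_add ?_ ?_)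
    · refine (totalDegree_finsetProd _ _).trans ((Finset.sum_le_sum fun i _ => hHd i).trans ?_)
      simp
    · refine (totalDegree_sub _ _).trans (max_le (by simp) ?_)
      apply totalDegree_finsetSum_le
      intro c _
      simp
  have hcs : Continuous (fun y : σ → ℝ => ∑ c, y c ^ 2) := by fun_prop
  have hcF : Continuous (fun y : σ → ℝ => eval y F) := MvPolynomial.continuous_eval F
  let U : A → Set (σ → ℝ) := fun a => {y | eval y F ≠ 0 ∧ ∑ c, y c ^ 2 < ρ ∧ ∀ i, (Q i y ↔ pat a i)}
  refine comp_count F _ (by omega) hFd U ?_ ρ (by linarith) ?_ ?_ ?_ ?_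
  · intro a
    rw [isOpen_iff_mem_nhds]
    rintro y ⟨hy1, hy2, hy3⟩
    have e1 : ∀ᶠ y' in nhds y, eval y' F ≠ 0 := hcF.continuousAt.eventually_ne hy1
    have e2 : ∀ᶠ y' in nhds y, ∑ c, y' c ^ 2 < ρ := hcs.continuousAt.eventually (gt_mem_nhds hy2)
    have e3 : ∀ᶠ y' in nhds y, ∀ i, (Q i y' ↔ Q i y) := by
      rw [Filter.eventually_all]
      exact fun i => hHQ i y ((hFe y hy1).1 i)
    filter_upwards [e1, e2, e3] with y' h1 h2 h3
    exact ⟨h1, h2, fun i => (h3 i).trans (hy3 i)⟩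
  · rintro a y ⟨_, hy, _⟩ c
    apply abs_le_of_sq_le_sq _ (by linarith)
    have : y c ^ 2 ≤ ∑ c, y c ^ 2 := Finset.single_le_sum (f := fun c => y c ^ 2) (fun c _ => by positivity) (Finset.mem_univ c)
    nlinarith
  · intro a
    have e2 : ∀ᶠ y' in nhds (Y a), ∑ c, y' c ^ 2 < ρ := hcs.continuousAt.eventually (gt_mem_nhds (hYρ a))
    have e3 : ∀ᶠ y' in nhds (Y a), ∀ i, (Q i y' ↔ pat a i) := by
      rw [Filter.eventually_all]
      exact fun i => hQY i a
    obtain ⟨r, hr, hball⟩ := Metric.eventually_nhds_iff.1 (e2.and e3)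
    obtain ⟨y, hy, hyF⟩ := exists_eval_ne_zero F hF0 (fun c => Y a c - r / 2) (fun c => Y a c + r / 2)
      (fun c => by linarith)
    have hd : dist y (Y a) < r := by
      rw [dist_pi_lt_iff hr]
      intro c
      rw [Real.dist_eq, abs_lt]
      constructor <;> linarith [(hy c).1, (hy c).2]
    exact ⟨y, ⟨hyF, hball hd⟩, hyF⟩
  · intro a y hy hyU
    by_contra hyF
    apply hyU
    have hle : ∑ c, y c ^ 2 ≤ ρ := by
      have : closure (U a) ⊆ {y | ∑ c, y c ^ 2 ≤ ρ} :=
        closure_minimal (fun y hy => hy.2.1.le) (isClosed_le hcs continuous_const)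
      exact this hy
    refine ⟨hyF, lt_of_le_of_ne hle (hFe y hyF).2, fun i => ?_⟩
    have hfr := mem_closure_iff_frequently.1 hy
    obtain ⟨y', hy', h'⟩ := (hfr.and_eventually (hHQ i y ((hFe y hyF).1 i))).exists
    exact h'.symm.trans (hy'.2.2 i)
  · rintro a a' y ⟨_, _, h⟩ ⟨_, _, h'⟩
    apply hinj
    funext i
    exact propext ((h i).symm.trans (h' i))

lemma eventually_small {c : ℝ} (hc : 0 < c) : ∀ᶠ ε in nhdsWithin (0 : ℝ) (Set.Ioi 0), ε < c :=
  (gt_mem_nhds hc : ∀ᶠ ε in nhds (0 : ℝ), ε < c).filter_mono nhdsWithin_le_nhds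

lemma exists_small {p : ℝ → Prop} (h : ∀ᶠ ε in nhdsWithin (0 : ℝ) (Set.Ioi 0), p ε) :
    ∃ ε > 0, p ε := by
  obtain ⟨ε, h1, h2⟩ := (h.and (self_mem_nhdsWithin : Set.Ioi (0:ℝ) ∈ _)).exists
  exact ⟨ε, h2, h1⟩

set_option maxHeartbeats 800000 in
lemma trace_count {σ I A : Type*} [Fintype σ] [Fintype I] [Fintype A] {d b k : ℕ}
    (p : Fin k → MvPolynomial (σ ⊕ Fin d) ℝ) (q : I → Fin b → MvPolynomial (Fin d) ℝ)
    (s : I → Fin b → SignType) (δ : ℕ) (hp : ∀ j, (p j).totalDegree ≤ δ)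
    (hq : ∀ i c, (q i c).totalDegree ≤ δ) (Y : A → σ → ℝ)
    (hinj : Function.Injective (fun (a : A) (i : I) =>
      ∃ x, (∀ c, SignType.sign (eval x (q i c)) = s i c) ∧ ∀ j, 0 < eval (Sum.elim (Y a) x) (p j))) :
    Fintype.card A ≤ PB (Fintype.card σ)
      (Fintype.card I * PB (Fintype.card σ + d) ((2 + 2 * δ + b * δ + k * δ) + 1) + 2) ^
        (Fintype.card σ) := by
  classical
  set pat : A → I → Prop := fun (a : A) (i : I) =>
      ∃ x, (∀ c, SignType.sign (eval x (q i c)) = s i c) ∧ ∀ j, 0 < eval (Sum.elim (Y a) x) (p j)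
    with hpat
  have hw : ∀ a i, ∃ x, pat a i → (∀ c, SignType.sign (eval x (q i c)) = s i c) ∧
      ∀ j, 0 < eval (Sum.elim (Y a) x) (p j) := by
    intro a i
    by_cases h : pat a i
    · obtain ⟨x, hx⟩ := h
      exact ⟨x, fun _ => hx⟩
    · exact ⟨0, fun h' => (h h').elim⟩
  choose xw hxw using hw
  set R : ℝ := 1 + ∑ a, ∑ i, ∑ e, (xw a i e) ^ 2 with hRdef
  have hR1 : 1 ≤ R := by
    have : 0 ≤ ∑ a, ∑ i, ∑ e, (xw a i e) ^ 2 := by positivity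
    linarith
  have hxR : ∀ a i, ∑ e, (xw a i e) ^ 2 < R ^ 2 := by
    intro a i
    have h1 : ∑ e, (xw a i e) ^ 2 ≤ ∑ i, ∑ e, (xw a i e) ^ 2 :=
      Finset.single_le_sum (f := fun i => ∑ e, (xw a i e) ^ 2) (fun a _ => by positivity) (Finset.mem_univ i)
    have h2 : ∑ i, ∑ e, (xw a i e) ^ 2 ≤ ∑ a, ∑ i, ∑ e, (xw a i e) ^ 2 :=
      Finset.single_le_sum (f := fun a => ∑ i, ∑ e, (xw a i e) ^ 2) (fun a _ => by positivity) (Finset.mem_univ a)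
    nlinarith
  obtain ⟨ε, hε, hεx⟩ : ∃ ε > 0, ∀ a i, pat a i →
      (∀ c, (s i c = 1 → ε < eval (xw a i) (q i c)) ∧ (s i c = -1 → ε < - eval (xw a i) (q i c))) ∧
      ∀ j, ε < eval (Sum.elim (Y a) (xw a i)) (p j) := by
    apply exists_small
    simp only [Filter.eventually_all, Filter.eventually_imp_distrib_left, Filter.eventually_and]
    intro a i hai
    obtain ⟨h1, h2⟩ := hxw a i hai
    refine ⟨fun c => ⟨fun hc => ?_, fun hc => ?_⟩, fun j => eventually_small (h2 j)⟩
    · apply eventually_small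
      have := h1 c
      rw [hc] at this
      exact sign_eq_one_iff.1 this
    · apply eventually_small
      have := h1 c
      rw [hc] at this
      have := sign_eq_neg_one_iff.1 this
      linarith
  let zf : I → (Fin d → ℝ) → ℝ := fun i x => ∑ c, if s i c = 0 then (eval x (q i c)) ^ 2 else 0
  let good : A → I → (Fin d → ℝ) → Prop := fun a i x => ∑ e, x e ^ 2 ≤ R ^ 2 ∧
      (∀ c, (s i c = 1 → ε ≤ eval x (q i c)) ∧ (s i c = -1 → ε ≤ - eval x (q i c))) ∧
      ∀ j, ε ≤ eval (Sum.elim (Y a) x) (p j)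
  have hgoodR : ∀ x : Fin d → ℝ, ∑ e, x e ^ 2 ≤ R ^ 2 → ∀ e, |x e| ≤ R := by
    intro x hx e
    apply abs_le_of_sq_le_sq _ (by linarith)
    exact (Finset.single_le_sum (f := fun e => x e ^ 2) (fun c _ => by positivity) (Finset.mem_univ e)).trans hx
  obtain ⟨ε', hε', hεx'⟩ : ∃ ε' > 0, ∀ a i, ¬ pat a i → ∀ x, good a i x → ε' < zf i x := by
    apply exists_small
    simp only [Filter.eventually_all, Filter.eventually_imp_distrib_left]
    intro a i hai
    have hcq : ∀ c, Continuous (fun x => eval x (q i c)) := fun c => MvPolynomial.continuous_eval _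
    have hcp : ∀ j, Continuous (fun x => eval (Sum.elim (Y a) x) (p j)) := by
      intro j
      refine (MvPolynomial.continuous_eval (p j)).comp (continuous_pi ?_)
      rintro (c | e)
      · simp only [Sum.elim_inl]; fun_prop
      · simp only [Sum.elim_inr]; fun_prop
    have hclosed : IsClosed {x | good a i x} := by
      have hset : {x | good a i x} = {x | ∑ e, x e ^ 2 ≤ R ^ 2} ∩
        ((⋂ c, ⋂ (_ : s i c = 1), {x | ε ≤ eval x (q i c)}) ∩
         (⋂ c, ⋂ (_ : s i c = -1), {x | ε ≤ - eval x (q i c)})) ∩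
         ⋂ j, {x | ε ≤ eval (Sum.elim (Y a) x) (p j)} := by
        ext x
        simp only [good, Set.mem_inter_iff, Set.mem_iInter, Set.mem_setOf_eq, forall_and]
        tauto
      rw [hset]
      refine ((isClosed_le (by fun_prop) continuous_const).inter (IsClosed.inter ?_ ?_)).inter ?_
      · exact isClosed_iInter fun c => isClosed_iInter fun _ => isClosed_le continuous_const (hcq c)
      · exact isClosed_iInter fun c => isClosed_iInter fun _ => isClosed_le continuous_const (hcq c).neg
      · exact isClosed_iInter fun c => isClosed_le continuous_const (hcp c)
    have hcomp : IsCompact {x | good a i x} := by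
      apply Metric.isCompact_of_isClosed_isBounded hclosed
      apply (Metric.isBounded_closedBall (x := (0 : Fin d → ℝ)) (r := R)).subset
      intro x hx
      rw [mem_closedBall_zero_iff, pi_norm_le_iff_of_nonneg (by linarith)]
      exact hgoodR x hx.1
    have hcz : Continuous (zf i) := by
      apply continuous_finsetSum
      intro c _
      by_cases h : s i c = 0
      · simp only [h, if_true]
        exact (hcq c).pow 2
      · simp only [h, if_false]
        exact continuous_const
    rcases Set.eq_empty_or_nonempty {x | good a i x} with hem | hne
    · refine Filter.Eventually.of_forall fun ε' x hx => ?_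
      have : x ∈ {x | good a i x} := hx
      rw [hem] at this
      exact this.elim
    · obtain ⟨x0, hx0, hmin⟩ := hcomp.exists_isMinOn hne hcz.continuousOn
      have hz0 : 0 < zf i x0 := by
        have hterm : ∀ c ∈ Finset.univ, 0 ≤ (if s i c = 0 then (eval x0 (q i c)) ^ 2 else 0) := by
          intro c _; split_ifs <;> positivity
        refine lt_of_le_of_ne (Finset.sum_nonneg hterm) ?_
        intro h0
        apply hai
        refine ⟨x0, fun c => ?_, fun j => lt_of_lt_of_le hε (hx0.2.2 j)⟩
        have hc := hx0.2.1 c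
        have h0c := (Finset.sum_eq_zero_iff_of_nonneg hterm).1 h0.symm c (Finset.mem_univ c)
        rcases hs : s i c with _ | _ | _
        · have h2 : s i c = 0 := hs
          rw [if_pos h2] at h0c
          have : eval x0 (q i c) = 0 := by simpa using h0c
          rw [this]; simp
        · have h2 : s i c = -1 := hs
          have := hc.2 h2
          exact sign_eq_neg_one_iff.2 (by linarith)
        · have h2 : s i c = 1 := hs
          have := hc.1 h2
          exact sign_eq_one_iff.2 (by linarith)
      filter_upwards [eventually_small hz0] with ε' h' x hx
      exact lt_of_lt_of_le h' (hmin hx)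
  let rq : I → Fin b → MvPolynomial (σ ⊕ Fin d) ℝ := fun i c => rename Sum.inr (q i c)
  have hrq : ∀ i c y x, eval (Sum.elim y x) (rq i c) = eval x (q i c) := by
    intro i c y x
    simp only [rq, eval_rename]
    rfl
  have hrqd : ∀ i c, (rq i c).totalDegree ≤ δ := fun i c => (totalDegree_rename_le _ _).trans (hq i c)
  let f : I → Option (Option (Fin b ⊕ Fin k)) → MvPolynomial (σ ⊕ Fin d) ℝ := fun i l =>
    l.elim (C (R ^ 2) - ∑ e, X (Sum.inr e) ^ 2) (fun l => l.elim
      (C ε' - ∑ c, if s i c = 0 then (rq i c) ^ 2 else 0)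
      (fun l => Sum.elim (fun c => if s i c = 1 then rq i c - C ε else
        if s i c = -1 then - rq i c - C ε else 1) (fun j => p j - C ε) l))
  have f0 : ∀ i y x, eval (Sum.elim y x) (f i none) = R ^ 2 - ∑ e, x e ^ 2 := by
    intro i y x; simp [f]
  have f1 : ∀ i y x, eval (Sum.elim y x) (f i (some none)) = ε' - zf i x := by
    intro i y x
    simp only [f, zf, Option.elim, map_sub, map_sum, eval_C]
    congr 1
    apply Finset.sum_congr rfl
    intro c _
    split_ifs <;> simp [hrq]
  have f2 : ∀ i y x c, eval (Sum.elim y x) (f i (some (some (Sum.inl c)))) = if s i c = 1 then eval x (q i c) - ε else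
        if s i c = -1 then - eval x (q i c) - ε else 1 := by
    intro i y x c
    simp only [f, Option.elim, Sum.elim_inl]
    split_ifs <;> simp [hrq]
  have f3 : ∀ i y x j, eval (Sum.elim y x) (f i (some (some (Sum.inr j)))) = eval (Sum.elim y x) (p j) - ε := by
    intro i y x j
    simp [f]
  have h1m : (1 : SignType) ≠ -1 := by decide
  refine pattern_count f (2 + 2 * δ + b * δ + k * δ) ?_ R (by linarith) ?_ Y pat hinj ?_ ?_
  · intro i
    rw [Fintype.sum_option, Fintype.sum_option, Fintype.sum_sum_type]
    have d0 : (f i none).totalDegree ≤ 2 := by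
      refine (totalDegree_sub _ _).trans (max_le (by rw [totalDegree_C]; omega) ?_)
      apply totalDegree_finsetSum_le
      intro c _
      simp
    have d1 : (f i (some none)).totalDegree ≤ 2 * δ := by
      refine (totalDegree_sub _ _).trans (max_le (by simp) ?_)
      apply totalDegree_finsetSum_le
      intro c _
      split_ifs
      · exact (totalDegree_pow _ _).trans (Nat.mul_le_mul_left _ (hrqd i c))
      · simp
    have d2 : ∀ c, (f i (some (some (Sum.inl c)))).totalDegree ≤ δ := by
      intro c
      simp only [f, Option.elim, Sum.elim_inl]
      split_ifs
      · exact (totalDegree_sub _ _).trans (max_le (hrqd i c) (by simp))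
      · exact (totalDegree_sub _ _).trans (max_le (by rw [totalDegree_neg]; exact hrqd i c) (by simp))
      · simp
    have d3 : ∀ j, (f i (some (some (Sum.inr j)))).totalDegree ≤ δ := by
      intro j
      exact (totalDegree_sub _ _).trans (max_le (hp j) (by simp))
    have d4 := Finset.sum_le_sum (s := Finset.univ) (fun c _ => d2 c)
    have d5 := Finset.sum_le_sum (s := Finset.univ) (fun c _ => d3 c)
    simp only [Finset.sum_const, Finset.card_univ, Fintype.card_fin, smul_eq_mul] at d4 d5
    omega
  · intro i y x h
    apply hgoodR
    have := h none
    rw [f0] at this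
    linarith
  · intro a i hai
    refine ⟨xw a i, ?_⟩
    obtain ⟨h1, h2⟩ := hεx a i hai
    rintro (_ | _ | c | j)
    · rw [f0]; linarith [hxR a i]
    · rw [f1]
      have : zf i (xw a i) = 0 := by
        apply Finset.sum_eq_zero
        intro c _
        split_ifs with hc
        · have := (hxw a i hai).1 c
          rw [hc, sign_eq_zero_iff] at this
          rw [this]; simp
        · rfl
      rw [this]; linarith
    · rw [f2]
      split_ifs with hc hc'
      · linarith [(h1 c).1 hc]
      · linarith [(h1 c).2 hc']
      · exact one_pos
    · rw [f3]; linarith [h2 j]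
  · intro a i hai x h
    have hg : good a i x := by
      refine ⟨?_, fun c => ⟨fun hc => ?_, fun hc => ?_⟩, fun j => ?_⟩
      · have := h none
        rw [f0] at this; linarith
      · have := h (some (some (Sum.inl c)))
        rw [f2, if_pos hc] at this; linarith
      · have := h (some (some (Sum.inl c)))
        rw [f2, hc, if_neg h1m.symm, if_pos rfl] at this; linarith
      · have := h (some (some (Sum.inr j)))
        rw [f3] at this; linarith
    have h1 := hεx' a i hai x hg
    have h2 := h (some none)
    rw [f1] at h2
    linarith

open Classical in
lemma growth {d b k : ℕ} (W : Finset (Set (Fin d → ℝ)))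
    (hW : ∀ T ∈ W, IsSemiAlgebraicOfComplexity d b T)
    (V : Fin k → Submodule ℝ (MvPolynomial (Fin d) ℝ))
    (hfin : ∀ j, Module.finrank ℝ (V j) = 2 ^ (j : ℕ)) (δ : ℕ) (hδ : b ≤ δ)
    (hdeg : ∀ j, ∀ p ∈ V j, p.totalDegree + 1 ≤ δ) (n : ℕ) (hn : n + 1 = 2 ^ k)
    (F : Finset (Finset (Set (Fin d → ℝ))))
    (hF : ∀ R ∈ F, ∃ (y : (j : Fin k) → V j) (ν : Fin k → Bool),
      R = W.filter (fun T => (T ∩ Realization y ν).Nonempty)) :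
    F.card ≤ PB n (W.card * 3 ^ b * PB (n + d) ((2 + 2 * δ + b * δ + k * δ) + 1) + 2) ^ n := by
  have hfd : ∀ j, Module.Finite ℝ (V j) := fun j =>
    Module.finite_of_finrank_pos (by rw [hfin]; positivity)
  let bas := fun j => Module.finBasis ℝ (V j)
  let σ := Σ j : Fin k, Fin (Module.finrank ℝ (V j))
  have hσ : Fintype.card σ = n := by
    have h1 : Fintype.card σ = ∑ j : Fin k, 2 ^ (j : ℕ) := by
      simp only [σ, Fintype.card_sigma, Fintype.card_fin, hfin]
    rw [h1, Fin.sum_univ_eq_sum_range (fun j => 2 ^ j), Nat.geomSum_eq le_rfl]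
    simp; omega
  let I := W × (Fin b → SignType)
  have hI : Fintype.card I = W.card * 3 ^ b := by
    simp only [I, Fintype.card_prod, Fintype.card_coe, Fintype.card_fun, Fintype.card_fin]
    rfl
  let p : Fin k → MvPolynomial (σ ⊕ Fin d) ℝ := fun j =>
    ∑ c, X (Sum.inl ⟨j, c⟩) * rename Sum.inr ((bas j c : V j) : MvPolynomial (Fin d) ℝ)
  choose P τ φ hP hT using hW
  let q : I → Fin b → MvPolynomial (Fin d) ℝ := fun i c => P i.1.1 i.1.2 c
  let s : I → Fin b → SignType := fun i => i.2
  choose! y ν hR using hF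
  let y' : Finset (Set (Fin d → ℝ)) → (j : Fin k) → V j :=
    fun R j => if ν R j then y R j else - y R j
  have hreal : ∀ R u, u ∈ Realization (y R) (ν R) ↔ ∀ j, 0 < eval u ((y' R j : V j) : MvPolynomial (Fin d) ℝ) := by
    intro R u
    apply forall_congr'
    intro j
    by_cases h : ν R j <;> simp [y', h]
  let Y : F → σ → ℝ := fun R i => (bas i.1).repr (y' R i.1) i.2
  have hpe : ∀ R j x, eval (Sum.elim (Y R) x) (p j) = eval x ((y' R j : V j) : MvPolynomial (Fin d) ℝ) := by
    intro R j x
    conv_rhs => rw [← (bas j).sum_repr (y' R j)]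
    simp only [p, map_sum, map_mul, eval_X, Sum.elim_inl, eval_rename, Submodule.coe_sum, Submodule.coe_smul, smul_eval]
    rfl
  have key := trace_count p q s δ ?_ ?_ Y ?_
  · rw [hσ, hI, Fintype.card_coe] at key
    exact key
  · intro j
    apply totalDegree_finsetSum_le
    intro c _
    refine (totalDegree_mul _ _).trans ?_
    have h1 := hdeg j _ (bas j c).2
    have h2 := totalDegree_rename_le (Sum.inr : Fin d → σ ⊕ Fin d) ((bas j c : V j) : MvPolynomial (Fin d) ℝ)
    rw [totalDegree_X]
    omega
  · intro i c
    exact (hP _ _ c).trans hδ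
  · have hsub : ∀ R R' : F, (∀ i : I,
        (∃ x, (∀ c, SignType.sign (eval x (q i c)) = s i c) ∧ ∀ j, 0 < eval (Sum.elim (Y R) x) (p j)) →
        (∃ x, (∀ c, SignType.sign (eval x (q i c)) = s i c) ∧ ∀ j, 0 < eval (Sum.elim (Y R') x) (p j))) →
        R.1 ⊆ R'.1 := by
      intro R R' h T hTR
      rw [hR R.1 R.2, Finset.mem_filter] at hTR
      obtain ⟨hTW, x, hxT, hxR⟩ := hTR
      rw [hreal] at hxR
      obtain ⟨x', h1, h2⟩ := h (⟨T, hTW⟩, fun c => SignType.sign (eval x (P T hTW c)))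
        ⟨x, fun c => rfl, fun j => by rw [hpe]; exact hxR j⟩
      rw [hR R'.1 R'.2, Finset.mem_filter]
      refine ⟨hTW, x', ?_, ?_⟩
      · rw [hT T hTW] at hxT ⊢
        have hx2 : φ T hTW (fun i => if τ T hTW i then eval x (P T hTW i) < 0 else eval x (P T hTW i) = 0) := hxT
        show φ T hTW (fun i => if τ T hTW i then eval x' (P T hTW i) < 0 else eval x' (P T hTW i) = 0)
        convert hx2 using 2 with c
        have h1c : SignType.sign (eval x' (P T hTW c)) = SignType.sign (eval x (P T hTW c)) := h1 c
        rw [← sign_eq_neg_one_iff, ← sign_eq_zero_iff, h1c, sign_eq_neg_one_iff, sign_eq_zero_iff]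
      · rw [hreal]
        intro j
        rw [← hpe]; exact h2 j
    intro R R' h
    apply Subtype.ext
    apply Finset.Subset.antisymm
    · exact hsub R R' fun i hi => (congrFun h i).mp hi
    · exact hsub R' R fun i hi => (congrFun h i).mpr hi

lemma choose_bound {w N : ℕ} (h : 7 * w ≤ 8 * N) : ∀ u, u ≤ w →
    (w - u).choose N * 8 ^ u ≤ w.choose N := by
  intro u
  induction u with
  | zero => simp
  | succ u ih =>
    intro hu
    have ih := ih (by omega)
    obtain ⟨m, hm⟩ : ∃ m, w - u = m + 1 := ⟨w - u - 1, by omega⟩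
    have e : w - (u + 1) = m := by omega
    rw [hm] at ih
    rw [e, pow_succ]
    refine le_trans ?_ ih
    have h1 := Nat.choose_mul_succ_eq m N
    have h2 : 8 * m.choose N ≤ (m + 1).choose N := by
      have h3 : 8 * (m + 1 - N) ≤ m + 1 := by omega
      have h4 : (8 * m.choose N) * (m + 1) ≤ (m + 1).choose N * (m + 1) := by
        calc (8 * m.choose N) * (m + 1) = (m + 1).choose N * (8 * (m + 1 - N)) := by
              rw [mul_assoc, h1]; ring
          _ ≤ _ := Nat.mul_le_mul_left _ h3
      exact Nat.le_of_mul_le_mul_right h4 (by omega)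
    calc m.choose N * (8 ^ u * 8) = 8 * m.choose N * 8 ^ u := by ring
      _ ≤ _ := Nat.mul_le_mul_right _ h2

open Classical in
lemma tail_bound {α : Type*} (W T : Finset α) (hT : T ⊆ W) {N s : ℕ} (h : 7 * W.card ≤ 8 * N)
    (hs : 3 * s ≤ T.card) :
    ((W.powersetCard N).filter (fun B => (B ∩ T).card ≤ s)).card * 2 ^ T.card ≤ W.card.choose N := by
  set τ := T.card with hτ
  have hTW : τ ≤ W.card := Finset.card_le_card hT
  have h1 : (W.powersetCard N).filter (fun B => (B ∩ T).card ≤ s) ⊆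
      (T.powersetCard (τ - s)).biUnion (fun U => (W \ U).powersetCard N) := by
    intro B hB
    rw [Finset.mem_filter, Finset.mem_powersetCard] at hB
    obtain ⟨⟨hBW, hBN⟩, hBT⟩ := hB
    have h2 : τ - s ≤ (T \ B).card := by
      have := Finset.card_sdiff_add_card_inter T B
      rw [Finset.inter_comm] at this
      omega
    obtain ⟨U, hU, hUc⟩ := Finset.exists_subset_card_eq h2
    rw [Finset.mem_biUnion]
    refine ⟨U, Finset.mem_powersetCard.2 ⟨hU.trans Finset.sdiff_subset, hUc⟩,
      Finset.mem_powersetCard.2 ⟨?_, hBN⟩⟩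
    intro x hx
    rw [Finset.mem_sdiff]
    exact ⟨hBW hx, fun hxU => (Finset.mem_sdiff.1 (hU hxU)).2 hx⟩
  have h2 := (Finset.card_le_card h1).trans Finset.card_biUnion_le
  have h3 : ∑ U ∈ T.powersetCard (τ - s), ((W \ U).powersetCard N).card =
      τ.choose (τ - s) * (W.card - (τ - s)).choose N := by
    rw [Finset.sum_const_nat (m := (W.card - (τ - s)).choose N), Finset.card_powersetCard]
    intro U hU
    rw [Finset.mem_powersetCard] at hU
    rw [Finset.card_powersetCard, Finset.card_sdiff_of_subset (hU.1.trans hT), hU.2]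
  rw [h3] at h2
  have h4 : τ.choose (τ - s) ≤ 2 ^ τ := Nat.choose_le_two_pow _ _
  have h5 := choose_bound h (τ - s) (by omega)
  have h6 : 2 ^ τ * 2 ^ τ ≤ 8 ^ (τ - s) := by
    rw [← pow_add, show (8 : ℕ) = 2 ^ 3 by norm_num, ← pow_mul]
    exact Nat.pow_le_pow_right (by norm_num) (by omega)
  calc _ ≤ (τ.choose (τ - s) * (W.card - (τ - s)).choose N) * 2 ^ τ := Nat.mul_le_mul_right _ h2
    _ ≤ (2 ^ τ * (W.card - (τ - s)).choose N) * 2 ^ τ := by gcongr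
    _ = (W.card - (τ - s)).choose N * (2 ^ τ * 2 ^ τ) := by ring
    _ ≤ (W.card - (τ - s)).choose N * 8 ^ (τ - s) := by gcongr
    _ ≤ _ := h5

open Classical in
lemma union_bound {α ι : Type*} (R : ι → α → Prop) (W : Finset α) {N s Pg : ℕ} (h : 7 * W.card ≤ 8 * N)
    (hPg : ∀ F : Finset (Finset α), (∀ X ∈ F, ∃ r, X = W.filter (R r)) → F.card ≤ Pg) :
    ((W.powersetCard N).filter (fun B => ∃ r, (B.filter (R r)).card ≤ s ∧
      3 * s ≤ (W.filter (R r)).card)).card * 2 ^ (3 * s) ≤ Pg * W.card.choose N := by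
  set F := W.powerset.filter (fun X => (∃ r, X = W.filter (R r)) ∧ 3 * s ≤ X.card) with hF
  have hFc : F.card ≤ Pg := hPg F (fun X hX => (Finset.mem_filter.1 hX).2.1)
  have h1 : (W.powersetCard N).filter (fun B => ∃ r, (B.filter (R r)).card ≤ s ∧
      3 * s ≤ (W.filter (R r)).card) ⊆
      F.biUnion (fun X => (W.powersetCard N).filter (fun B => (B ∩ X).card ≤ s)) := by
    intro B hB
    rw [Finset.mem_filter] at hB
    obtain ⟨hBW, r, hr1, hr2⟩ := hB
    rw [Finset.mem_biUnion]
    refine ⟨W.filter (R r), Finset.mem_filter.2 ⟨Finset.mem_powerset.2 (Finset.filter_subset _ _), ⟨r, rfl⟩, hr2⟩, ?_⟩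
    rw [Finset.mem_filter]
    refine ⟨hBW, ?_⟩
    rwa [Finset.inter_filter, Finset.inter_eq_left.2 (Finset.mem_powersetCard.1 hBW).1]
  have h2 := (Finset.card_le_card h1).trans Finset.card_biUnion_le
  calc _ ≤ (∑ X ∈ F, ((W.powersetCard N).filter (fun B => (B ∩ X).card ≤ s)).card) * 2 ^ (3 * s) :=
        Nat.mul_le_mul_right _ h2
    _ = ∑ X ∈ F, ((W.powersetCard N).filter (fun B => (B ∩ X).card ≤ s)).card * 2 ^ (3 * s) := by
        rw [Finset.sum_mul]
    _ ≤ ∑ X ∈ F, W.card.choose N := by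
        apply Finset.sum_le_sum
        intro X hX
        rw [Finset.mem_filter, Finset.mem_powerset] at hX
        refine le_trans ?_ (tail_bound W X hX.1 h hX.2.2)
        gcongr
        · norm_num
        · exact hX.2.2
    _ = F.card * W.card.choose N := by rw [Finset.sum_const, smul_eq_mul]
    _ ≤ _ := by gcongr

open Classical in
lemma sum_filter_powersetCard {α : Type*} (Z : Finset α) (R : α → Prop) (g : ℕ) :
    Z.card * ∑ G ∈ Z.powersetCard g, (G.filter R).card = (Z.filter R).card * (g * Z.card.choose g) := by
  have h1 : ∑ G ∈ Z.powersetCard g, (G.filter R).card =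
      ∑ x ∈ Z.filter R, ((Z.powersetCard g).filter (fun G => x ∈ G)).card := by
    have : ∀ G ∈ Z.powersetCard g, (G.filter R).card = ((Z.filter R).filter (fun x => x ∈ G)).card := by
      intro G hG
      congr 1
      ext x
      have := (Finset.mem_powersetCard.1 hG).1
      simp only [Finset.mem_filter]
      exact ⟨fun h => ⟨⟨this h.1, h.2⟩, h.1⟩, fun h => ⟨h.2, h.1.2⟩⟩
    rw [Finset.sum_congr rfl this]
    exact Finset.sum_card_bipartiteAbove_eq_sum_card_bipartiteBelow (fun G x => x ∈ G)
  have h2 : ∀ x ∈ Z.filter R, Z.card * ((Z.powersetCard g).filter (fun G => x ∈ G)).card = g * Z.card.choose g := by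
    intro x hx
    have hxZ := (Finset.mem_filter.1 hx).1
    have hcomp : (Z.powersetCard g).filter (fun G => ¬ x ∈ G) = (Z.erase x).powersetCard g := by
      ext G
      simp only [Finset.mem_filter, Finset.mem_powersetCard, Finset.subset_erase]
      tauto
    have h3 := Finset.card_filter_add_card_filter_not (s := Z.powersetCard g) (fun G => x ∈ G)
    rw [hcomp, Finset.card_powersetCard, Finset.card_powersetCard, Finset.card_erase_of_mem hxZ] at h3
    obtain ⟨z, hz⟩ : ∃ z, Z.card = z + 1 := ⟨Z.card - 1, by have := Finset.card_pos.2 ⟨x, hxZ⟩; omega⟩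
    rw [hz] at h3 ⊢
    simp only [Nat.add_sub_cancel] at h3
    have h4 := Nat.choose_mul_succ_eq z g
    by_cases hg : g ≤ z + 1
    · zify [hg] at h3 h4 ⊢
      have := congrArg (fun t => ((z : ℤ) + 1) * t) h3
      linarith
    · rw [Nat.choose_eq_zero_of_lt (show z + 1 < g by omega)] at h3 ⊢
      have : ((Z.powersetCard g).filter (fun G => x ∈ G)).card = 0 := by omega
      rw [this]; simp
  rw [h1, Finset.mul_sum, Finset.sum_congr rfl h2, Finset.sum_const, smul_eq_mul]

open Classical in
lemma ghost_avg {α : Type*} (Z : Finset α) (R : α → Prop) (g t K : ℕ) (hg : 1 ≤ g) (hgZ : g ≤ Z.card)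
    (h : Z.card * g + K * Z.card * t ≤ K * (Z.filter R).card * g) :
    Z.card.choose g ≤ K * ((Z.powersetCard g).filter (fun G => t ≤ (G.filter R).card)).card := by
  set A := ((Z.powersetCard g).filter (fun G => t ≤ (G.filter R).card)).card with hA
  have h1 : ∑ G ∈ Z.powersetCard g, (G.filter R).card ≤ A * g + Z.card.choose g * t := by
    have : ∀ G ∈ Z.powersetCard g, (G.filter R).card ≤ (if t ≤ (G.filter R).card then g else 0) + t := by
      intro G hG
      split_ifs with hh
      · have := Finset.card_filter_le G R
        have := (Finset.mem_powersetCard.1 hG).2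
        omega
      · omega
    refine (Finset.sum_le_sum this).trans (le_of_eq ?_)
    rw [Finset.sum_add_distrib, Finset.sum_const, Finset.card_powersetCard, smul_eq_mul, ← Finset.sum_filter, Finset.sum_const,
      smul_eq_mul]
  have h2 := sum_filter_powersetCard Z R g
  have h3 : (Z.filter R).card * (g * Z.card.choose g) ≤ Z.card * (A * g + Z.card.choose g * t) := by
    rw [← h2]; exact Nat.mul_le_mul_left _ h1
  have h4 := Nat.mul_le_mul_left K h3
  have h5 := Nat.mul_le_mul_right (Z.card.choose g) h
  have h6 : (Z.card * g) * Z.card.choose g ≤ (Z.card * g) * (K * A) := by nlinarith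
  exact Nat.le_of_mul_le_mul_left h6 (by have : 0 < Z.card := by omega
                                         positivity)

open Classical in
lemma sampling {α ι : Type*} (R : ι → α → Prop) (S : Finset α) {N s K Pg : ℕ} (H : ι → Prop)
    (hN : 7 ≤ N) (hK : 1 ≤ K)
    (hPg : ∀ W ⊆ S, 1 ≤ W.card → W.card ≤ 2 * N → ∀ F : Finset (Finset α), (∀ X ∈ F, ∃ r, X = W.filter (R r)) → F.card ≤ Pg)
    (hbig : 2 * K * Pg ≤ 2 ^ (3 * s))
    (h1 : N ≤ S.card → ∀ r, H r → 3 * s ≤ (S.filter (R r)).card)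
    (h2 : N ≤ S.card → ∀ r, H r → ∀ ρ, (S.filter (R r)).card ≤ ρ + s →
      (S.card - N) * (N / 7) + K * (S.card - N) * (3 * s) ≤ K * ρ * (N / 7)) :
    2 * ((S.powersetCard N).filter (fun B => ∃ r, (B.filter (R r)).card ≤ s ∧ H r)).card ≤
      S.card.choose N := by
  set Bad := (S.powersetCard N).filter (fun B => ∃ r, (B.filter (R r)).card ≤ s ∧ H r) with hBad
  by_cases hNS : N ≤ S.card
  swap
  · have : S.powersetCard N = ∅ := Finset.powersetCard_eq_empty.2 (by omega)
    simp [hBad, this]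
  specialize h1 hNS
  specialize h2 hNS
  have main : Bad.card * 2 ^ (3 * s) ≤ K * Pg * S.card.choose N := by
    by_cases hc : S.card - N ≤ N / 7
    · have hu := union_bound (s := s) R S (N := N) (by omega) (hPg S subset_rfl (by omega) (by omega))
      have hsub : Bad.card ≤ ((S.powersetCard N).filter (fun B => ∃ r, (B.filter (R r)).card ≤ s ∧
        3 * s ≤ (S.filter (R r)).card)).card := by
        apply Finset.card_le_card
        intro B hB
        rw [Finset.mem_filter] at hB ⊢
        obtain ⟨hB, r, hr, hH⟩ := hB
        exact ⟨hB, r, hr, h1 r hH⟩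
      calc _ ≤ _ := Nat.mul_le_mul_right _ hsub
        _ ≤ Pg * S.card.choose N := hu
        _ ≤ K * Pg * S.card.choose N := by
          gcongr
          exact Nat.le_mul_of_pos_left _ hK
    · set g := N / 7 with hg
      have hg1 : 1 ≤ g := by omega
      let Q : Finset α → Finset α → Prop := fun B W => ∃ r, (B.filter (R r)).card ≤ s ∧
        3 * s ≤ (W.filter (R r)).card
      have step1 : ∀ B ∈ Bad, (S.card - N).choose g ≤
          K * (((S \ B).powersetCard g).filter (fun G => Q B (B ∪ G))).card := by
        intro B hB
        rw [Finset.mem_filter, Finset.mem_powersetCard] at hB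
        obtain ⟨⟨hBS, hBN⟩, r, hr, hH⟩ := hB
        have hZ : (S \ B).card = S.card - N := by rw [Finset.card_sdiff_of_subset hBS, hBN]
        have hρ : (S.filter (R r)).card ≤ ((S \ B).filter (R r)).card + s := by
          have : S.filter (R r) ⊆ (S \ B).filter (R r) ∪ B.filter (R r) := by
            intro x hx
            simp only [Finset.mem_union, Finset.mem_filter, Finset.mem_sdiff] at hx ⊢
            tauto
          have := (Finset.card_le_card this).trans (Finset.card_union_le _ _)
          omega
        have := ghost_avg (S \ B) (R r) g (3 * s) K hg1 (by omega) (by rw [hZ]; exact h2 r hH _ hρ)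
        rw [hZ] at this
        refine this.trans (Nat.mul_le_mul_left _ (Finset.card_le_card ?_))
        intro G hG
        rw [Finset.mem_filter] at hG ⊢
        refine ⟨hG.1, r, hr, hG.2.trans (Finset.card_le_card ?_)⟩
        exact Finset.filter_subset_filter _ Finset.subset_union_right
      have step2 : ∑ B ∈ Bad, (((S \ B).powersetCard g).filter (fun G => Q B (B ∪ G))).card ≤
          ∑ W ∈ S.powersetCard (N + g), ((W.powersetCard N).filter (fun B => Q B W)).card := by
        rw [← Finset.card_sigma, ← Finset.card_sigma]
        apply Finset.card_le_card_of_injOn (fun x => ⟨x.1 ∪ x.2, x.1⟩)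
        · rintro ⟨B, G⟩ hx
          simp only [Finset.mem_coe, Finset.mem_sigma, Finset.mem_filter, Finset.mem_powersetCard, hBad] at hx ⊢
          obtain ⟨⟨⟨hBS, hBN⟩, _⟩, ⟨hGS, hGg⟩, hQ⟩ := hx
          refine ⟨⟨Finset.union_subset hBS (hGS.trans Finset.sdiff_subset), ?_⟩, ⟨Finset.subset_union_left, hBN⟩, hQ⟩
          rw [Finset.card_union_of_disjoint, hBN, hGg]
          exact (Finset.disjoint_of_subset_left hGS Finset.sdiff_disjoint).symm
        · rintro ⟨B, G⟩ hx ⟨B', G'⟩ hx' heq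
          simp only [Finset.mem_coe, Finset.mem_sigma, Finset.mem_filter, Finset.mem_powersetCard] at hx hx'
          simp only [Sigma.mk.injEq, heq_eq_eq] at heq
          obtain ⟨e1, e2⟩ := heq
          subst e2
          have d1 : Disjoint B G := (Finset.disjoint_of_subset_left hx.2.1.1 Finset.sdiff_disjoint).symm
          have d2 : Disjoint B G' := (Finset.disjoint_of_subset_left hx'.2.1.1 Finset.sdiff_disjoint).symm
          have : G = G' := by
            rw [← Finset.union_sdiff_cancel_left d1, e1, Finset.union_sdiff_cancel_left d2]
          rw [this]
      have step3 : ∀ W ∈ S.powersetCard (N + g), ((W.powersetCard N).filter (fun B => Q B W)).card * 2 ^ (3 * s) ≤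
          Pg * (N + g).choose N := by
        intro W hW
        rw [Finset.mem_powersetCard] at hW
        have := union_bound (s := s) R W (N := N) (by omega) (hPg W hW.1 (by omega) (by omega))
        rw [hW.2] at this
        exact this
      have s1 := Finset.sum_le_sum step1
      rw [Finset.sum_const, smul_eq_mul, ← Finset.mul_sum] at s1
      have s3 := Finset.sum_le_sum step3
      rw [Finset.sum_const, smul_eq_mul, ← Finset.sum_mul, Finset.card_powersetCard] at s3
      have hch := Nat.choose_mul (n := S.card) (k := N + g) (s := N) (by omega)
      rw [Nat.add_sub_cancel_left] at hch
      have hpos : 0 < (S.card - N).choose g := Nat.choose_pos (by omega)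
      apply Nat.le_of_mul_le_mul_right _ hpos
      calc Bad.card * 2 ^ (3 * s) * (S.card - N).choose g = (Bad.card * (S.card - N).choose g) * 2 ^ (3 * s) := by ring
        _ ≤ (K * ∑ B ∈ Bad, (((S \ B).powersetCard g).filter (fun G => Q B (B ∪ G))).card) * 2 ^ (3 * s) := by gcongr
        _ ≤ (K * ∑ W ∈ S.powersetCard (N + g), ((W.powersetCard N).filter (fun B => Q B W)).card) * 2 ^ (3 * s) := by gcongr
        _ = K * ((∑ W ∈ S.powersetCard (N + g), ((W.powersetCard N).filter (fun B => Q B W)).card) * 2 ^ (3 * s)) := by ring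
        _ ≤ K * (S.card.choose (N + g) * (Pg * (N + g).choose N)) := by gcongr
        _ = K * Pg * (S.card.choose (N + g) * (N + g).choose N) := by ring
        _ = _ := by rw [hch]; ring
  have hpos : 0 < 2 ^ (3 * s) := by positivity
  apply Nat.le_of_mul_le_mul_right _ hpos
  calc 2 * Bad.card * 2 ^ (3 * s) = 2 * (Bad.card * 2 ^ (3 * s)) := by ring
    _ ≤ 2 * (K * Pg * S.card.choose N) := by gcongr
    _ = (2 * K * Pg) * S.card.choose N := by ring
    _ ≤ 2 ^ (3 * s) * S.card.choose N := by gcongr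
    _ = _ := by ring

lemma PB_mono {N M δ δ' : ℕ} (hN : N ≤ M) (hδ : δ ≤ δ') (h1 : 1 ≤ δ') : PB N δ ≤ PB M δ' := by
  unfold PB
  calc ((N + 1) * δ) ^ (N + 1) ≤ ((M + 1) * δ') ^ (N + 1) := by gcongr
    _ ≤ _ := Nat.pow_le_pow_right (by have : 0 < δ' := h1
                                      positivity) (by omega)

lemma growth_num {k K b d n w : ℕ} (hk : 1 ≤ k) (hK : K = 2 ^ k) (hb : b ≤ k) (hd : d ≤ k)
    (hn : n + 1 = K) (hw : 1 ≤ w) :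
    PB n (w * 3 ^ b * PB (n + d) ((2 + 2 * (2 * K) + b * (2 * K) + k * (2 * K)) + 1) + 2) ^ n ≤
      (w * 2 ^ (21 * K ^ 2)) ^ (K ^ 2) := by
  have hkK : k < K := hK ▸ Nat.lt_two_pow_self
  have hK2 : 2 ≤ K := by omega
  have hδ : (2 + 2 * (2 * K) + b * (2 * K) + k * (2 * K)) + 1 ≤ 16 * K ^ 2 := by
    have h1 : b * (2 * K) ≤ K * (2 * K) := Nat.mul_le_mul_right _ (by omega)
    have h2 : k * (2 * K) ≤ K * (2 * K) := Nat.mul_le_mul_right _ (by omega)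
    nlinarith
  have h1 : PB (n + d) ((2 + 2 * (2 * K) + b * (2 * K) + k * (2 * K)) + 1) ≤ 2 ^ (16 * (k * K)) := by
    refine (PB_mono (M := 2 * K - 1) (by omega) hδ (by nlinarith)).trans ?_
    unfold PB
    rw [show 2 * K - 1 + 1 = 2 * K by omega]
    have h32 : 2 * K * (16 * K ^ 2) ≤ 2 ^ (8 * k) := by
      calc 2 * K * (16 * K ^ 2) = 2 ^ (5 + 3 * k) := by
            rw [hK, pow_add, Nat.mul_comm 3 k, pow_mul]; ring
        _ ≤ _ := Nat.pow_le_pow_right (by norm_num) (by omega)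
    calc (2 * K * (16 * K ^ 2)) ^ (2 * K) ≤ (2 ^ (8 * k)) ^ (2 * K) := Nat.pow_le_pow_left h32 _
      _ = _ := by rw [← pow_mul]; congr 1; ring
  have h3 : 3 ^ b ≤ 2 ^ (2 * k) := by
    calc 3 ^ b ≤ 4 ^ b := Nat.pow_le_pow_left (by norm_num) _
      _ ≤ 4 ^ k := Nat.pow_le_pow_right (by norm_num) hb
      _ = _ := by rw [pow_mul]; norm_num
  have hkk : k * 2 ≤ k * K := Nat.mul_le_mul_left _ hK2
  have h4 : w * 3 ^ b * PB (n + d) ((2 + 2 * (2 * K) + b * (2 * K) + k * (2 * K)) + 1) + 2 ≤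
      w * 2 ^ (20 * (k * K)) := by
    have e1 : w * 3 ^ b * PB (n + d) ((2 + 2 * (2 * K) + b * (2 * K) + k * (2 * K)) + 1) ≤
        w * 2 ^ (2 * k + 16 * (k * K)) := by
      rw [pow_add, ← mul_assoc w (2 ^ (2 * k))]
      exact Nat.mul_le_mul (Nat.mul_le_mul_left _ h3) h1
    have e2 : 2 ^ (20 * (k * K)) ≥ 2 ^ (2 * k + 16 * (k * K) + 2) :=
      Nat.pow_le_pow_right (by norm_num) (by omega)
    have e3 : 1 ≤ 2 ^ (2 * k + 16 * (k * K)) := Nat.one_le_two_pow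
    rw [pow_add _ _ 2] at e2
    have e4 := Nat.mul_le_mul_left w e2
    have e5 : 1 ≤ w * 2 ^ (2 * k + 16 * (k * K)) := Nat.mul_pos hw e3
    nlinarith
  have h5 : PB n (w * 3 ^ b * PB (n + d) ((2 + 2 * (2 * K) + b * (2 * K) + k * (2 * K)) + 1) + 2) ≤
      (w * 2 ^ (21 * K ^ 2)) ^ K := by
    have hpos : 1 ≤ w * 2 ^ (20 * (k * K)) := Nat.mul_pos hw Nat.one_le_two_pow
    refine (PB_mono le_rfl h4 hpos).trans ?_
    unfold PB
    rw [hn]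
    apply Nat.pow_le_pow_left
    calc K * (w * 2 ^ (20 * (k * K))) = w * 2 ^ (k + 20 * (k * K)) := by
          rw [pow_add, ← hK]; ring
      _ ≤ _ := by
        apply Nat.mul_le_mul_left
        apply Nat.pow_le_pow_right (by norm_num)
        have : k * K ≤ K * K := Nat.mul_le_mul_right _ hkK.le
        nlinarith
  have hpos : 0 < w * 2 ^ (21 * K ^ 2) := Nat.mul_pos hw (by positivity)
  calc _ ≤ ((w * 2 ^ (21 * K ^ 2)) ^ K) ^ n := Nat.pow_le_pow_left h5 _
    _ ≤ ((w * 2 ^ (21 * K ^ 2)) ^ K) ^ K := Nat.pow_le_pow_right (by positivity) (by omega)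
    _ = _ := by rw [← pow_mul]; congr 1; ring

lemma final_num {K N s : ℕ} (hK : 2 ≤ K) (hN : K ^ 20 ≤ N) (hs : N ≤ K * s + K) :
    2 * K * (2 * N * 2 ^ (21 * K ^ 2)) ^ (K ^ 2) ≤ 2 ^ (3 * s) := by
  set q := Nat.sqrt N with hq
  have hq1 : q * q ≤ N := Nat.sqrt_le N
  have hq2 : N < (q + 1) * (q + 1) := Nat.lt_succ_sqrt N
  have hqK : K ^ 10 ≤ q := by
    rw [hq, Nat.le_sqrt]
    calc _ = K ^ 20 := by ring
      _ ≤ N := hN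
  have h32 : 32 * K ^ 5 ≤ q := by
    have : 2 ^ 5 ≤ K ^ 5 := Nat.pow_le_pow_left hK 5
    calc 32 * K ^ 5 ≤ K ^ 5 * K ^ 5 := Nat.mul_le_mul_right _ (by linarith)
      _ = K ^ 10 := by ring
      _ ≤ q := hqK
  have hq3 : q + 1 ≤ 2 ^ q := Nat.lt_two_pow_self
  have h2N : 2 * N ≤ 2 ^ (2 * q + 1) := by
    calc 2 * N ≤ 2 * (2 ^ q * 2 ^ q) := by
          have := Nat.mul_le_mul hq3 hq3
          omega
      _ = _ := by rw [pow_succ, mul_comm 2 q, pow_mul]; ring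
  have h2K : 2 * K ≤ 2 ^ (K + 1) := by
    have : K < 2 ^ K := Nat.lt_two_pow_self
    rw [pow_succ]; omega
  calc 2 * K * (2 * N * 2 ^ (21 * K ^ 2)) ^ (K ^ 2)
      ≤ 2 ^ (K + 1) * (2 ^ (2 * q + 1) * 2 ^ (21 * K ^ 2)) ^ (K ^ 2) := by gcongr
    _ = 2 ^ (K + 1 + (2 * q + 1 + 21 * K ^ 2) * K ^ 2) := by
        rw [← pow_add, ← pow_mul, ← pow_add]
    _ ≤ 2 ^ (3 * s) := by
        apply Nat.pow_le_pow_right (by norm_num)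
        have hA : K * (K + 1 + (2 * q + 1 + 21 * K ^ 2) * K ^ 2) + K ≤ q * q := by
          have hp : ∀ i, i ≤ 5 → K ^ i ≤ K ^ 5 := fun i hi => Nat.pow_le_pow_right (by omega) hi
          have hq1 : 1 ≤ q := by
            have : 0 < K ^ 5 := by positivity
            omega
          have a1 := hp 1 (by norm_num)
          have a2 := hp 2 (by norm_num)
          have a3 := hp 3 (by norm_num)
          have a3q := Nat.mul_le_mul_right q a3
          have a5 : K ^ 5 ≤ K ^ 5 * q := Nat.le_mul_of_pos_right _ hq1
          have e : K * (K + 1 + (2 * q + 1 + 21 * K ^ 2) * K ^ 2) + K =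
            K ^ 2 + 2 * K ^ 1 + 2 * (K ^ 3 * q) + K ^ 3 + 21 * K ^ 5 := by ring
          rw [e]
          have hqq := Nat.mul_le_mul_right q h32
          have : 32 * K ^ 5 * q = 32 * (K ^ 5 * q) := by ring
          omega
        have hB : K * (K + 1 + (2 * q + 1 + 21 * K ^ 2) * K ^ 2) ≤ K * s := by omega
        have := Nat.le_of_mul_le_mul_left hB (by omega)
        omega

lemma deg_bound {d j m : ℕ} (hd : 1 ≤ d)
    (h : IsLeast {m : ℕ | 0 < m ∧ 2 ^ j < Nat.choose (m + d) d} m) : m ≤ 2 ^ j := by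
  apply h.2
  refine ⟨by positivity, ?_⟩
  have h1 := Nat.choose_le_choose (2 ^ j) (show 2 ^ j + 1 ≤ 2 ^ j + d by omega)
  rw [Nat.choose_succ_self_right, Nat.choose_symm_add] at h1
  omega

set_option maxHeartbeats 1000000 in
open Classical in
theorem main_aux (b d : ℕ) (hb : 1 ≤ b) (hd : 1 ≤ d) (C₀ : ℕ) (hC₀ : 0 < C₀)
    (r : ℕ) (S : Finset (Set (Fin d → ℝ)))
    (hS : ∀ T ∈ S, IsSemiAlgebraicOfComplexity d b T) (k : ℕ) (hk : 1 ≤ k)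
    (D : ℝ) (hD : D = 2 ^ ((k : ℝ) / (d : ℝ))) (hDb : (2 : ℝ) ^ b ≤ D)
    (Dj : Fin k → ℕ) (hDj : ∀ j : Fin k,
          IsLeast {m : ℕ | 0 < m ∧ 2 ^ (j : ℕ) < Nat.choose (m + d) d} (Dj j))
    (V : Fin k → Submodule ℝ (MvPolynomial (Fin d) ℝ))
    (hV : ∀ j, Module.finrank ℝ (V j) = 2 ^ (j : ℕ))
    (hVd : ∀ j, ∀ p ∈ V j, p.totalDegree ≤ Dj j)
    (N : ℕ) (C : ℝ) (hC : C = 20 * d + 100) (hN : C * D ^ C ≤ (N : ℝ)) :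
    2 * ((S.powersetCard N).filter (fun B => ∃ x : ((j : Fin k) → V j) × (Fin k → Bool),
      (B.filter (fun T => (T ∩ Realization x.1 x.2).Nonempty)).card ≤
        ⌊((C₀ : ℝ) * D ^ ((r : ℝ) - (d : ℝ))) * N⌋₊ ∧
      C * (C₀ : ℝ) * (S.card : ℝ) * D ^ ((r : ℝ) - (d : ℝ)) <
        ((S.filter (fun T => (T ∩ Realization x.1 x.2).Nonempty)).card : ℝ))).card ≤ S.card.choose N := by
  have hd0 : (0 : ℝ) < d := by exact_mod_cast hd
  have hD1 : 1 ≤ D := (one_le_pow₀ (by norm_num : (1:ℝ) ≤ 2)).trans hDb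
  have hD0 : 0 < D := by linarith
  obtain ⟨K, hK⟩ : ∃ K : ℕ, K = 2 ^ k := ⟨_, rfl⟩
  have hDK : D ^ (d : ℝ) = (K : ℝ) := by
    rw [hD, ← Real.rpow_mul (by norm_num), div_mul_cancel₀ _ hd0.ne', hK, Real.rpow_natCast]
    push_cast; rfl
  have hbd : b * d ≤ k := by
    rw [hD, ← Real.rpow_natCast, Real.rpow_le_rpow_left_iff (by norm_num), le_div_iff₀ hd0] at hDb
    exact_mod_cast hDb
  have hbk : b ≤ k := (Nat.le_mul_of_pos_right b hd).trans hbd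
  have hdk : d ≤ k := (Nat.le_mul_of_pos_left d hb).trans hbd
  have hkK : k < K := hK ▸ Nat.lt_two_pow_self
  have hK2 : 2 ≤ K := by omega
  have hK0 : (0 : ℝ) < K := by exact_mod_cast (by omega : 0 < K)
  have hDC : (K : ℝ) ^ 20 ≤ D ^ C := by
    rw [← hDK, ← Real.rpow_natCast, ← Real.rpow_mul hD0.le]
    apply Real.rpow_le_rpow_of_exponent_le hD1
    rw [hC]; push_cast; linarith
  have hC100 : 120 ≤ C := by
    have : (1 : ℝ) ≤ d := by exact_mod_cast hd
    rw [hC]; linarith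
  have hDC1 : 1 ≤ D ^ C := Real.one_le_rpow hD1 (by linarith)
  have hNK : K ^ 20 ≤ N := by
    have : (K : ℝ) ^ 20 ≤ N := by nlinarith
    exact_mod_cast this
  have hN120 : 120 ≤ N := by
    have : (120 : ℝ) ≤ N := by nlinarith
    exact_mod_cast this
  set ε : ℝ := (C₀ : ℝ) * D ^ ((r : ℝ) - (d : ℝ)) with hε
  have hεK : 1 ≤ K * ε := by
    have h1 : D ^ ((r : ℝ) - (d : ℝ)) = D ^ (r : ℝ) / K := by
      rw [Real.rpow_sub hD0, hDK]
    have h2 : 1 ≤ D ^ (r : ℝ) := Real.one_le_rpow hD1 (by positivity)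
    have h3 : (1 : ℝ) ≤ C₀ := by exact_mod_cast hC₀
    rw [hε, h1]
    calc (1 : ℝ) ≤ C₀ * D ^ (r : ℝ) := by nlinarith
      _ = _ := by field_simp
  have hε0 : 0 < ε := by
    by_contra h
    push Not at h
    nlinarith
  set s := ⌊ε * N⌋₊ with hs
  have hs1 : (s : ℝ) ≤ ε * N := Nat.floor_le (by positivity)
  have hs2 : ε * N < s + 1 := Nat.lt_floor_add_one _
  have hNs : N ≤ K * s + K := by
    have : (N : ℝ) ≤ K * s + K := by
      have h1 : (N : ℝ) ≤ (K * ε) * N := by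
        have : (0 : ℝ) ≤ N := by positivity
        nlinarith
      nlinarith
    exact_mod_cast this
  have hHeavy : ∀ x : ℕ, C * (C₀ : ℝ) * (S.card : ℝ) * D ^ ((r : ℝ) - (d : ℝ)) < x → C * ε * S.card < x := by
    intro x hx
    have : C * ε * S.card = C * (C₀ : ℝ) * (S.card : ℝ) * D ^ ((r : ℝ) - (d : ℝ)) := by rw [hε]; ring
    rwa [this]
  refine sampling (ι := ((j : Fin k) → V j) × (Fin k → Bool))
    (R := fun x T => (T ∩ Realization x.1 x.2).Nonempty) S (K := K)
    (Pg := (2 * N * 2 ^ (21 * K ^ 2)) ^ (K ^ 2))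
    (H := fun x => C * (C₀ : ℝ) * (S.card : ℝ) * D ^ ((r : ℝ) - (d : ℝ)) <
        ((S.filter (fun T => (T ∩ Realization x.1 x.2).Nonempty)).card : ℝ))
    (by omega) (by omega) ?_ (final_num hK2 hNK hNs) ?_ ?_
  · intro W hW hW1 hW2 F hF
    refine (growth W (fun T hT => hS T (hW hT)) V hV (2 * K) (by omega) ?_ (K - 1) (by omega) F ?_).trans ?_
    · intro j p hp
      have h1 := hVd j p hp
      have h2 := deg_bound hd (hDj j)
      have h3 : 2 ^ (j : ℕ) ≤ K := hK ▸ Nat.pow_le_pow_right (by norm_num) j.2.le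
      omega
    · intro X hX
      obtain ⟨x, hx⟩ := hF X hX
      exact ⟨x.1, x.2, hx⟩
    · refine (growth_num hk hK hbk hdk (by omega) hW1).trans ?_
      gcongr
  · intro hNS x hx
    have hx := hHeavy _ hx
    have hNS' : (N : ℝ) ≤ S.card := by exact_mod_cast hNS
    have hM : ε * N ≤ ε * S.card := by gcongr
    have h0 : 0 ≤ ε * S.card := by positivity
    have : (3 : ℝ) * s ≤ ((S.filter (fun T => (T ∩ Realization x.1 x.2).Nonempty)).card : ℝ) := by
      have h5 := mul_le_mul_of_nonneg_right hC100 h0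
      linarith
    exact_mod_cast this
  · intro hNS x hx ρ hρ
    have hx := hHeavy _ hx
    have hNS' : (N : ℝ) ≤ S.card := by exact_mod_cast hNS
    have hM : ε * N ≤ ε * S.card := by gcongr
    have h0 : 0 ≤ ε * S.card := by positivity
    have hρ' : ((S.filter (fun T => (T ∩ Realization x.1 x.2).Nonempty)).card : ℝ) ≤ ρ + s := by exact_mod_cast hρ
    obtain ⟨m, hm⟩ : ∃ m, S.card - N = m := ⟨_, rfl⟩
    obtain ⟨g, hg⟩ : ∃ g, N / 7 = g := ⟨_, rfl⟩
    rw [hm, hg]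
    have hmM : (m : ℝ) ≤ S.card := by exact_mod_cast (by omega : m ≤ S.card)
    have hgN : (N : ℝ) ≤ 8 * g := by exact_mod_cast (by omega : N ≤ 8 * g)
    have hρ2 : 25 * (ε * m) ≤ ρ := by
      have : ε * m ≤ ε * S.card := by gcongr
      have h5 := mul_le_mul_of_nonneg_right hC100 h0
      linarith
    have hs3 : (s : ℝ) ≤ 8 * (ε * g) := by
      have : ε * N ≤ ε * (8 * g) := by gcongr
      linarith
    have : (m : ℝ) * g + K * m * (3 * s) ≤ K * ρ * g := by
      have hmg : (0 : ℝ) ≤ m * g := by positivity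
      calc (m : ℝ) * g + K * m * (3 * s) ≤ (K * ε) * (m * g) + K * m * (3 * (8 * (ε * g))) := by
            apply add_le_add
            · have := mul_le_mul_of_nonneg_right hεK hmg
              linarith
            · gcongr
        _ = K * (25 * (ε * m)) * g := by ring
        _ ≤ _ := by gcongr
    exact_mod_cast this

end EpsSamp

/-- **ε-sampling lemma for partitioning tuples.** For all positive integers `b, d` there is a
constant `C = C(b,d)` with the following property. Let `C₀ ≥ 1`, let `S` be a finite family of
semi-algebraic sets in `ℝ^d`, each of dimension at most `r` and complexity at most `b`, let
`k ≥ 1` and `D = 2^{k/d} ≥ 2^b`. If `B` is a uniformly random subset of `S` of cardinality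
`N ≥ C·D^C`, then with probability at least `1/2` (i.e., for at least half of the `N`-element
subsets `B ⊆ S`) the following holds: every `(k, D^{d−r}/C₀)`-partitioning tuple
`(P_1,…,P_k) ∈ 𝕐_k` for `B` has all its strict-sign-condition realizations meeting at most
`C·C₀·|S|·D^{r−d}` elements of `S`. -/
theorem eps_sampling_partitioning (b d : ℕ) (hb : 1 ≤ b) (hd : 1 ≤ d) :
    ∃ C : ℝ, 0 < C ∧
      ∀ (C₀ : ℕ), 0 < C₀ →
      ∀ (r : ℕ) (S : Finset (Set (Fin d → ℝ))),
        (∀ T ∈ S, IsSemiAlgebraicOfComplexity d b T ∧ dimH T ≤ (r : ENNReal)) →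
      ∀ (k : ℕ), 1 ≤ k →
      ∀ D : ℝ, D = 2 ^ ((k : ℝ) / (d : ℝ)) → (2 : ℝ) ^ b ≤ D →
      -- `Dj j` is the least positive integer with `binom(Dj j + d, d) > 2^{j-1}`
      ∀ Dj : Fin k → ℕ,
        (∀ j : Fin k,
          IsLeast {m : ℕ | 0 < m ∧ 2 ^ (j : ℕ) < Nat.choose (m + d) d} (Dj j)) →
      -- the `2^{j-1}`-dimensional subspaces `𝕍_j` of polynomials of degree at most `Dj j`
      ∀ V : Fin k → Submodule ℝ (MvPolynomial (Fin d) ℝ),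
        (∀ j, Module.finrank ℝ (V j) = 2 ^ (j : ℕ)) →
        (∀ j, ∀ p ∈ V j, p.totalDegree ≤ Dj j) →
      ∀ N : ℕ, C * D ^ C ≤ (N : ℝ) →
        (1 / 2 : ℝ) * ((S.powersetCard N).card : ℝ) ≤
          (Set.ncard {B : Finset (Set (Fin d → ℝ)) | B ∈ S.powersetCard N ∧
            ∀ y : (j : Fin k) → V j,
              IsPartitioningTuple y B (D ^ ((d : ℝ) - (r : ℝ)) / (C₀ : ℝ)) →
              ∀ ν : Fin k → Bool,
                (Set.ncard {T | T ∈ S ∧ (T ∩ Realization y ν).Nonempty} : ℝ)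
                  ≤ C * (C₀ : ℝ) * (S.card : ℝ) * D ^ ((r : ℝ) - (d : ℝ))} : ℝ) := by
  classical
  refine ⟨20 * d + 100, by positivity, ?_⟩
  intro C₀ hC₀ r S hS k hk D hD hDb Dj hDj V hV hVd N hN
  obtain ⟨C, hC⟩ : ∃ C : ℝ, C = 20 * d + 100 := ⟨_, rfl⟩
  rw [← hC] at hN ⊢
  have key := EpsSamp.main_aux b d hb hd C₀ hC₀ r S (fun T hT => (hS T hT).1) k hk D hD hDb Dj hDj V hV hVd
    N C hC hN
  have hD0 : 0 < D := lt_of_lt_of_le (by positivity) hDb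
  have hncard : ∀ (B : Finset (Set (Fin d → ℝ))) (y : (j : Fin k) → V j) (ν : Fin k → Bool),
      Set.ncard {T | T ∈ B ∧ (T ∩ Realization y ν).Nonempty} =
        (B.filter (fun T => (T ∩ Realization y ν).Nonempty)).card := by
    intro B y ν
    rw [← Set.ncard_coe_finset]
    congr 1
    ext T
    simp
  have hsplit := Finset.card_filter_add_card_filter_not (s := S.powersetCard N)
    (fun B => ∃ x : ((j : Fin k) → V j) × (Fin k → Bool),
      (B.filter (fun T => (T ∩ Realization x.1 x.2).Nonempty)).card ≤
        ⌊((C₀ : ℝ) * D ^ ((r : ℝ) - (d : ℝ))) * N⌋₊ ∧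
      C * (C₀ : ℝ) * (S.card : ℝ) * D ^ ((r : ℝ) - (d : ℝ)) <
        ((S.filter (fun T => (T ∩ Realization x.1 x.2).Nonempty)).card : ℝ))
  rw [Finset.card_powersetCard] at hsplit
  set A := (S.powersetCard N).filter (fun B => ¬ ∃ x : ((j : Fin k) → V j) × (Fin k → Bool),
      (B.filter (fun T => (T ∩ Realization x.1 x.2).Nonempty)).card ≤
        ⌊((C₀ : ℝ) * D ^ ((r : ℝ) - (d : ℝ))) * N⌋₊ ∧
      C * (C₀ : ℝ) * (S.card : ℝ) * D ^ ((r : ℝ) - (d : ℝ)) <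
        ((S.filter (fun T => (T ∩ Realization x.1 x.2).Nonempty)).card : ℝ)) with hA
  have hAc : S.card.choose N ≤ 2 * A.card := by omega
  have hle : A.card ≤ Set.ncard {B : Finset (Set (Fin d → ℝ)) | B ∈ S.powersetCard N ∧
            ∀ y : (j : Fin k) → V j,
              IsPartitioningTuple y B (D ^ ((d : ℝ) - (r : ℝ)) / (C₀ : ℝ)) →
              ∀ ν : Fin k → Bool,
                (Set.ncard {T | T ∈ S ∧ (T ∩ Realization y ν).Nonempty} : ℝ)
                  ≤ C * (C₀ : ℝ) * (S.card : ℝ) * D ^ ((r : ℝ) - (d : ℝ))} := by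
    rw [← Set.ncard_coe_finset]
    apply Set.ncard_le_ncard
    · intro B hB
      rw [Finset.mem_coe, hA, Finset.mem_filter] at hB
      refine ⟨hB.1, fun y hy ν => ?_⟩
      by_contra hcon
      push Not at hcon
      rw [hncard] at hcon
      refine hB.2 ⟨(y, ν), ?_, hcon⟩
      have h1 := (hy ν).2
      rw [hncard, (Finset.mem_powersetCard.1 hB.1).2] at h1
      apply Nat.le_floor
      refine h1.trans (le_of_eq ?_)
      rw [show (r : ℝ) - d = -((d : ℝ) - r) by ring, Real.rpow_neg hD0.le]
      have : 0 < D ^ ((d : ℝ) - r) := Real.rpow_pos_of_pos hD0 _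
      field_simp
    · exact (S.powersetCard N).finite_toSet.subset (fun B hB => hB.1)
  rw [Finset.card_powersetCard]
  have h3 : ((S.card.choose N : ℕ) : ℝ) ≤ 2 * (A.card : ℝ) := by exact_mod_cast hAc
  have h4 : (A.card : ℝ) ≤ _ := Nat.cast_le.2 hle
  linarith
end
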